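/- Let n be a natural number and p a prime with p ≥ n. Then there exists a one-to-one correspondence (a bijection) between the set of isomorphism classes of groups P of order p^n in which the derived subgroup has exponent dividing p (i.e. ⁅x,y⁆^p = 1 for all x, y ∈ P), and the set of isomorphism classes of nilpotent Lie algebras L over the ring R_n = (ℤ/pℤ)[X]/(X^n) whose underlying set has exactly p^n elements and which satisfy T•⁅a,b⁆ = 0 for all a, b ∈ L, where T denotes the image of X in R_n. Equivalently, the (finite) cardinalities of these two sets of isomorphism classes are equal. -/

import Mathlib

open Polynomial

/-- The ring `R_n = (ℤ/pℤ)[X]/(Xⁿ)`. -/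
noncomputable abbrev Rn (p n : ℕ) : Type :=
  Polynomial (ZMod p) ⧸ Ideal.span {(X : Polynomial (ZMod p)) ^ n}

/-- `T`, the image of `X` in `R_n`. -/
noncomputable def Tn (p n : ℕ) : Rn p n := Ideal.Quotient.mk _ X

open scoped commutatorElement in
/-- Bundled groups `P` of order `p ^ n` in which `⁅x, y⁆ ^ p = 1` for all `x, y`,
i.e. the derived subgroup has exponent dividing `p`. -/
def GoodGroup (p n : ℕ) : Type 1 :=
  { q : Σ G : Type, Group G //
      letI := q.2
      Nat.card q.1 = p ^ n ∧ ∀ x y : q.1, ⁅x, y⁆ ^ p = 1 }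

/-- Group isomorphism between two bundled groups. -/
def groupIsoRel (p n : ℕ) (q₁ q₂ : GoodGroup p n) : Prop :=
  letI := q₁.1.2; letI := q₂.1.2
  Nonempty (q₁.1.1 ≃* q₂.1.1)

/-- Bundled nilpotent Lie algebras `L` over `R_n` with exactly `p ^ n` elements in which
`T • ⁅a, b⁆ = 0` for all `a, b`. -/
def GoodLie (p n : ℕ) : Type 1 :=
  { q : Σ (L : Type) (lr : LieRing L), @LieAlgebra (Rn p n) L _ lr //
      letI := q.2.1; letI := q.2.2
      Nat.card q.1 = p ^ n ∧ LieRing.IsNilpotent q.1 ∧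
        ∀ a b : q.1, Tn p n • ⁅a, b⁆ = 0 }

/-- `R_n`-linear Lie algebra isomorphism between two bundled Lie algebras. -/
def lieIsoRel (p n : ℕ) (q₁ q₂ : GoodLie p n) : Prop :=
  letI := q₁.1.2.1; letI := q₁.1.2.2; letI := q₂.1.2.1; letI := q₂.1.2.2
  Nonempty (q₁.1.1 ≃ₗ⁅Rn p n⁆ q₂.1.1)

/-!
In a Lie algebra of nilpotency class less than `p`, over a ring in which `1, …, p - 1` are
invertible, the equation `exp Z = exp (X • x) * exp (X • y)` turns, on taking logarithmic
derivatives, into a differential equation for the curve `Z` that has a unique solution. Its value at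
`X = 1` is the Baker–Campbell–Hausdorff product of `x` and `y`, so this product needs no explicit
formula, and its group laws follow from uniqueness.

Every group of order `p ^ n` with `n ≤ p` arises in this way from a Lie algebra over `ℤ/pⁿ`. By
induction a normal subgroup of index `p` arises from some `K`; conjugation by a generator of the
quotient is a unipotent automorphism of `K` whose logarithm is a derivation, and the Lie algebra of
the group is a quotient of the extension of `K` by that derivation. Under this correspondence
`⁅g, h⁆ ^ p = 1` translates into `p • ⁅a, b⁆ = 0`.

It remains to compare Lie algebras `L` with `p ^ n` elements satisfying `π • ⁅L, L⁆ = 0`, over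
`S = ℤ` with `π = p` and over `S = 𝔽_p[X]` with `π = X`. As a module `L` is a sum of cyclic modules
`S ⧸ π ^ e`, and its bracket is a bilinear map from `L ⧸ π L` to the `π`-torsion of `L`. Both are
`𝔽_p`-vector spaces with one basis vector for each summand, and the pairs of matrices which
homomorphisms induce on them depend only on the exponents, so the classification does not see `S`.
-/

namespace Lazard

open Finset Polynomial TensorProduct LieAlgebra LieModule

open scoped commutatorElement

attribute [local instance] LieRing.ofAssociativeRing

section TruncatedExponential

/-- The integers `1, …, p - 1` are invertible in `k`; this is all the arithmetic that the Lazard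
correspondence in class less than `p` requires of the base ring. -/
def UnitsBelow (k : Type*) [CommRing k] (p : ℕ) : Prop := ∀ m : ℕ, 0 < m → m < p → IsUnit (m : k)

/-- The inverse of `i!` in `k`, with junk value `0` when `i!` is not invertible. -/
noncomputable def invFactorial (k : Type*) [CommRing k] (i : ℕ) : k :=
  Ring.inverse (i.factorial : k)

/-- The exponential series truncated below degree `p`. -/
noncomputable def truncExp (k : Type*) [CommRing k] (p : ℕ) {B : Type*} [Ring B] [Algebra k B]
    (a : B) : B :=
  ∑ i ∈ range p, invFactorial k i • a ^ i

variable {k : Type*} [CommRing k] {p : ℕ}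

@[simp] lemma invFactorial_zero : invFactorial k 0 = 1 := by simp [invFactorial]

@[simp] lemma invFactorial_one : invFactorial k 1 = 1 := by simp [invFactorial]

lemma UnitsBelow.isUnit_factorial (hk : UnitsBelow k p) {i : ℕ} (hi : i < p) :
    IsUnit (i.factorial : k) := by
  induction i with
  | zero => simp
  | succ i ih =>
    rw [Nat.factorial_succ, Nat.cast_mul]
    exact (hk _ i.succ_pos hi).mul (ih (by lia))

lemma invFactorial_mul_invFactorial (hk : UnitsBelow k p) {i j n : ℕ} (hij : i + j = n)
    (hn : n < p) : invFactorial k i * invFactorial k j = invFactorial k n * (n.choose i : k) := by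
  subst hij
  have hi := Ring.mul_inverse_cancel _ (hk.isUnit_factorial (show i < p by lia))
  have hj := Ring.mul_inverse_cancel _ (hk.isUnit_factorial (show j < p by lia))
  have hn := Ring.inverse_mul_cancel _ (hk.isUnit_factorial hn)
  have hchoose : ((i + j).choose i : k) * i.factorial * j.factorial = (i + j).factorial := by
    rw [Nat.choose_symm_add]
    exact_mod_cast congrArg (Nat.cast : ℕ → k) (Nat.add_choose_mul_factorial_mul_factorial i j)
  simp only [invFactorial]
  linear_combination (-Ring.inverse (i.factorial : k) * Ring.inverse (j.factorial : k)) * hn -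
    Ring.inverse ((i + j).factorial : k) * Ring.inverse (i.factorial : k) *
      Ring.inverse (j.factorial : k) * hchoose +
    Ring.inverse ((i + j).factorial : k) * (i + j).choose i *
      (i.factorial * Ring.inverse (i.factorial : k) * hj + hi)

lemma sum_range_product_eq_sum_antidiagonal {M : Type*} [AddCommMonoid M] (p : ℕ) (f : ℕ → ℕ → M)
    (h : ∀ i j, p ≤ i + j → f i j = 0) :
    ∑ i ∈ range p, ∑ j ∈ range p, f i j =
      ∑ n ∈ range p, ∑ ij ∈ antidiagonal n, f ij.1 ij.2 := by
  simp_rw [Nat.sum_antidiagonal_eq_sum_range_succ f]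
  rw [sum_range_diag_flip]
  refine sum_congr rfl fun i _ => (sum_subset (by simp) fun j _ hj => h i j ?_).symm
  simp only [mem_range] at hj
  lia

section Module

variable {V : Type*} [AddCommGroup V] [Module k V]

lemma truncExp_apply (f : Module.End k V) (x : V) :
    truncExp k p f x = ∑ i ∈ range p, invFactorial k i • (f ^ i) x := by
  simp [truncExp, LinearMap.sum_apply]

lemma truncExp_add_apply (hk : UnitsBelow k p) {f g : Module.End k V} (hfg : Commute f g) {x : V}
    (h : ∀ i j, p ≤ i + j → (f ^ i) ((g ^ j) x) = 0) :
    truncExp k p (f + g) x = truncExp k p f (truncExp k p g x) := by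
  have hprod : truncExp k p f (truncExp k p g x) = ∑ i ∈ range p, ∑ j ∈ range p,
      (invFactorial k i * invFactorial k j) • (f ^ i) ((g ^ j) x) := by
    rw [truncExp_apply f]
    simp only [truncExp_apply, map_sum, map_smul, smul_sum, mul_smul]
  rw [hprod, sum_range_product_eq_sum_antidiagonal p _ fun i j hij => by rw [h i j hij, smul_zero],
    truncExp_apply]
  refine sum_congr rfl fun n hn => ?_
  rw [hfg.add_pow', LinearMap.sum_apply, smul_sum]
  refine sum_congr rfl fun ij hij => ?_
  rw [invFactorial_mul_invFactorial hk (mem_antidiagonal.1 hij) (mem_range.1 hn), mul_smul,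
    Nat.cast_smul_eq_nsmul, LinearMap.smul_apply, Module.End.mul_apply]

end Module

variable {B : Type*} [Ring B] [Algebra k B]

lemma truncExp_zero (hp : 0 < p) : truncExp k p (0 : B) = 1 := by
  obtain ⟨q, rfl⟩ := Nat.exists_eq_succ_of_ne_zero hp.ne'
  simp [truncExp, sum_range_succ']

lemma map_truncExp {B' : Type*} [Ring B'] [Algebra k B'] (f : B →ₐ[k] B') (a : B) :
    f (truncExp k p a) = truncExp k p (f a) := by
  simp [truncExp]

lemma truncExp_mulLeft_apply (a x : B) :
    truncExp k p (LinearMap.mulLeft k a) x = truncExp k p a * x := by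
  simp [truncExp, sum_mul, LinearMap.pow_mulLeft]

lemma truncExp_mulRight_apply (a x : B) :
    truncExp k p (LinearMap.mulRight k a) x = x * truncExp k p a := by
  simp [truncExp, mul_sum, LinearMap.pow_mulRight]

lemma truncExp_add (hk : UnitsBelow k p) {a b : B} (hab : Commute a b)
    (h : ∀ i j, p ≤ i + j → a ^ i * b ^ j = 0) :
    truncExp k p (a + b) = truncExp k p a * truncExp k p b := by
  have hcomm : Commute (LinearMap.mulLeft k a) (LinearMap.mulLeft k b) :=
    LinearMap.ext fun x => by simp [← mul_assoc, hab.eq]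
  have hadd := truncExp_add_apply hk hcomm (x := 1) fun i j hij => by
    simpa [LinearMap.pow_mulLeft] using h i j hij
  rw [← mul_one (truncExp k p (a + b)), ← truncExp_mulLeft_apply,
    show LinearMap.mulLeft k (a + b) = LinearMap.mulLeft k a + LinearMap.mulLeft k b from
      map_add (LinearMap.mul k B) a b, hadd]
  simp only [truncExp_mulLeft_apply, mul_one]

/-- Left and right multiplication by `z` commute, and `ad z` is their difference. -/
lemma truncExp_mul_mul_truncExp_neg (hk : UnitsBelow k p) {z x : B}
    (h : ∀ i j, p ≤ i + j → z ^ i * x * z ^ j = 0) :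
    truncExp k p z * x * truncExp k p (-z) = truncExp k p (ad k B z) x := by
  have had : ad k B z = LinearMap.mulLeft k z + LinearMap.mulRight k (-z) :=
    LinearMap.ext fun y => by simp [LieRing.of_associative_ring_bracket, sub_eq_add_neg]
  have hcomm : Commute (LinearMap.mulLeft k z) (LinearMap.mulRight k (-z)) :=
    LinearMap.ext fun y => by simp [mul_assoc]
  rw [had, truncExp_add_apply hk hcomm fun i j hij => ?_, truncExp_mulLeft_apply,
    truncExp_mulRight_apply, mul_assoc]
  simp only [LinearMap.pow_mulLeft, LinearMap.pow_mulRight, LinearMap.mulLeft_apply,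
    LinearMap.mulRight_apply, ← mul_assoc]
  rcases j.even_or_odd with hj | hj <;> simp [hj.neg_pow, h i j hij]

end TruncatedExponential

section LogarithmicDerivative

variable {k : Type*} [CommRing k] {p : ℕ} {M : Type*} [LieRing M] [LieAlgebra k M]

variable (k p) in
/-- The logarithmic derivative `φ(-ad z)(E z)`, where `φ(t) = (eᵗ - 1) / t`; by
`map_truncExp_eq_mul_logDeriv` it is `e⁻ᶻ E(eᶻ)` whenever the latter makes sense. -/
noncomputable def logDeriv (E : M →ₗ[k] M) (z : M) : M :=
  ∑ i ∈ range (p - 1), invFactorial k (i + 1) • (ad k M (-z) ^ i) (E z)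

lemma logDeriv_zero (E : M →ₗ[k] M) : logDeriv k p E 0 = 0 := by
  simp [logDeriv]

lemma map_ad_pow {M' : Type*} [LieRing M'] [LieAlgebra k M'] (f : M →ₗ⁅k⁆ M') (z y : M)
    (i : ℕ) : f ((ad k M z ^ i) y) = (ad k M' (f z) ^ i) (f y) := by
  induction i with
  | zero => rfl
  | succ i ih => simp only [pow_succ', Module.End.mul_apply, ad_apply, LieHom.map_lie, ih]

lemma map_truncExp_ad {M' : Type*} [LieRing M'] [LieAlgebra k M'] (f : M →ₗ⁅k⁆ M') (z y : M) :
    f (truncExp k p (ad k M z) y) = truncExp k p (ad k M' (f z)) (f y) := by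
  simp only [truncExp_apply, map_sum, map_smul, map_ad_pow]

lemma map_logDeriv {M' : Type*} [LieRing M'] [LieAlgebra k M'] (f : M →ₗ⁅k⁆ M') {E : M →ₗ[k] M}
    {E' : M' →ₗ[k] M'} (hf : ∀ x, f (E x) = E' (f x)) (z : M) :
    f (logDeriv k p E z) = logDeriv k p E' (f z) := by
  simp only [logDeriv, map_sum, map_smul, map_ad_pow, hf, show f (-z) = -f z from map_neg f z]

variable {B : Type*} [Ring B] [Algebra k B]

lemma ad_mulLeft_pow_succ {D : B →ₗ[k] B} (hD : ∀ x y, D (x * y) = D x * y + x * D y) (z : B)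
    (i : ℕ) : (ad k (Module.End k B) (-LinearMap.mulLeft k z) ^ (i + 1)) D =
      LinearMap.mulLeft k ((ad k B (-z) ^ i) (D z)) := by
  induction i with
  | zero =>
    ext y
    simp [LieRing.of_associative_ring_bracket, hD]
  | succ i ih =>
    rw [pow_succ', Module.End.mul_apply, ih, pow_succ' (ad k B (-z)), Module.End.mul_apply]
    ext y
    simp [LieRing.of_associative_ring_bracket, sub_mul, mul_assoc]

/-- Conjugate the operator `D` by left multiplication by `eᶻ`, and evaluate at `1`. -/
lemma map_truncExp_eq_mul_logDeriv (hk : UnitsBelow k p) (hp : 0 < p) {D : B →ₗ[k] B}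
    (hD : ∀ x y, D (x * y) = D x * y + x * D y) {z : B} (hz : z ^ p = 0)
    (hDz : ∀ i j, p ≤ i + j → z ^ i * D (z ^ j) = 0) :
    D (truncExp k p z) = truncExp k p z * logDeriv k p D z := by
  obtain ⟨q, rfl⟩ := Nat.exists_eq_succ_of_ne_zero hp.ne'
  have hzij : ∀ i j, q + 1 ≤ i + j → z ^ i * z ^ j = 0 := fun i j hij => by
    rw [← pow_add, pow_eq_zero_of_le hij hz]
  have hD1 : D 1 = 0 := by simpa using hD 1 1
  have hinv : truncExp k (q + 1) z * truncExp k (q + 1) (-z) = 1 := by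
    rw [← truncExp_add hk (Commute.refl z).neg_right, add_neg_cancel, truncExp_zero hp]
    intro i j hij
    rcases j.even_or_odd with hj | hj <;> simp [hj.neg_pow, hzij i j hij]
  have hconj := truncExp_mul_mul_truncExp_neg (k := k) (z := -LinearMap.mulLeft k z) (x := D) hk ?_
  · have hlog : logDeriv k (q + 1) D z = truncExp k (q + 1) (-z) * D (truncExp k (q + 1) z) := by
      have h1 := LinearMap.congr_fun hconj 1
      rw [neg_neg, Module.End.mul_apply, Module.End.mul_apply, truncExp_mulLeft_apply, mul_one,
        show -LinearMap.mulLeft k z = LinearMap.mulLeft k (-z) from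
          (map_neg (LinearMap.mul k B) z).symm, truncExp_mulLeft_apply] at h1
      rw [h1, truncExp_apply, sum_range_succ', LinearMap.add_apply, LinearMap.sum_apply]
      simp only [← show -LinearMap.mulLeft k z = LinearMap.mulLeft k (-z) from
          (map_neg (LinearMap.mul k B) z).symm, ad_mulLeft_pow_succ hD]
      simp [hD1, logDeriv]
    rw [hlog, ← mul_assoc, hinv, one_mul]
  · intro i j hij
    ext y
    have hzy : z ^ i * D (z ^ j * y) = 0 := by
      rw [hD, mul_add, ← mul_assoc, ← mul_assoc, hDz i j hij, hzij i j hij, zero_mul, zero_mul,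
        add_zero]
    rcases i.even_or_odd with hi | hi <;> rcases j.even_or_odd with hj | hj <;>
      simp [hi.neg_pow, hj.neg_pow, LinearMap.pow_mulLeft, hzy]

end LogarithmicDerivative

/-! ### Filtrations -/

section Filtrations

variable {k : Type*} [CommRing k] {p : ℕ}

/-- A decreasing multiplicative filtration of an associative algebra. -/
structure IsMulFiltration {B : Type*} [Ring B] [Algebra k B] (F : ℕ → Submodule k B) : Prop where
  antitone : Antitone F
  one_mem : 1 ∈ F 0
  mul_mem : ∀ {i j x y}, x ∈ F i → y ∈ F j → x * y ∈ F (i + j)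

/-- A decreasing filtration of a Lie algebra compatible with the bracket. -/
structure IsLieFiltration {M : Type*} [LieRing M] [LieAlgebra k M] (Q : ℕ → Submodule k M) :
    Prop where
  antitone : Antitone Q
  lie_mem : ∀ {i j x y}, x ∈ Q i → y ∈ Q j → ⁅x, y⁆ ∈ Q (i + j)

section Module

variable {V : Type*} [AddCommGroup V] [Module k V] {Q : ℕ → Submodule k V}

/-- `E` acts on the `j`-th layer of the filtration `Q` as multiplication by `j`. -/
def IsEuler (Q : ℕ → Submodule k V) (E : V →ₗ[k] V) : Prop :=
  ∀ j, ∀ x ∈ Q j, E x - (j : k) • x ∈ Q (j + 1)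

/-- The filtration of `End V` by the degree in which an endomorphism raises the filtration `Q`. -/
def endFiltration (Q : ℕ → Submodule k V) (j : ℕ) : Submodule k (Module.End k V) where
  carrier := {f | ∀ i, ∀ x ∈ Q i, f x ∈ Q (i + j)}
  add_mem' hf hg i x hx := add_mem (hf i x hx) (hg i x hx)
  zero_mem' _ _ _ := zero_mem _
  smul_mem' c _ hf i x hx := (Q (i + j)).smul_mem c (hf i x hx)

lemma isMulFiltration_endFiltration (hQ : Antitone Q) : IsMulFiltration (endFiltration Q) where
  antitone j j' hjj' f hf i x hx := hQ (by lia) (hf i x hx)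
  one_mem _ _ hx := hx
  mul_mem {i j f g} hf hg l x hx := by
    rw [add_comm i j, ← add_assoc]
    exact hf _ _ (hg _ _ hx)

lemma endFiltration_eq_bot (h0 : Q 0 = ⊤) (hp : Q p = ⊥) :
    endFiltration Q p = ⊥ := by
  refine eq_bot_iff.2 fun f hf => LinearMap.ext fun x => ?_
  have hx := hf 0 x (h0 ▸ Submodule.mem_top)
  rwa [zero_add, hp, Submodule.mem_bot] at hx

lemma IsEuler.map_mem {E : V →ₗ[k] V} (hE : IsEuler Q E) (hQ : Antitone Q) {j : ℕ} {x : V}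
    (hx : x ∈ Q j) : E x ∈ Q j :=
  (Submodule.sub_mem_iff_left _ ((Q j).smul_mem _ hx)).1 (hQ j.le_succ (hE j x hx))

/-- Newton's method: `θ` acts on the `j`-th layer as a unit, up to higher order. -/
lemma existsUnique_of_sub_mem (hp : 0 < p) (hQ : Antitone Q) (hbot : Q p = ⊥) {c : ℕ → k}
    (hc : ∀ j, 1 ≤ j → j < p → IsUnit (c j)) {θ : V → V} (hθ0 : θ 0 = 0)
    (hθ : ∀ j, ∀ z ∈ Q 1, ∀ z' ∈ Q 1, z - z' ∈ Q j →
      θ z - θ z' - c j • (z - z') ∈ Q (j + 1)) {y : V} (hy : y ∈ Q 1) :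
    ∃! z, z ∈ Q 1 ∧ θ z = y := by
  have hexists : ∀ j, j + 1 ≤ p → ∃ z ∈ Q 1, y - θ z ∈ Q (j + 1) := by
    intro j
    induction j with
    | zero => exact fun _ => ⟨0, zero_mem _, by simpa [hθ0] using hy⟩
    | succ j ih =>
      intro hj
      obtain ⟨z, hz, hyz⟩ := ih (by lia)
      obtain ⟨u, hu⟩ := hc (j + 1) (by lia) hj
      set d := (↑u⁻¹ : k) • (y - θ z)
      have hd : d ∈ Q (j + 1) := Submodule.smul_mem _ _ hyz
      have hzd : z + d ∈ Q 1 := add_mem hz (hQ (by lia) hd)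
      refine ⟨z + d, hzd, ?_⟩
      have hstep := hθ (j + 1) (z + d) hzd z hz (by rwa [add_sub_cancel_left])
      rw [add_sub_cancel_left, ← hu, smul_smul, Units.mul_inv, one_smul, ← neg_mem_iff] at hstep
      simpa using hstep
  have hunique : ∀ z ∈ Q 1, ∀ z' ∈ Q 1, θ z = θ z' → ∀ j, j + 1 ≤ p → z - z' ∈ Q (j + 1) := by
    intro z hz z' hz' hzz' j
    induction j with
    | zero => exact fun _ => sub_mem hz hz'
    | succ j ih =>
      intro hj
      have hstep := hθ (j + 1) z hz z' hz' (ih (by lia))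
      rw [hzz', sub_self, zero_sub, neg_mem_iff] at hstep
      exact (Submodule.smul_mem_iff_of_isUnit _ (hc (j + 1) (by lia) hj)).1 hstep
  obtain ⟨z, hz, hyz⟩ := hexists (p - 1) (by lia)
  rw [Nat.sub_add_cancel hp, hbot, Submodule.mem_bot, sub_eq_zero] at hyz
  refine ⟨z, ⟨hz, hyz.symm⟩, fun z' ⟨hz', hyz'⟩ => sub_eq_zero.1 ?_⟩
  have hzz' := hunique z' hz' z hz (hyz'.trans hyz) (p - 1) (by lia)
  rwa [Nat.sub_add_cancel hp, hbot, Submodule.mem_bot] at hzz'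

end Module

section Algebra

variable {B : Type*} [Ring B] [Algebra k B] {F : ℕ → Submodule k B}

lemma IsMulFiltration.pow_mem (hF : IsMulFiltration F) {a : B} (ha : a ∈ F 1) (i : ℕ) :
    a ^ i ∈ F i := by
  induction i with
  | zero => simpa using hF.one_mem
  | succ i ih => exact pow_succ a i ▸ hF.mul_mem ih ha

lemma IsMulFiltration.pow_sub_pow_mem (hF : IsMulFiltration F) {a b : B} (ha : a ∈ F 1)
    (hb : b ∈ F 1) {j : ℕ} (hab : a - b ∈ F j) (i : ℕ) : a ^ (i + 1) - b ^ (i + 1) ∈ F (j + i) := by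
  induction i with
  | zero => simpa using hab
  | succ i ih =>
    have hsplit : a ^ (i + 1 + 1) - b ^ (i + 1 + 1) =
        (a ^ (i + 1) - b ^ (i + 1)) * a + b ^ (i + 1) * (a - b) := by
      rw [pow_succ a (i + 1), pow_succ b (i + 1)]
      noncomm_ring
    rw [hsplit]
    exact add_mem (by simpa only [add_assoc] using hF.mul_mem ih ha)
      (hF.antitone (by lia) (hF.mul_mem (hF.pow_mem hb (i + 1)) hab))

lemma IsMulFiltration.eq_zero_of_mem (hF : IsMulFiltration F) (hbot : F p = ⊥) {i : ℕ} (hi : p ≤ i)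
    {x : B} (hx : x ∈ F i) : x = 0 := by
  simpa [hbot] using hF.antitone hi hx

lemma IsMulFiltration.truncExp_sub_one_mem (hF : IsMulFiltration F) (hp : 0 < p) {a : B}
    (ha : a ∈ F 1) : truncExp k p a - 1 ∈ F 1 := by
  obtain ⟨q, rfl⟩ := Nat.exists_eq_succ_of_ne_zero hp.ne'
  rw [truncExp, sum_range_succ', pow_zero, invFactorial_zero, one_smul, add_sub_cancel_right]
  exact sum_mem fun i _ => Submodule.smul_mem _ _ (hF.antitone (by lia) (hF.pow_mem ha (i + 1)))

lemma IsMulFiltration.truncExp_mem (hF : IsMulFiltration F) {a : B} (ha : a ∈ F 1) :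
    truncExp k p a ∈ F 0 :=
  sum_mem fun i _ => Submodule.smul_mem _ _ (hF.antitone i.zero_le (hF.pow_mem ha i))

lemma IsMulFiltration.truncExp_add (hF : IsMulFiltration F) (hbot : F p = ⊥) (hk : UnitsBelow k p)
    {a b : B} (ha : a ∈ F 1) (hb : b ∈ F 1) (hab : Commute a b) :
    truncExp k p (a + b) = truncExp k p a * truncExp k p b :=
  Lazard.truncExp_add hk hab fun i j hij =>
    hF.eq_zero_of_mem hbot hij (hF.mul_mem (hF.pow_mem ha i) (hF.pow_mem hb j))

lemma IsMulFiltration.truncExp_mul_truncExp_neg (hF : IsMulFiltration F) (hbot : F p = ⊥)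
    (hk : UnitsBelow k p) (hp : 0 < p) {a : B} (ha : a ∈ F 1) :
    truncExp k p a * truncExp k p (-a) = 1 := by
  rw [← hF.truncExp_add hbot hk ha (neg_mem ha) (Commute.refl a).neg_right, add_neg_cancel,
    truncExp_zero hp]

lemma IsMulFiltration.truncExp_mul_mul_truncExp_neg (hF : IsMulFiltration F) (hbot : F p = ⊥)
    (hk : UnitsBelow k p) {z x : B} (hz : z ∈ F 1) (hx : x ∈ F 0) :
    truncExp k p z * x * truncExp k p (-z) = truncExp k p (ad k B z) x :=
  Lazard.truncExp_mul_mul_truncExp_neg hk fun i j hij =>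
    hF.eq_zero_of_mem hbot (i := i + 0 + j) (by lia)
      (hF.mul_mem (hF.mul_mem (hF.pow_mem hz i) hx) (hF.pow_mem hz j))

lemma truncExp_units_conj (u : Bˣ) (x : B) :
    truncExp k p (u * x * ↑u⁻¹) = u * truncExp k p x * ↑u⁻¹ := by
  simp only [truncExp, mul_sum, sum_mul, Units.conj_pow, mul_smul_comm, smul_mul_assoc]

lemma IsMulFiltration.truncExp_conj (hF : IsMulFiltration F) (hbot : F p = ⊥)
    (hk : UnitsBelow k p) (hp : 0 < p) {z x : B} (hz : z ∈ F 1) (hx : x ∈ F 0) :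
    truncExp k p z * truncExp k p x * truncExp k p (-z) =
      truncExp k p (truncExp k p (ad k B z) x) := by
  rw [← hF.truncExp_mul_mul_truncExp_neg hbot hk hz hx]
  have hinv' := hF.truncExp_mul_truncExp_neg hbot hk hp (neg_mem hz)
  rw [neg_neg] at hinv'
  exact (truncExp_units_conj
    ⟨truncExp k p z, truncExp k p (-z), hF.truncExp_mul_truncExp_neg hbot hk hp hz, hinv'⟩ x).symm

lemma IsMulFiltration.truncExp_sub_truncExp_sub_mem (hF : IsMulFiltration F) (hp : 2 ≤ p) {a b : B}
    (ha : a ∈ F 1) (hb : b ∈ F 1) {j : ℕ} (hab : a - b ∈ F j) :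
    truncExp k p a - truncExp k p b - (a - b) ∈ F (j + 1) := by
  obtain ⟨q, rfl⟩ := Nat.exists_eq_add_of_le' hp
  rw [truncExp, truncExp, ← sum_sub_distrib, sum_range_succ', sum_range_succ']
  simp only [← smul_sub, pow_zero, sub_self, add_zero, zero_add, invFactorial_one,
    one_smul, pow_one, add_sub_cancel_right]
  exact sum_mem fun i _ => Submodule.smul_mem _ _
    (hF.antitone (by lia) (hF.pow_sub_pow_mem ha hb hab (i + 1)))

lemma IsMulFiltration.existsUnique_truncExp_eq_one_add (hF : IsMulFiltration F) (hbot : F p = ⊥)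
    (hp : 2 ≤ p) {u : B} (hu : u ∈ F 1) : ∃! d, d ∈ F 1 ∧ truncExp k p d = 1 + u := by
  have hexp := existsUnique_of_sub_mem (θ := fun d => truncExp k p d - 1) (c := fun _ => (1 : k))
    (by lia) hF.antitone hbot (fun _ _ _ => isUnit_one) (by simp [truncExp_zero (p := p) (by lia)])
    (fun j a ha b hb hab => by
      simpa using hF.truncExp_sub_truncExp_sub_mem (k := k) hp ha hb hab) hu
  simpa only [sub_eq_iff_eq_add'] using hexp

lemma IsMulFiltration.injOn_truncExp (hF : IsMulFiltration F) (hbot : F p = ⊥) (hp : 2 ≤ p) :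
    Set.InjOn (truncExp k p) (F 1 : Set B) := fun a ha b hb hab =>
  (hF.existsUnique_truncExp_eq_one_add (k := k) hbot hp
    (hF.truncExp_sub_one_mem (k := k) (p := p) (by lia) ha)).unique
    ⟨ha, (add_sub_cancel _ _).symm⟩ ⟨hb, hab ▸ (add_sub_cancel _ _).symm⟩

lemma IsMulFiltration.truncExp_natCast_smul (hF : IsMulFiltration F) (hbot : F p = ⊥)
    (hk : UnitsBelow k p) (hp : 0 < p) {d : B} (hd : d ∈ F 1) (m : ℕ) :
    truncExp k p ((m : k) • d) = truncExp k p d ^ m := by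
  induction m with
  | zero => simp [truncExp_zero hp]
  | succ m ih =>
    rw [Nat.cast_succ, add_smul, one_smul, hF.truncExp_add hbot hk (Submodule.smul_mem _ _ hd) hd
      ((Commute.refl d).smul_left _), ih, pow_succ]

end Algebra

section Lie

variable {M : Type*} [LieRing M] [LieAlgebra k M] {Q : ℕ → Submodule k M} {E : M →ₗ[k] M}

lemma IsLieFiltration.ad_mem (hQ : IsLieFiltration Q) {j : ℕ} {z : M} (hz : z ∈ Q j) :
    ad k M z ∈ endFiltration Q j :=
  fun i _ hx => hQ.antitone (by lia) (hQ.lie_mem hz hx)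

lemma IsLieFiltration.truncExp_ad_mem (hQ : IsLieFiltration Q) {z x : M} (hz : z ∈ Q 1) {j : ℕ}
    (hx : x ∈ Q j) : truncExp k p (ad k M z) x ∈ Q j :=
  (isMulFiltration_endFiltration hQ.antitone).truncExp_mem (hQ.ad_mem hz) j x hx

lemma IsLieFiltration.logDeriv_sub_mem (hQ : IsLieFiltration Q) (hE : IsEuler Q E) (hp : 2 ≤ p)
    {z z' : M} (hz : z ∈ Q 1) (hz' : z' ∈ Q 1) {j : ℕ} (hzz' : z - z' ∈ Q j) :
    logDeriv k p E z - logDeriv k p E z' - (j : k) • (z - z') ∈ Q (j + 1) := by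
  have hEnd := isMulFiltration_endFiltration hQ.antitone
  have hadz := hQ.ad_mem (neg_mem hz)
  have hadz' := hQ.ad_mem (neg_mem hz')
  have hadsub : ad k M (-z) - ad k M (-z') ∈ endFiltration Q j := by
    rw [← map_sub]
    exact hQ.ad_mem (by simpa [neg_add_eq_sub] using neg_mem hzz')
  have hterm (i : ℕ) : (ad k M (-z) ^ (i + 1)) (E z) - (ad k M (-z') ^ (i + 1)) (E z') ∈
      Q (j + 1) := by
    have hfst := hEnd.pow_sub_pow_mem hadz hadz' hadsub i 1 _ (hE.map_mem hQ.antitone hz)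
    have hsnd := hEnd.pow_mem hadz' (i + 1) j _ (hE.map_mem hQ.antitone hzz')
    rw [map_sub, map_sub] at hsnd
    have := add_mem (hQ.antitone (by lia : j + 1 ≤ _) hfst)
      (hQ.antitone (by lia : j + 1 ≤ _) hsnd)
    simpa using this
  obtain ⟨q, rfl⟩ := Nat.exists_eq_add_of_le' hp
  have hEzz' := hE j _ hzz'
  rw [map_sub] at hEzz'
  rw [logDeriv, logDeriv, ← sum_sub_distrib, show q + 2 - 1 = q + 1 from rfl, sum_range_succ']
  simp only [← smul_sub, zero_add, invFactorial_one, one_smul, pow_zero, Module.End.one_apply]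
  rw [add_sub_assoc]
  exact add_mem (sum_mem fun i _ => Submodule.smul_mem _ _ (hterm i)) hEzz'

lemma IsLieFiltration.existsUnique_logDeriv_eq (hQ : IsLieFiltration Q) (hE : IsEuler Q E)
    (hbot : Q p = ⊥) (hk : UnitsBelow k p) (hp : 2 ≤ p) {c : M} (hc : c ∈ Q 1) :
    ∃! z, z ∈ Q 1 ∧ logDeriv k p E z = c :=
  existsUnique_of_sub_mem (by lia) hQ.antitone hbot hk (logDeriv_zero E)
    (fun _ _ hz _ hz' => hQ.logDeriv_sub_mem hE hp hz hz') hc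

end Lie

end Filtrations

section Rees

variable {k : Type*} [CommRing k] {p : ℕ}

section Module

variable {V : Type*} [AddCommGroup V] [Module k V] {W : Type*} [AddCommGroup W] [Module k W]
  {U : Type*} [AddCommGroup U] [Module k U]

/-- For a graded family `S` of submodules of `V`, the polynomials `∑ Xⁱ ⊗ vᵢ` with `vᵢ ∈ S i` and
`vᵢ = 0` for `i < j`. -/
noncomputable def reesFiltration (S : ℕ → Submodule k V) (j : ℕ) : Submodule k (k[X] ⊗[k] V) :=
  Submodule.span k {w | ∃ i, j ≤ i ∧ ∃ v ∈ S i, (X ^ i : k[X]) ⊗ₜ[k] v = w}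

variable (k V) in
/-- The Euler operator `X d/dX` on polynomials with coefficients in `V`. -/
noncomputable def eulerOp : k[X] ⊗[k] V →ₗ[k] k[X] ⊗[k] V :=
  (LinearMap.mulLeft k X ∘ₗ derivative).rTensor V

variable (V) in
/-- Evaluation at `X = m` of polynomials with coefficients in `V`. -/
noncomputable def evalAt (m : k) : k[X] ⊗[k] V →ₗ[k] V :=
  (TensorProduct.lid k V).toLinearMap ∘ₗ (aeval m).toLinearMap.rTensor V

variable {S : ℕ → Submodule k V} {T : ℕ → Submodule k W} {R : ℕ → Submodule k U}

lemma evalAt_tmul (m : k) (f : k[X]) (v : V) : evalAt V m (f ⊗ₜ v) = f.eval m • v := by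
  simp [evalAt, aeval_def]

lemma eulerOp_X_pow_tmul (i : ℕ) (v : V) :
    eulerOp k V ((X ^ i : k[X]) ⊗ₜ[k] v) = (i : k) • (X ^ i : k[X]) ⊗ₜ[k] v := by
  rw [eulerOp, LinearMap.rTensor_tmul, TensorProduct.smul_tmul']
  congr 1
  rcases i with _ | i
  · simp
  · simp [smul_eq_C_mul]
    ring

lemma tmul_mem_reesFiltration {i j : ℕ} (hij : j ≤ i) {v : V} (hv : v ∈ S i) :
    (X ^ i : k[X]) ⊗ₜ[k] v ∈ reesFiltration S j :=
  Submodule.subset_span ⟨i, hij, v, hv, rfl⟩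

lemma reesFiltration_le {j : ℕ} {N : Submodule k (k[X] ⊗[k] V)} :
    reesFiltration S j ≤ N ↔ ∀ i, j ≤ i → ∀ v ∈ S i, (X ^ i : k[X]) ⊗ₜ[k] v ∈ N := by
  refine Submodule.span_le.trans ⟨fun h i hi v hv => h ⟨i, hi, v, hv, rfl⟩, ?_⟩
  rintro h _ ⟨i, hi, v, hv, rfl⟩
  exact h i hi v hv

lemma reesFiltration_antitone : Antitone (reesFiltration S) := fun _ _ hij =>
  reesFiltration_le.2 fun _ hi _ hv => tmul_mem_reesFiltration (hij.trans hi) hv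

lemma reesFiltration_eq_bot (hS : ∀ i, p ≤ i → S i = ⊥) : reesFiltration S p = ⊥ :=
  eq_bot_iff.2 <| reesFiltration_le.2 fun i hi v hv => by
    rw [hS i hi, Submodule.mem_bot] at hv
    simp [hv]

lemma isEuler_reesFiltration : IsEuler (reesFiltration S) (eulerOp k V) := by
  intro j
  refine reesFiltration_le (N := Submodule.comap
    (eulerOp k V - (j : k) • LinearMap.id) (reesFiltration S (j + 1))) |>.2 fun i hi v hv => ?_
  rw [Submodule.mem_comap, LinearMap.sub_apply, eulerOp_X_pow_tmul, LinearMap.smul_apply,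
    LinearMap.id_apply]
  rcases hi.eq_or_lt with rfl | hi
  · exact sub_self (_ : k[X] ⊗[k] V) ▸ zero_mem _
  · have hmem : (X ^ i : k[X]) ⊗ₜ[k] v ∈ reesFiltration S (j + 1) :=
      tmul_mem_reesFiltration hi hv
    exact sub_mem (Submodule.smul_mem _ _ hmem) (Submodule.smul_mem _ _ hmem)

lemma mem_reesFiltration_of_bilinear {β : k[X] ⊗[k] V →ₗ[k] k[X] ⊗[k] W →ₗ[k] k[X] ⊗[k] U}
    (hβ : ∀ i j, ∀ v ∈ S i, ∀ w ∈ T j, ∃ u ∈ R (i + j),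
      β ((X ^ i : k[X]) ⊗ₜ[k] v) ((X ^ j : k[X]) ⊗ₜ[k] w) = (X ^ (i + j) : k[X]) ⊗ₜ[k] u)
    {i j : ℕ} {x : k[X] ⊗[k] V} {y : k[X] ⊗[k] W}
    (hx : x ∈ reesFiltration S i) (hy : y ∈ reesFiltration T j) :
    β x y ∈ reesFiltration R (i + j) := by
  refine (Submodule.map₂_span_span k β _ _).trans_le ?_ (Submodule.apply_mem_map₂ β hx hy)
  rw [Submodule.span_le]
  rintro _ ⟨_, ⟨i', hi, v, hv, rfl⟩, _, ⟨j', hj, w, hw, rfl⟩, rfl⟩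
  obtain ⟨u, hu, heq⟩ := hβ i' j' v hv w hw
  change β _ _ ∈ reesFiltration R (i + j)
  rw [heq]
  exact tmul_mem_reesFiltration (add_le_add hi hj) hu

lemma lTensor_mem_reesFiltration {f : V →ₗ[k] W} (hf : ∀ i, ∀ v ∈ S i, f v ∈ T i) {j : ℕ}
    {x : k[X] ⊗[k] V} (hx : x ∈ reesFiltration S j) :
    f.lTensor k[X] x ∈ reesFiltration T j := by
  refine reesFiltration_le (N := (reesFiltration T j).comap (f.lTensor k[X])) |>.2 ?_ hx
  exact fun i hi v hv => tmul_mem_reesFiltration hi (hf i v hv)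

lemma evalAt_mem {N : Submodule k V} {j : ℕ} (hN : ∀ i, j ≤ i → S i ≤ N) (m : k)
    {x : k[X] ⊗[k] V} (hx : x ∈ reesFiltration S j) : evalAt V m x ∈ N := by
  refine reesFiltration_le (N := N.comap (evalAt V m)) |>.2 (fun i hi v hv => ?_) hx
  rw [Submodule.mem_comap, evalAt_tmul]
  exact N.smul_mem _ (hN i hi hv)

lemma polynomial_tensor_ext {f g : k[X] ⊗[k] V →ₗ[k] W}
    (h : ∀ i v, f ((X ^ i : k[X]) ⊗ₜ[k] v) = g ((X ^ i : k[X]) ⊗ₜ[k] v)) : f = g :=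
  TensorProduct.ext <| Polynomial.lhom_ext' fun i => LinearMap.ext_ring <| LinearMap.ext fun v => by
    simpa [monomial_one_right_eq_X_pow] using h i v

lemma evalAt_lTensor (f : V →ₗ[k] W) (m : k) (x : k[X] ⊗[k] V) :
    evalAt W m (f.lTensor k[X] x) = f (evalAt V m x) :=
  LinearMap.congr_fun (polynomial_tensor_ext (f := evalAt W m ∘ₗ f.lTensor k[X])
    (g := f ∘ₗ evalAt V m) fun i v => by simp [evalAt_tmul]) x

lemma eulerOp_lTensor (f : V →ₗ[k] W) (x : k[X] ⊗[k] V) :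
    eulerOp k W (f.lTensor k[X] x) = f.lTensor k[X] (eulerOp k V x) :=
  LinearMap.congr_fun (polynomial_tensor_ext (f := eulerOp k W ∘ₗ f.lTensor k[X])
    (g := f.lTensor k[X] ∘ₗ eulerOp k V) fun i v => by simp [eulerOp_X_pow_tmul]) x

end Module

section Algebra

variable {B : Type*} [Ring B] [Algebra k B] {F : ℕ → Submodule k B}

lemma isMulFiltration_reesFiltration (hF : IsMulFiltration F) :
    IsMulFiltration (reesFiltration F) where
  antitone := reesFiltration_antitone
  one_mem := tmul_mem_reesFiltration (i := 0) le_rfl hF.one_mem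
  mul_mem hx hy := mem_reesFiltration_of_bilinear (β := LinearMap.mul k _)
    (fun i j v hv w hw => ⟨v * w, hF.mul_mem hv hw, by simp [pow_add]⟩) hx hy

lemma eulerOp_mul (x y : k[X] ⊗[k] B) :
    eulerOp k B (x * y) = eulerOp k B x * y + x * eulerOp k B y := by
  induction x with
  | zero => simp
  | add x x' hx hx' => simp only [add_mul, map_add, hx, hx']; abel
  | tmul f a =>
    induction y with
    | zero => simp
    | add y y' hy hy' => simp only [mul_add, map_add, hy, hy']; abel
    | tmul g b =>
      simp only [eulerOp, Algebra.TensorProduct.tmul_mul_tmul, LinearMap.rTensor_tmul,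
        LinearMap.comp_apply, LinearMap.mulLeft_apply, derivative_mul, ← add_tmul]
      congr 1
      ring

/-- Evaluation at `X = m`, as a homomorphism of algebras. -/
noncomputable def algEvalAt (B : Type*) [Ring B] [Algebra k B] (m : k) : k[X] ⊗[k] B →ₐ[k] B :=
  (Algebra.TensorProduct.lid k B).toAlgHom.comp
    (Algebra.TensorProduct.map (aeval m) (AlgHom.id k B))

lemma algEvalAt_apply (m : k) (x : k[X] ⊗[k] B) : algEvalAt B m x = evalAt B m x :=
  rfl

end Algebra

section Lie

variable {L : Type*} [LieRing L] [LieAlgebra k L] {L' : Type*} [LieRing L'] [LieAlgebra k L']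

lemma lowerCentralSeries_le_of_lie_mem {N : ℕ → Submodule k L} (h0 : N 0 = ⊤)
    (hN : ∀ i, ∀ x y : L, y ∈ N i → ⁅x, y⁆ ∈ N (i + 1)) (i : ℕ) :
    (lowerCentralSeries k L L i).toSubmodule ≤ N i := by
  induction i with
  | zero => exact le_top.trans_eq h0.symm
  | succ i ih =>
    rw [lowerCentralSeries_succ, LieSubmodule.lieIdeal_oper_eq_linear_span', Submodule.span_le]
    rintro _ ⟨x, -, y, hy, rfl⟩
    exact hN i x y (ih hy)

lemma lie_mem_lowerCentralSeries_succ {i : ℕ} (x : L) {y : L}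
    (hy : y ∈ lowerCentralSeries k L L i) : ⁅x, y⁆ ∈ lowerCentralSeries k L L (i + 1) := by
  rw [lowerCentralSeries_succ]
  exact LieSubmodule.lie_mem_lie (LieSubmodule.mem_top x) hy

lemma lie_mem_lowerCentralSeries_add {i j : ℕ} {x y : L} (hx : x ∈ lowerCentralSeries k L L i)
    (hy : y ∈ lowerCentralSeries k L L j) : ⁅x, y⁆ ∈ lowerCentralSeries k L L (i + j + 1) := by
  induction i generalizing j x y with
  | zero =>
    rw [zero_add]
    exact lie_mem_lowerCentralSeries_succ x hy
  | succ i ih =>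
    rw [lowerCentralSeries_succ, ← LieSubmodule.mem_toSubmodule,
      LieSubmodule.lieIdeal_oper_eq_linear_span'] at hx
    induction hx using Submodule.span_induction with
    | zero => simp
    | add x x' _ _ hx hx' => exact add_lie x x' y ▸ add_mem hx hx'
    | smul c x _ hx => exact smul_lie c x y ▸ (lowerCentralSeries k L L _).smul_mem c hx
    | mem x hx =>
      obtain ⟨a, -, b, hb, rfl⟩ := hx
      have hby := ih hb hy
      have hay : ⁅a, y⁆ ∈ lowerCentralSeries k L L (j + 1) := by
        rw [lowerCentralSeries_succ]
        exact LieSubmodule.lie_mem_lie (LieSubmodule.mem_top a) hy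
      have hbay := ih hb hay
      rw [lie_lie]
      refine sub_mem ?_ (by rwa [show i + 1 + j + 1 = i + (j + 1) + 1 by lia])
      rw [show i + 1 + j + 1 = i + j + 1 + 1 by lia, lowerCentralSeries_succ]
      exact LieSubmodule.lie_mem_lie (LieSubmodule.mem_top a) hby

variable (k L) in
/-- The lower central series, reindexed so that the `i`-th term is spanned by the brackets of at
least `i` elements; the term in degree `0` is `⊥`, so that only positive weights occur. -/
def lieWeight : ℕ → Submodule k L
  | 0 => ⊥
  | i + 1 => (lowerCentralSeries k L L i).toSubmodule

lemma lie_mem_lieWeight {i j : ℕ} {x y : L} (hx : x ∈ lieWeight k L i) (hy : y ∈ lieWeight k L j) :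
    ⁅x, y⁆ ∈ lieWeight k L (i + j) := by
  rcases i with _ | i <;> rcases j with _ | j
  · simp_all [lieWeight]
  · simp_all [lieWeight]
  · simp_all [lieWeight]
  · rw [show i + 1 + (j + 1) = i + j + 1 + 1 by lia]
    exact lie_mem_lowerCentralSeries_add hx hy

lemma lieWeight_eq_bot (hp : 0 < p) (hL : lowerCentralSeries k L L (p - 1) = ⊥) {i : ℕ}
    (hi : p ≤ i) : lieWeight k L i = ⊥ := by
  obtain ⟨i, rfl⟩ := Nat.exists_eq_succ_of_ne_zero (hp.trans_le hi).ne'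
  exact (LieSubmodule.toSubmodule_eq_bot _).2
    (eq_bot_iff.2 (hL ▸ antitone_lowerCentralSeries k L L (by lia)))

lemma map_mem_lieWeight (f : L →ₗ⁅k⁆ L') {i : ℕ} {x : L} (hx : x ∈ lieWeight k L i) :
    f x ∈ lieWeight k L' i := by
  rcases i with _ | i
  · simp_all [lieWeight]
  · exact LieIdeal.map_lowerCentralSeries_le i (LieIdeal.mem_map hx)

lemma isLieFiltration_reesFiltration : IsLieFiltration (reesFiltration (lieWeight k L)) where
  antitone := reesFiltration_antitone
  lie_mem hx hy := mem_reesFiltration_of_bilinear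
    (β := (ad k (k[X] ⊗[k] L)).toLinearMap)
    (fun i j v hv w hw => ⟨⁅v, w⁆, lie_mem_lieWeight hv hw, by
      simp [pow_add, ExtendScalars.bracket_tmul]⟩) hx hy

/-- Evaluation at `X = m`, as a homomorphism of Lie algebras. -/
noncomputable def lieEvalAt (L : Type*) [LieRing L] [LieAlgebra k L] (m : k) :
    k[X] ⊗[k] L →ₗ⁅k⁆ L where
  toLinearMap := evalAt L m
  map_lie' {x y} := by
    induction x with
    | zero => simp
    | add x x' hx hx' => simp_all
    | tmul f a =>
      induction y with
      | zero => simp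
      | add y y' hy hy' => simp_all
      | tmul g b => simp [evalAt_tmul, mul_smul, smul_comm (f.eval m)]

end Lie

end Rees

/-! ### The Baker–Campbell–Hausdorff product -/

section BCH

variable {k : Type*} [CommRing k] {p : ℕ} {L : Type*} [LieRing L] [LieAlgebra k L]
  {L' : Type*} [LieRing L'] [LieAlgebra k L']

/-- The logarithmic derivative `X • x` conjugated by `exp (-X • y)`, plus `X • y`, of the curve
`exp (X • x) * exp (X • y)`. -/
noncomputable def bchLogDeriv (k : Type*) [CommRing k] (p : ℕ) {L : Type*} [LieRing L]
    [LieAlgebra k L] (x y : L) : k[X] ⊗[k] L :=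
  truncExp k p (ad k (k[X] ⊗[k] L) (-((X : k[X]) ⊗ₜ[k] y))) ((X : k[X]) ⊗ₜ[k] x) +
    (X : k[X]) ⊗ₜ[k] y

open Classical in
/-- The curve `Z` in `L[X]` with `exp Z = exp (X • x) * exp (X • y)`, found by solving the
differential equation for `Z` that results from taking logarithmic derivatives. -/
noncomputable def bchPoly (k : Type*) [CommRing k] (p : ℕ) {L : Type*} [LieRing L]
    [LieAlgebra k L] (x y : L) : k[X] ⊗[k] L :=
  Function.invFunOn (logDeriv k p (eulerOp k L)) (reesFiltration (lieWeight k L) 1)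
    (bchLogDeriv k p x y)

/-- The Baker–Campbell–Hausdorff product on a Lie algebra of nilpotency class less than `p`. -/
noncomputable def bch (k : Type*) [CommRing k] (p : ℕ) {L : Type*} [LieRing L] [LieAlgebra k L]
    (x y : L) : L :=
  evalAt L (1 : k) (bchPoly k p x y)

lemma X_tmul_mem_reesFiltration (x : L) :
    (X : k[X]) ⊗ₜ[k] x ∈ reesFiltration (lieWeight k L) 1 := by
  simpa using tmul_mem_reesFiltration (S := lieWeight k L) (i := 1) le_rfl (v := x) trivial

lemma bchLogDeriv_mem (x y : L) : bchLogDeriv k p x y ∈ reesFiltration (lieWeight k L) 1 :=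
  add_mem (isLieFiltration_reesFiltration.truncExp_ad_mem
    (neg_mem (X_tmul_mem_reesFiltration y)) (X_tmul_mem_reesFiltration x))
    (X_tmul_mem_reesFiltration y)

lemma IsLieFiltration.truncExp_ad_sub_mem {Q : ℕ → Submodule k L} (hQ : IsLieFiltration Q)
    (hp : 0 < p) {z x : L} (hz : z ∈ Q 1) {j : ℕ} (hx : x ∈ Q j) :
    truncExp k p (ad k L z) x - x ∈ Q (j + 1) :=
  (isMulFiltration_endFiltration hQ.antitone).truncExp_sub_one_mem hp (hQ.ad_mem hz) j x hx

section

variable (hk : UnitsBelow k p) (hp : 2 ≤ p) (hL : lowerCentralSeries k L L (p - 1) = ⊥)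
  (hL' : lowerCentralSeries k L' L' (p - 1) = ⊥)

include hp hL in
lemma reesFiltration_lieWeight_eq_bot : reesFiltration (lieWeight k L) p = ⊥ :=
  reesFiltration_eq_bot fun _ => lieWeight_eq_bot (by lia) hL

include hk hp hL

lemma existsUnique_bchPoly (x y : L) : ∃! z, z ∈ reesFiltration (lieWeight k L) 1 ∧
    logDeriv k p (eulerOp k L) z = bchLogDeriv k p x y :=
  isLieFiltration_reesFiltration.existsUnique_logDeriv_eq isEuler_reesFiltration
    (reesFiltration_lieWeight_eq_bot hp hL) hk hp (bchLogDeriv_mem x y)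

lemma bchPoly_mem (x y : L) : bchPoly k p x y ∈ reesFiltration (lieWeight k L) 1 :=
  Function.invFunOn_mem (existsUnique_bchPoly hk hp hL x y).exists

lemma logDeriv_bchPoly (x y : L) :
    logDeriv k p (eulerOp k L) (bchPoly k p x y) = bchLogDeriv k p x y :=
  Function.invFunOn_eq (existsUnique_bchPoly hk hp hL x y).exists

lemma bchPoly_sub_mem (x y : L) :
    bchPoly k p x y - (X : k[X]) ⊗ₜ[k] (x + y) ∈ reesFiltration (lieWeight k L) 2 := by
  have hQ := isLieFiltration_reesFiltration (k := k) (L := L)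
  have hlin := hQ.logDeriv_sub_mem isEuler_reesFiltration hp (bchPoly_mem hk hp hL x y)
    (zero_mem _) (j := 1) (by simpa using bchPoly_mem hk hp hL x y)
  rw [logDeriv_bchPoly hk hp hL, logDeriv_zero, sub_zero, sub_zero, Nat.cast_one, one_smul] at hlin
  have hconj := hQ.truncExp_ad_sub_mem (p := p) (by lia) (neg_mem (X_tmul_mem_reesFiltration y))
    (X_tmul_mem_reesFiltration x)
  convert sub_mem hconj hlin using 1
  rw [bchLogDeriv, TensorProduct.tmul_add]
  abel

lemma bch_sub_add_mem (x y : L) : bch k p x y - (x + y) ∈ lowerCentralSeries k L L 1 := by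
  have hmem := evalAt_mem (N := (lowerCentralSeries k L L 1).toSubmodule) (j := 2)
    (fun i hi => ?_) 1 (bchPoly_sub_mem hk hp hL x y)
  · rwa [map_sub, evalAt_tmul, eval_X, one_smul] at hmem
  · obtain ⟨i, rfl⟩ := Nat.exists_eq_add_of_le' hi
    exact antitone_lowerCentralSeries k L L (by lia)

include hL' in
lemma map_bchPoly {f : k[X] ⊗[k] L →ₗ⁅k⁆ k[X] ⊗[k] L'}
    (hfmem : ∀ z ∈ reesFiltration (lieWeight k L) 1, f z ∈ reesFiltration (lieWeight k L') 1)
    (hfE : ∀ z, f (eulerOp k L z) = eulerOp k L' (f z)) {x y : L} {x' y' : L'}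
    (hx : f ((X : k[X]) ⊗ₜ[k] x) = (X : k[X]) ⊗ₜ[k] x')
    (hy : f ((X : k[X]) ⊗ₜ[k] y) = (X : k[X]) ⊗ₜ[k] y') :
    f (bchPoly k p x y) = bchPoly k p x' y' := by
  refine (existsUnique_bchPoly hk hp hL' x' y').unique
    ⟨hfmem _ (bchPoly_mem hk hp hL x y), ?_⟩ ⟨bchPoly_mem hk hp hL' x' y',
      logDeriv_bchPoly hk hp hL' x' y'⟩
  have hneg : f (-((X : k[X]) ⊗ₜ[k] y)) = -((X : k[X]) ⊗ₜ[k] y') :=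
    (map_neg f _).trans (congrArg _ hy)
  rw [← map_logDeriv f hfE, logDeriv_bchPoly hk hp hL, bchLogDeriv, map_add, map_truncExp_ad, hx,
    hy, hneg, bchLogDeriv]

include hL' in
lemma map_bch (f : L →ₗ⁅k⁆ L') (x y : L) : f (bch k p x y) = bch k p (f x) (f y) := by
  rw [bch, bch]
  refine (evalAt_lTensor f.toLinearMap 1 _).symm.trans (congrArg _ ?_)
  exact map_bchPoly hk hp hL hL' (f := ExtendScalars.map (AlgHom.id k k[X]) f)
    (fun z => lTensor_mem_reesFiltration fun _ _ => map_mem_lieWeight f)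
    (fun z => (eulerOp_lTensor f.toLinearMap z).symm) rfl rfl

lemma bch_smul_smul_eq_evalAt (m : k) (x y : L) :
    bch k p (m • x) (m • y) = evalAt L m (bchPoly k p x y) := by
  set f : k[X] ⊗[k] L →ₗ⁅k⁆ k[X] ⊗[k] L := ExtendScalars.map (aeval (C m * X)) LieHom.id
  have hf (i : ℕ) (v : L) : f ((X ^ i : k[X]) ⊗ₜ[k] v) = m ^ i • (X ^ i : k[X]) ⊗ₜ[k] v := by
    change (aeval (C m * X)) (X ^ i : k[X]) ⊗ₜ[k] v = _
    rw [map_pow, aeval_X, mul_pow, ← C_pow, ← smul_eq_C_mul, TensorProduct.smul_tmul']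
  have hfX (v : L) : f ((X : k[X]) ⊗ₜ[k] v) = X ⊗ₜ[k] (m • v) := by
    simpa using hf 1 v
  have hfE : f.toLinearMap ∘ₗ eulerOp k L = eulerOp k L ∘ₗ f.toLinearMap :=
    polynomial_tensor_ext fun i v => by
      simp [eulerOp_X_pow_tmul, hf, smul_comm (m ^ i)]
  have hfev : evalAt L (1 : k) ∘ₗ f.toLinearMap = evalAt L m :=
    polynomial_tensor_ext fun i v => by simp [hf, evalAt_tmul]
  rw [bch, ← hfev, LinearMap.comp_apply]
  congr 1
  refine (map_bchPoly hk hp hL hL (f := f) (fun z hz => ?_) (LinearMap.congr_fun hfE) (hfX x)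
    (hfX y)).symm
  refine reesFiltration_le (N := (reesFiltration (lieWeight k L) 1).comap f.toLinearMap) |>.2
    (fun i hi v hv => ?_) hz
  rw [Submodule.mem_comap, LieHom.coe_toLinearMap, hf]
  exact Submodule.smul_mem _ _ (tmul_mem_reesFiltration hi hv)

end

section Vandermonde

/-- Weights `d` for which `∑ d m * f m` is the linear coefficient of every polynomial `f` of degree
less than `p`. -/
def IsLinearCoeffWeights (p : ℕ) (d : ℕ → k) : Prop :=
  ∀ j < p, ∑ m ∈ range p, d m * (m : k) ^ j = if j = 1 then 1 else 0

lemma UnitsBelow.exists_isLinearCoeffWeights (hk : UnitsBelow k p) :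
    ∃ d : ℕ → k, IsLinearCoeffWeights p d := by
  let v : Fin p → k := fun i => (i : ℕ)
  have hdet : IsUnit (Matrix.vandermonde v).det := by
    rw [Matrix.det_vandermonde, IsUnit.prod_univ_iff]
    intro i
    rw [IsUnit.prod_iff]
    intro j hj
    rw [mem_Ioi, Fin.lt_def] at hj
    rw [← Nat.cast_sub hj.le]
    exact hk (j - i) (by lia) (by lia)
  let e : Fin p → k := fun j => if (j : ℕ) = 1 then 1 else 0
  let d : Fin p → k := Matrix.vecMul e (Matrix.vandermonde v)⁻¹
  have hd : Matrix.vecMul d (Matrix.vandermonde v) = e := by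
    rw [Matrix.vecMul_vecMul, Matrix.nonsing_inv_mul _ hdet, Matrix.vecMul_one]
  refine ⟨fun m => if h : m < p then d ⟨m, h⟩ else 0, fun j hj => ?_⟩
  rw [sum_range]
  simpa [Matrix.vecMul, dotProduct, Matrix.vandermonde_apply, v] using congrFun hd ⟨j, hj⟩

lemma IsLinearCoeffWeights.sum_eq_zero {d : ℕ → k} (hd : IsLinearCoeffWeights p d) (hp : 0 < p) :
    ∑ m ∈ range p, d m = 0 := by simpa using hd 0 hp

lemma IsLinearCoeffWeights.sum_smul_sum_pow_smul {d : ℕ → k} (hd : IsLinearCoeffWeights p d)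
    (hp : 2 ≤ p) {V : Type*} [AddCommGroup V] [Module k V] (v : ℕ → V) :
    ∑ m ∈ range p, d m • ∑ i ∈ range p, (m : k) ^ i • v i = v 1 := by
  have hcoeff (i : ℕ) (hi : i ∈ range p) :
      ∑ m ∈ range p, d m • (m : k) ^ i • v i = if i = 1 then v 1 else 0 := by
    simp only [smul_smul, ← sum_smul]
    rw [hd i (mem_range.1 hi)]
    split_ifs with h
    · rw [h, one_smul]
    · rw [zero_smul]
  simp only [smul_sum]
  rw [sum_comm, sum_congr rfl hcoeff, sum_ite_eq', if_pos (mem_range.2 (by lia))]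

lemma IsLinearCoeffWeights.sum_smul_truncExp {d : ℕ → k} (hd : IsLinearCoeffWeights p d)
    (hp : 2 ≤ p) {B : Type*} [Ring B] [Algebra k B] (a : B) :
    ∑ m ∈ range p, d m • truncExp k p ((m : k) • a) = a := by
  have h := hd.sum_smul_sum_pow_smul hp fun i => invFactorial k i • a ^ i
  simpa only [truncExp, _root_.smul_pow, smul_comm (invFactorial k _), invFactorial_one, one_smul,
    pow_one] using h

lemma IsLinearCoeffWeights.sum_smul_evalAt {d : ℕ → k} (hd : IsLinearCoeffWeights p d)
    {V : Type*} [AddCommGroup V] [Module k V] {S : ℕ → Submodule k V}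
    (hS : ∀ i, p ≤ i → S i = ⊥) {z : k[X] ⊗[k] V} (hz : z ∈ reesFiltration S 2) :
    ∑ m ∈ range p, d m • evalAt V (m : k) z = 0 := by
  have hker : reesFiltration S 2 ≤
      LinearMap.ker (∑ m ∈ range p, d m • evalAt V (m : k)) := by
    refine reesFiltration_le.2 fun i hi v hv => ?_
    simp only [LinearMap.mem_ker, LinearMap.sum_apply, LinearMap.smul_apply, evalAt_tmul, eval_pow,
      eval_X, smul_smul, ← sum_smul]
    rcases lt_or_ge i p with hip | hip
    · rw [hd i hip, if_neg (by lia), zero_smul]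
    · rw [hS i hip, Submodule.mem_bot] at hv
      rw [hv, smul_zero]
  simpa using hker hz

lemma IsLinearCoeffWeights.sum_smul_bch (hk : UnitsBelow k p) (hp : 2 ≤ p)
    (hL : lowerCentralSeries k L L (p - 1) = ⊥) {d : ℕ → k} (hd : IsLinearCoeffWeights p d)
    (x y : L) : ∑ m ∈ range p, d m • bch k p ((m : k) • x) ((m : k) • y) = x + y := by
  have hsum := hd.sum_smul_evalAt (fun _ => lieWeight_eq_bot (by lia) hL)
    (bchPoly_sub_mem hk hp hL x y)
  have hone : ∑ m ∈ range p, d m * (m : k) = 1 := by simpa using hd 1 (by lia)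
  simp only [map_sub, smul_sub, sum_sub_distrib, evalAt_tmul, eval_X, smul_smul, ← sum_smul, hone,
    one_smul, sub_eq_zero] at hsum
  simpa only [bch_smul_smul_eq_evalAt hk hp hL] using hsum

end Vandermonde

section Representation

variable {B : Type*} [Ring B] [Algebra k B] {F : ℕ → Submodule k B}

lemma logDeriv_eq_of_lie_eq_zero (hp : 2 ≤ p) {E : L →ₗ[k] L} {z : L} (hz : ⁅z, E z⁆ = 0) :
    logDeriv k p E z = E z := by
  obtain ⟨q, rfl⟩ := Nat.exists_eq_add_of_le' hp
  rw [logDeriv, show q + 2 - 1 = q + 1 from rfl, sum_range_succ', add_eq_right.2]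
  · simp
  · exact sum_eq_zero fun i _ => by simp [pow_succ, hz]

lemma IsMulFiltration.eq_of_apply_eq_mul (hF : IsMulFiltration F) (hbot : F p = ⊥)
    (hk : UnitsBelow k p) (hp : 0 < p) {D : B →ₗ[k] B} (hD : IsEuler F D) {c u v : B}
    (hc : c ∈ F 1) (huv : u - v ∈ F 1) (hu : D u = u * c) (hv : D v = v * c) : u = v := by
  refine sub_eq_zero.1 <| (existsUnique_of_sub_mem hp hF.antitone hbot hk
    (θ := fun u => D u - u * c) (by simp) (fun j z _ z' _ hzz' => ?_) (zero_mem _)).unique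
    ⟨huv, by simp [hu, hv, sub_mul]⟩ ⟨zero_mem _, by simp⟩
  convert sub_mem (hD j _ hzz') (hF.mul_mem hzz' hc) using 1
  rw [map_sub]
  noncomm_ring

lemma IsMulFiltration.map_truncExp (hF : IsMulFiltration F) (hbot : F p = ⊥)
    (hk : UnitsBelow k p) (hp : 0 < p) {D : B →ₗ[k] B} (hDF : IsEuler F D)
    (hD : ∀ x y, D (x * y) = D x * y + x * D y) {z : B} (hz : z ∈ F 1) :
    D (truncExp k p z) = truncExp k p z * logDeriv k p D z :=
  map_truncExp_eq_mul_logDeriv hk hp hD (hF.eq_zero_of_mem hbot le_rfl (hF.pow_mem hz p))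
    fun i j hij => hF.eq_zero_of_mem hbot hij
      (hF.mul_mem (hF.pow_mem hz i) (hDF.map_mem hF.antitone (hF.pow_mem hz j)))

lemma IsMulFiltration.map_truncExp_mul_truncExp (hF : IsMulFiltration F) (hbot : F p = ⊥)
    (hk : UnitsBelow k p) (hp : 2 ≤ p) {D : B →ₗ[k] B} (hDF : IsEuler F D)
    (hD : ∀ x y, D (x * y) = D x * y + x * D y) {a b : B} (ha : a ∈ F 1) (hb : b ∈ F 1)
    (hDa : D a = a) (hDb : D b = b) :
    D (truncExp k p a * truncExp k p b) =
      truncExp k p a * truncExp k p b * (truncExp k p (ad k B (-b)) a + b) := by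
  have hlog {z : B} (hz : z ∈ F 1) (hDz : D z = z) : D (truncExp k p z) = truncExp k p z * z := by
    rw [hF.map_truncExp hbot hk (by lia) hDF hD hz,
      logDeriv_eq_of_lie_eq_zero hp (by rw [hDz, lie_self]), hDz]
  have hconj := hF.truncExp_mul_mul_truncExp_neg hbot hk (neg_mem hb) (hF.antitone zero_le_one ha)
  rw [neg_neg] at hconj
  have hcancel : truncExp k p a * truncExp k p b *
      (truncExp k p (-b) * a * truncExp k p b + b) =
      truncExp k p a * (truncExp k p b * truncExp k p (-b)) * a * truncExp k p b +
        truncExp k p a * truncExp k p b * b := by noncomm_ring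
  rw [hD, hlog ha hDa, hlog hb hDb, ← hconj, hcancel,
    hF.truncExp_mul_truncExp_neg hbot hk (by lia) hb, mul_one, mul_assoc _ _ b]

lemma IsMulFiltration.truncExp_eq_mul (hF : IsMulFiltration F) (hbot : F p = ⊥)
    (hk : UnitsBelow k p) (hp : 2 ≤ p) {D : B →ₗ[k] B} (hDF : IsEuler F D)
    (hD : ∀ x y, D (x * y) = D x * y + x * D y) {a b z : B} (ha : a ∈ F 1) (hb : b ∈ F 1)
    (hz : z ∈ F 1) (hDa : D a = a) (hDb : D b = b)
    (hDz : logDeriv k p D z = truncExp k p (ad k B (-b)) a + b) :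
    truncExp k p z = truncExp k p a * truncExp k p b := by
  have hone {z : B} (hz : z ∈ F 1) := hF.truncExp_sub_one_mem (p := p) (by lia) hz
  have hc : truncExp k p (ad k B (-b)) a + b ∈ F 1 := by
    have hconj := hF.truncExp_mul_mul_truncExp_neg hbot hk (neg_mem hb)
      (hF.antitone zero_le_one ha)
    exact hconj ▸ add_mem (hF.mul_mem (i := 0 + 1) (j := 0)
      (hF.mul_mem (hF.truncExp_mem (neg_mem hb)) ha) (hF.truncExp_mem (by simpa using hb))) hb
  refine hF.eq_of_apply_eq_mul hbot hk (by lia) hDF hc ?_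
    (by rw [hF.map_truncExp hbot hk (by lia) hDF hD hz, hDz])
    (hF.map_truncExp_mul_truncExp hbot hk hp hDF hD ha hb hDa hDb)
  convert sub_mem (hone hz) (add_mem (hone ha)
    (hF.mul_mem (hF.truncExp_mem (p := p) ha) (hone hb))) using 1
  noncomm_ring

/-- The commutator bracket on `k[X] ⊗ B`, preferred here to the one extended from `B`. -/
noncomputable abbrev polyCommutatorLieRing : LieRing (k[X] ⊗[k] B) := LieRing.ofAssociativeRing

attribute [local instance] polyCommutatorLieRing

/-- The extension to polynomials of a homomorphism from a Lie algebra to an associative algebra. -/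
noncomputable def polyRep (ρ : L →ₗ⁅k⁆ B) : k[X] ⊗[k] L →ₗ⁅k⁆ k[X] ⊗[k] B where
  toLinearMap := ρ.toLinearMap.lTensor k[X]
  map_lie' {x y} := by
    induction x with
    | zero => simp
    | add x x' hx hx' => simp_all
    | tmul f a =>
      induction y with
      | zero => simp
      | add y y' hy hy' => simp_all
      | tmul g b =>
        simp [LieRing.of_associative_ring_bracket, ExtendScalars.bracket_tmul, mul_comm g f,
          TensorProduct.tmul_sub]

lemma map_mem_of_mem_lieWeight (hF : IsMulFiltration F) {ρ : L →ₗ⁅k⁆ B} (hρ : ∀ x, ρ x ∈ F 1)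
    {i : ℕ} {x : L} (hx : x ∈ lieWeight k L i) : ρ x ∈ F i := by
  rcases i with _ | i
  · simp_all [lieWeight]
  refine lowerCentralSeries_le_of_lie_mem (N := fun i => (F (i + 1)).comap ρ.toLinearMap)
    (eq_top_iff.2 fun x _ => hρ x) (fun i a b hb => ?_) i hx
  change ρ ⁅a, b⁆ ∈ F (i + 1 + 1)
  rw [LieHom.map_lie, LieRing.of_associative_ring_bracket]
  exact sub_mem (hF.antitone (by lia) (hF.mul_mem (hρ a) hb))
    (hF.antitone (by lia) (hF.mul_mem hb (hρ a)))

theorem truncExp_map_bch (hk : UnitsBelow k p) (hp : 2 ≤ p)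
    (hL : lowerCentralSeries k L L (p - 1) = ⊥) (hF : IsMulFiltration F)
    (hbot : ∀ i, p ≤ i → F i = ⊥) {ρ : L →ₗ⁅k⁆ B} (hρ : ∀ x, ρ x ∈ F 1) (x y : L) :
    truncExp k p (ρ (bch k p x y)) = truncExp k p (ρ x) * truncExp k p (ρ y) := by
  have hmem {z : k[X] ⊗[k] L} (hz : z ∈ reesFiltration (lieWeight k L) 1) :
      polyRep ρ z ∈ reesFiltration F 1 :=
    lTensor_mem_reesFiltration (f := ρ.toLinearMap)
      (fun _ _ => map_mem_of_mem_lieWeight hF hρ) hz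
  have hXE (a : B) : eulerOp k B ((X : k[X]) ⊗ₜ[k] a) = (X : k[X]) ⊗ₜ[k] a := by
    simpa using eulerOp_X_pow_tmul (k := k) 1 a
  have hlog : logDeriv k p (eulerOp k B) (polyRep ρ (bchPoly k p x y)) =
      polyRep ρ (bchLogDeriv k p x y) := by
    rw [← logDeriv_bchPoly hk hp hL, map_logDeriv (polyRep ρ)]
    exact fun z => (eulerOp_lTensor ρ.toLinearMap z).symm
  have hcurve : truncExp k p (polyRep ρ (bchPoly k p x y)) =
      truncExp k p ((X : k[X]) ⊗ₜ[k] ρ x) * truncExp k p ((X : k[X]) ⊗ₜ[k] ρ y) := by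
    refine (isMulFiltration_reesFiltration hF).truncExp_eq_mul (reesFiltration_eq_bot hbot) hk hp
      isEuler_reesFiltration eulerOp_mul (hmem (X_tmul_mem_reesFiltration x))
      (hmem (X_tmul_mem_reesFiltration y)) (hmem (bchPoly_mem hk hp hL x y)) (hXE _) (hXE _) ?_
    rw [hlog, bchLogDeriv, map_add, map_truncExp_ad]
    congr 4
  have heval := congrArg (algEvalAt B (1 : k)) hcurve
  simp only [map_mul, Lazard.map_truncExp, algEvalAt_apply, evalAt_tmul, eval_X, one_smul] at heval
  rw [← heval, bch]
  exact congrArg _ (evalAt_lTensor ρ.toLinearMap 1 _).symm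

end Representation

end BCH

section DerivationExtension

variable {k : Type*} [CommRing k] {p : ℕ} {M : Type*} [LieRing M] [LieAlgebra k M]

/-- A derivation, regarded as an action of the one-dimensional Lie algebra `k`. -/
def derivationHom (D : LieDerivation k M M) : k →ₗ⁅k⁆ LieDerivation k M M where
  toLinearMap := LinearMap.toSpanSingleton k _ D
  map_lie' {a b} := by
    simp [LieRing.of_associative_ring_bracket, mul_comm a b]

/-- The extension of a Lie algebra by one element that acts on it by the derivation `D`. -/
abbrev DerivationExtension (D : LieDerivation k M M) : Type _ :=
  M ⋊⁅derivationHom D⁆ k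

/-- The inclusion of a Lie algebra into its extension by a derivation. -/
abbrev DerivationExtension.inl (D : LieDerivation k M M) : M →ₗ⁅k⁆ DerivationExtension D :=
  SemiDirectSum.inl (derivationHom D)

lemma derivationHom_apply (D : LieDerivation k M M) (c : k) (x : M) :
    derivationHom D c x = c • D x :=
  rfl

lemma DerivationExtension.lie_eq_mk {D : LieDerivation k M M} (x y : DerivationExtension D) :
    ⁅x, y⁆ = ⟨⁅x.left, y.left⁆ + x.right • D y.left - y.right • D x.left, 0⟩ := by
  refine SemiDirectSum.ext rfl ?_
  simp [LieRing.of_associative_ring_bracket, mul_comm]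

/-- The filtration on the extension by a derivation whose quotient by a filtration `Q` of the
original algebra is concentrated in degree `0`. -/
def derivationFiltration (D : LieDerivation k M M) (Q : ℕ → Submodule k M) :
    ℕ → Submodule k (DerivationExtension D)
  | 0 => ⊤
  | i + 1 => (Q (i + 1)).map (DerivationExtension.inl D).toLinearMap

lemma isLieFiltration_derivationFiltration {D : LieDerivation k M M} {Q : ℕ → Submodule k M}
    (hQ : IsLieFiltration Q) (h1 : Q 1 = ⊤) (hD : ∀ i, ∀ x ∈ Q i, D x ∈ Q i) :
    IsLieFiltration (derivationFiltration D Q) where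
  antitone := antitone_nat_of_succ_le fun
    | 0 => le_top
    | i + 1 => Submodule.map_mono (hQ.antitone (Nat.le_succ _))
  lie_mem {i j x y} hx hy := by
    have hlie_mem {i : ℕ} {x : DerivationExtension D} {y : M} (hy : y ∈ Q (i + 1)) :
        ⁅x, DerivationExtension.inl D y⁆ ∈ derivationFiltration D Q (i + 1) := by
      refine ⟨⁅x.left, y⁆ + x.right • D y, add_mem ?_ (Submodule.smul_mem _ _ (hD _ _ hy)), ?_⟩
      · exact hQ.antitone (by lia) (hQ.lie_mem (i := 1) (h1 ▸ Submodule.mem_top) hy)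
      · simp [derivationHom_apply]
    rcases i with _ | i
    · rcases j with _ | j
      · trivial
      · obtain ⟨y, hy, rfl⟩ := hy
        rw [zero_add]
        exact hlie_mem hy
    · obtain ⟨x, hx, rfl⟩ := hx
      rcases j with _ | j
      · rw [← lie_skew]
        exact neg_mem (hlie_mem hx)
      · obtain ⟨y, hy, rfl⟩ := hy
        exact ⟨⁅x, y⁆, hQ.lie_mem (i := i + 1) (j := j + 1) hx hy, LieHom.map_lie _ x y⟩

/-- The representation of a Lie algebra on its extension by a derivation. -/
def derivationRep (D : LieDerivation k M M) : M →ₗ⁅k⁆ Module.End k (DerivationExtension D) :=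
  (ad k (DerivationExtension D)).comp (DerivationExtension.inl D)

lemma derivationRep_injective {D : LieDerivation k M M} (hD : Function.Injective D) :
    Function.Injective (derivationRep D) := fun x y hxy => by
  have happly := LinearMap.congr_fun hxy ⟨0, 1⟩
  refine hD ?_
  simpa [derivationRep, derivationHom_apply] using happly

lemma IsLieFiltration.lowerCentralSeries_le {Q : ℕ → Submodule k M} (hQ : IsLieFiltration Q)
    (h1 : Q 1 = ⊤) (i : ℕ) : (lowerCentralSeries k M M i).toSubmodule ≤ Q (i + 1) :=
  lowerCentralSeries_le_of_lie_mem (N := fun i => Q (i + 1)) h1 (fun i _ _ hy =>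
    hQ.antitone (by lia) (hQ.lie_mem (i := 1) (h1 ▸ Submodule.mem_top) hy)) i

lemma IsEuler.injective {V : Type*} [AddCommGroup V] [Module k V] {Q : ℕ → Submodule k V}
    {E : V →ₗ[k] V} (hE : IsEuler Q E) (hk : UnitsBelow k p) (hp : 0 < p) (hQ : Antitone Q)
    (h1 : Q 1 = ⊤) (hbot : Q p = ⊥) : Function.Injective E := fun x y hxy => by
  refine (existsUnique_of_sub_mem hp hQ hbot hk (map_zero E) (fun j z _ z' _ hz => ?_)
    (y := E y) (h1 ▸ Submodule.mem_top)).unique ⟨h1 ▸ Submodule.mem_top, hxy⟩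
      ⟨h1 ▸ Submodule.mem_top, rfl⟩
  rw [← map_sub]
  exact hE j _ hz

end DerivationExtension

section ReesSubalgebra

variable {k : Type*} [CommRing k] {p : ℕ} {L : Type*} [LieRing L] [LieAlgebra k L]

variable (k L) in
/-- The Euler operator as a derivation of the Lie algebra `k[X] ⊗ L`. -/
noncomputable def eulerDerivation : LieDerivation k (k[X] ⊗[k] L) (k[X] ⊗[k] L) where
  toLinearMap := eulerOp k L
  leibniz' x y := by
    rw [sub_eq_add_neg, lie_skew]
    induction x with
    | zero => simp
    | add x x' hx hx' => simp only [add_lie, map_add, hx, hx']; abel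
    | tmul f a =>
      induction y with
      | zero => simp
      | add y y' hy hy' => simp only [lie_add, map_add, hy, hy']; abel
      | tmul g b =>
        simp only [eulerOp, LinearMap.rTensor_tmul, ExtendScalars.bracket_tmul,
          LinearMap.comp_apply, LinearMap.mulLeft_apply, derivative_mul, ← TensorProduct.add_tmul]
        congr 1
        ring

variable (k L) in
/-- The Lie algebra `⨁ i ≥ 1, Xⁱ ⊗ Cⁱ L` of polynomials, where `Cⁱ L` is the lower central series
starting at `C¹ L = L`. Unlike `L`, it has an injective derivation. -/
noncomputable def reesSubalgebra : LieSubalgebra k (k[X] ⊗[k] L) where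
  toSubmodule := reesFiltration (lieWeight k L) 1
  lie_mem' hx hy := reesFiltration_antitone (by lia : 1 ≤ 1 + 1)
    (isLieFiltration_reesFiltration.lie_mem hx hy)

namespace reesSubalgebra

variable (k L) in
/-- The restriction of the Euler operator. -/
noncomputable def euler : LieDerivation k (reesSubalgebra k L) (reesSubalgebra k L) where
  toLinearMap := (eulerOp k L).restrict fun _ hx =>
    isEuler_reesFiltration.map_mem reesFiltration_antitone hx
  leibniz' x y := Subtype.ext <| (eulerDerivation k L).leibniz' x y

variable (k L) in
/-- The restriction of the Rees filtration. -/
noncomputable def filtration (j : ℕ) : Submodule k (reesSubalgebra k L) :=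
  (reesFiltration (lieWeight k L) j).comap (reesSubalgebra k L).toSubmodule.subtype

lemma isLieFiltration_filtration : IsLieFiltration (filtration k L) where
  antitone _ _ hij := Submodule.comap_mono (reesFiltration_antitone hij)
  lie_mem {_ _ x y} hx hy :=
    isLieFiltration_reesFiltration.lie_mem (x := (x : k[X] ⊗[k] L)) (y := (y : k[X] ⊗[k] L)) hx hy

lemma filtration_one : filtration k L 1 = ⊤ :=
  eq_top_iff.2 fun x _ => x.2

lemma isEuler_filtration : IsEuler (filtration k L) (euler k L).toLinearMap :=
  fun j x hx => isEuler_reesFiltration j (x : k[X] ⊗[k] L) hx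

/-- The value of a polynomial at `X = 1`. -/
noncomputable def evalOne : reesSubalgebra k L →ₗ⁅k⁆ L :=
  (lieEvalAt L 1).comp (reesSubalgebra k L).incl

variable (k) in
/-- The linear polynomial `X ⊗ x`. -/
noncomputable def linear (x : L) : reesSubalgebra k L :=
  ⟨(X : k[X]) ⊗ₜ[k] x, X_tmul_mem_reesFiltration x⟩

lemma evalOne_linear (x : L) : evalOne (linear k x) = x := by
  change evalAt L (1 : k) (X ⊗ₜ[k] x) = x
  rw [evalAt_tmul, eval_X, one_smul]

lemma lie_linear_eq_zero {x y : L} (hxy : ⁅x, y⁆ = 0) : ⁅linear k x, linear k y⁆ = 0 :=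
  Subtype.ext <| (ExtendScalars.bracket_tmul ..).trans <| by simp [hxy]

/-- The filtration of the algebra in which `derivationRep (euler k L)` takes its values. -/
noncomputable abbrev repFiltration :
    ℕ → Submodule k (Module.End k (DerivationExtension (euler k L))) :=
  endFiltration (derivationFiltration (euler k L) (filtration k L))

lemma isLieFiltration_derivationFiltration_euler :
    IsLieFiltration (derivationFiltration (euler k L) (filtration k L)) :=
  isLieFiltration_derivationFiltration isLieFiltration_filtration filtration_one fun _ _ =>
    isEuler_filtration.map_mem isLieFiltration_filtration.antitone

lemma isMulFiltration_repFiltration : IsMulFiltration (repFiltration (k := k) (L := L)) :=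
  isMulFiltration_endFiltration isLieFiltration_derivationFiltration_euler.antitone

lemma derivationRep_mem (x : reesSubalgebra k L) :
    derivationRep (euler k L) x ∈ repFiltration (k := k) (L := L) 1 :=
  isLieFiltration_derivationFiltration_euler.ad_mem (j := 1)
    ⟨x, x.2, rfl⟩

section

variable (hk : UnitsBelow k p) (hp : 2 ≤ p) (hL : lowerCentralSeries k L L (p - 1) = ⊥)

include hp hL

lemma filtration_eq_bot {i : ℕ} (hi : p ≤ i) : filtration k L i = ⊥ :=
  eq_bot_iff.2 fun _ hx => Subtype.ext <| (Submodule.mem_bot k).1 <|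
    reesFiltration_lieWeight_eq_bot hp hL ▸ reesFiltration_antitone hi hx

lemma lowerCentralSeries_eq_bot :
    lowerCentralSeries k (reesSubalgebra k L) (reesSubalgebra k L) (p - 1) = ⊥ := by
  rw [← LieSubmodule.toSubmodule_eq_bot, eq_bot_iff,
    ← filtration_eq_bot (i := p - 1 + 1) hp hL (by lia)]
  exact isLieFiltration_filtration.lowerCentralSeries_le filtration_one _

lemma repFiltration_eq_bot {i : ℕ} (hi : p ≤ i) : repFiltration (k := k) (L := L) i = ⊥ := by
  refine endFiltration_eq_bot rfl ?_
  obtain ⟨i, rfl⟩ := Nat.exists_eq_succ_of_ne_zero (by lia : i ≠ 0)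
  rw [derivationFiltration, filtration_eq_bot hp hL hi, Submodule.map_bot]

include hk

lemma truncExp_derivationRep_bch (x y : reesSubalgebra k L) :
    truncExp k p (derivationRep (euler k L) (bch k p x y)) =
      truncExp k p (derivationRep (euler k L) x) * truncExp k p (derivationRep (euler k L) y) :=
  truncExp_map_bch hk hp (lowerCentralSeries_eq_bot hp hL) isMulFiltration_repFiltration
    (fun _ => repFiltration_eq_bot hp hL) derivationRep_mem x y

lemma truncExp_derivationRep_injective :
    Function.Injective fun x => truncExp k p (derivationRep (euler k L) x) := fun _ _ h =>
  derivationRep_injective (isEuler_filtration.injective hk (by lia)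
    isLieFiltration_filtration.antitone filtration_one (filtration_eq_bot hp hL le_rfl)) <|
  isMulFiltration_repFiltration.injOn_truncExp (repFiltration_eq_bot hp hL le_rfl) hp
    (derivationRep_mem _) (derivationRep_mem _) h

lemma evalOne_bch (x y : reesSubalgebra k L) :
    evalOne (bch k p x y) = bch k p (evalOne x) (evalOne y) :=
  map_bch hk hp (lowerCentralSeries_eq_bot hp hL) hL evalOne x y

end

end reesSubalgebra

section

variable (hk : UnitsBelow k p) (hp : 2 ≤ p) (hL : lowerCentralSeries k L L (p - 1) = ⊥)

include hk hp hL

open reesSubalgebra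

theorem bch_assoc (x y z : L) : bch k p (bch k p x y) z = bch k p x (bch k p y z) := by
  have hassoc : bch k p (bch k p (linear k x) (linear k y)) (linear k z) =
      bch k p (linear k x) (bch k p (linear k y) (linear k z)) :=
    truncExp_derivationRep_injective hk hp hL <| by
      simp only [truncExp_derivationRep_bch hk hp hL, mul_assoc]
  simpa only [evalOne_bch hk hp hL, evalOne_linear] using congrArg evalOne hassoc

theorem bch_eq_add_of_lie_eq_zero {x y : L} (hxy : ⁅x, y⁆ = 0) : bch k p x y = x + y := by
  have hcomm : Commute (derivationRep (euler k L) (linear k x))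
      (derivationRep (euler k L) (linear k y)) := by
    rw [commute_iff_lie_eq, ← LieHom.map_lie, lie_linear_eq_zero hxy, map_zero]
  have hadd : bch k p (linear k x) (linear k y) = linear k x + linear k y :=
    truncExp_derivationRep_injective hk hp hL <| by
      simp only [truncExp_derivationRep_bch hk hp hL]
      rw [map_add, isMulFiltration_repFiltration.truncExp_add (repFiltration_eq_bot hp hL le_rfl)
        hk (derivationRep_mem _) (derivationRep_mem _) hcomm]
  simpa only [evalOne_bch hk hp hL, evalOne_linear, map_add] using congrArg evalOne hadd

theorem bch_bch_neg (x y : L) : bch k p (bch k p x y) (-x) = truncExp k p (ad k L x) y := by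
  have hconj : bch k p (bch k p (linear k x) (linear k y)) (-linear k x) =
      truncExp k p (ad k _ (linear k x)) (linear k y) :=
    truncExp_derivationRep_injective hk hp hL <| by
      simp only [truncExp_derivationRep_bch hk hp hL, map_truncExp_ad]
      rw [map_neg, isMulFiltration_repFiltration.truncExp_conj (repFiltration_eq_bot hp hL le_rfl)
        hk (by lia) (derivationRep_mem _)
          (isMulFiltration_repFiltration.antitone zero_le_one (derivationRep_mem _))]
  simpa only [evalOne_bch hk hp hL, evalOne_linear, map_neg, map_truncExp_ad] using
    congrArg evalOne hconj

end

end ReesSubalgebra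

section BCHGroupLaws

variable {k : Type*} [CommRing k] {p : ℕ} {L : Type*} [LieRing L] [LieAlgebra k L]
  (hk : UnitsBelow k p) (hp : 2 ≤ p) (hL : lowerCentralSeries k L L (p - 1) = ⊥)

include hk hp hL

lemma bch_zero (x : L) : bch k p x 0 = x := by
  rw [bch_eq_add_of_lie_eq_zero hk hp hL (lie_zero x), add_zero]

lemma zero_bch (x : L) : bch k p 0 x = x := by
  rw [bch_eq_add_of_lie_eq_zero hk hp hL (zero_lie x), zero_add]

lemma bch_neg_self (x : L) : bch k p x (-x) = 0 := by
  rw [bch_eq_add_of_lie_eq_zero hk hp hL (by simp), add_neg_cancel]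

lemma neg_bch_self (x : L) : bch k p (-x) x = 0 := by
  rw [bch_eq_add_of_lie_eq_zero hk hp hL (by simp), neg_add_cancel]

lemma bch_smul_smul (a b : k) (x : L) : bch k p (a • x) (b • x) = (a + b) • x := by
  rw [bch_eq_add_of_lie_eq_zero hk hp hL (by simp), add_smul]

lemma eq_neg_of_bch_eq_zero {x y : L} (h : bch k p x y = 0) : y = -x := by
  rw [← zero_bch hk hp hL y, ← neg_bch_self hk hp hL x, bch_assoc hk hp hL, h, bch_zero hk hp hL]

lemma natCast_succ_smul_eq_bch (m : ℕ) (x : L) :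
    ((m + 1 : ℕ) : k) • x = bch k p ((m : k) • x) x := by
  conv_rhs => rw [← one_smul k x, smul_smul, mul_one, bch_smul_smul hk hp hL]
  rw [Nat.cast_add_one]

lemma IsLinearCoeffWeights.sum_smul_bch_conj {d : ℕ → k} (hd : IsLinearCoeffWeights p d)
    (x y : L) :
    ∑ m ∈ range p, d m • bch k p (bch k p ((m : k) • x) y) (-((m : k) • x)) = ⁅x, y⁆ := by
  have h := congrArg (· y) (hd.sum_smul_truncExp hp (ad k L x))
  simpa only [bch_bch_neg hk hp hL, map_smul, LinearMap.sum_apply, LinearMap.smul_apply,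
    ad_apply] using h

lemma lie_eq_zero_of_bch_comm {x y : L} (h : bch k p x y = bch k p y x) : ⁅x, y⁆ = 0 := by
  have hcomm (m : ℕ) : bch k p ((m : k) • x) y = bch k p y ((m : k) • x) := by
    induction m with
    | zero => simp [zero_bch hk hp hL, bch_zero hk hp hL]
    | succ m ih =>
      rw [natCast_succ_smul_eq_bch hk hp hL, bch_assoc hk hp hL, h, ← bch_assoc hk hp hL, ih,
        bch_assoc hk hp hL]
  obtain ⟨d, hd⟩ := hk.exists_isLinearCoeffWeights
  rw [← hd.sum_smul_bch_conj hk hp hL x y]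
  simp only [hcomm, bch_assoc hk hp hL, bch_neg_self hk hp hL, bch_zero hk hp hL]
  rw [← sum_smul, hd.sum_eq_zero (by lia), zero_smul]

end BCHGroupLaws

section BCHHom

variable {k : Type*} [CommRing k] {p : ℕ} {L : Type*} [LieRing L] [LieAlgebra k L]
  {L' : Type*} [LieRing L'] [LieAlgebra k L']

variable (k) in
/-- The subalgebra spanned by an element together with the derived algebra. -/
def spanSupDerived (s : L) : LieSubalgebra k L where
  toSubmodule := Submodule.span k {s} ⊔ (lowerCentralSeries k L L 1).toSubmodule
  lie_mem' {x y} _ _ :=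
    Submodule.mem_sup_right (lie_mem_lowerCentralSeries_succ (i := 0) x (LieSubmodule.mem_top y))

lemma mem_spanSupDerived {s x : L} :
    x ∈ spanSupDerived k s ↔ ∃ a : k, ∃ u ∈ lowerCentralSeries k L L 1, a • s + u = x := by
  change x ∈ Submodule.span k {s} ⊔ (lowerCentralSeries k L L 1).toSubmodule ↔ _
  simp [Submodule.mem_sup, Submodule.mem_span_singleton]

lemma lie_mem_of_mem_spanSupDerived {s x y : L} (hx : x ∈ spanSupDerived k s)
    (hy : y ∈ spanSupDerived k s) : ⁅x, y⁆ ∈ lowerCentralSeries k L L 2 := by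
  obtain ⟨a, u, hu, rfl⟩ := mem_spanSupDerived.1 hx
  obtain ⟨b, v, hv, rfl⟩ := mem_spanSupDerived.1 hy
  have hleft : ⁅u, b • s⁆ ∈ lowerCentralSeries k L L 2 := by
    rw [← lie_skew]
    exact neg_mem (lie_mem_lowerCentralSeries_succ _ hu)
  rw [lie_add, add_lie, smul_lie, lie_smul, lie_self, smul_zero, smul_zero, zero_add]
  exact add_mem hleft (lie_mem_lowerCentralSeries_succ _ hv)

lemma coe_mem_of_mem_lowerCentralSeries_spanSupDerived {s : L} {i : ℕ} {x : spanSupDerived k s}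
    (hx : x ∈ lowerCentralSeries k (spanSupDerived k s) (spanSupDerived k s) (i + 1)) :
    (x : L) ∈ lowerCentralSeries k L L (i + 2) := by
  let N : ℕ → Submodule k (spanSupDerived k s)
    | 0 => ⊤
    | i + 1 => (lowerCentralSeries k L L (i + 2)).toSubmodule.comap
        (spanSupDerived k s).toSubmodule.subtype
  have hN : ∀ i, ∀ x y : spanSupDerived k s, y ∈ N i → ⁅x, y⁆ ∈ N (i + 1)
    | 0, x, y, _ => lie_mem_of_mem_spanSupDerived x.2 y.2
    | _ + 1, x, _, hy => lie_mem_lowerCentralSeries_succ (x : L) hy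
  exact lowerCentralSeries_le_of_lie_mem rfl hN (i + 1) hx

lemma lowerCentralSeries_spanSupDerived_eq_bot {i : ℕ} (hi : lowerCentralSeries k L L (i + 2) = ⊥)
    (s : L) : lowerCentralSeries k (spanSupDerived k s) (spanSupDerived k s) (i + 1) = ⊥ :=
  (LieSubmodule.eq_bot_iff _).2 fun _ hx => Subtype.ext <|
    (LieSubmodule.mem_bot (R := k) (L := L) _).1 <|
      hi ▸ coe_mem_of_mem_lowerCentralSeries_spanSupDerived hx

variable (hk : UnitsBelow k p) (hp : 2 ≤ p) (hs : Function.Surjective (Nat.cast : ℕ → k))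
  (hL : lowerCentralSeries k L L (p - 1) = ⊥) (hL' : lowerCentralSeries k L' L' (p - 1) = ⊥)
  {f : L → L'} (hf : ∀ x y, f (bch k p x y) = bch k p (f x) (f y))

include hk hp hL hL' hf

lemma map_zero_of_map_bch : f 0 = 0 := by
  have h := hf 0 0
  rw [zero_bch hk hp hL, bch_eq_add_of_lie_eq_zero hk hp hL' (lie_self _)] at h
  exact left_eq_add.1 h

lemma map_neg_of_map_bch (x : L) : f (-x) = -f x :=
  eq_neg_of_bch_eq_zero hk hp hL' <| by
    rw [← hf, bch_neg_self hk hp hL, map_zero_of_map_bch hk hp hL hL' hf]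

include hs in
lemma map_smul_of_map_bch (c : k) (x : L) : f (c • x) = c • f x := by
  obtain ⟨m, rfl⟩ := hs c
  induction m with
  | zero => simp [map_zero_of_map_bch hk hp hL hL' hf]
  | succ m ih =>
    rw [natCast_succ_smul_eq_bch hk hp hL, natCast_succ_smul_eq_bch hk hp hL', hf, ih]

include hs

lemma map_lie_of_map_bch (hadd : ∀ x y, f (x + y) = f x + f y) (x y : L) :
    f ⁅x, y⁆ = ⁅f x, f y⁆ := by
  have hsmul := map_smul_of_map_bch hk hp hs hL hL' hf
  let F : L →ₗ[k] L' := { toFun := f, map_add' := hadd, map_smul' := hsmul }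
  obtain ⟨d, hd⟩ := hk.exists_isLinearCoeffWeights
  rw [← hd.sum_smul_bch_conj hk hp hL x y, ← hd.sum_smul_bch_conj hk hp hL']
  refine (map_sum F _ _).trans (sum_congr rfl fun m _ => (map_smul F _ _).trans ?_)
  change d m • f _ = _
  rw [hf, hf, map_neg_of_map_bch hk hp hL hL' hf, hsmul]

omit hs in
lemma map_add_of_map_bch_of_lie_eq_zero {x y : L} (hxy : ⁅x, y⁆ = 0) :
    f (x + y) = f x + f y := by
  have hyx : ⁅y, x⁆ = 0 := by rw [← lie_skew, hxy, neg_zero]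
  have hcomm : bch k p (f x) (f y) = bch k p (f y) (f x) := by
    rw [← hf, ← hf, bch_eq_add_of_lie_eq_zero hk hp hL hxy, bch_eq_add_of_lie_eq_zero hk hp hL hyx,
      add_comm]
  rw [← bch_eq_add_of_lie_eq_zero hk hp hL hxy, hf,
    bch_eq_add_of_lie_eq_zero hk hp hL' (lie_eq_zero_of_bch_comm hk hp hL' hcomm)]

/-- Recover `x + y` as a linear combination of the products `bch (m • x) (m • y)`. -/
lemma map_add_of_map_bch_of_additiveOn {H : Submodule k L} {x y : L}
    (hH : ∀ m : k, bch k p (m • x) (m • y) ∈ H)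
    (hadd : ∀ u ∈ H, ∀ v ∈ H, f (u + v) = f u + f v) : f (x + y) = f x + f y := by
  have hsmul := map_smul_of_map_bch hk hp hs hL hL' hf
  let F : H →ₗ[k] L' :=
    { toFun := fun u => f u
      map_add' := fun u v => hadd u u.2 v v.2
      map_smul' := fun c u => hsmul c u }
  obtain ⟨d, hd⟩ := hk.exists_isLinearCoeffWeights
  have hsum : ((∑ m ∈ range p, d m • ⟨_, hH (m : k)⟩ : H) : L) = x + y := by
    rw [Submodule.coe_sum]
    exact hd.sum_smul_bch hk hp hL x y
  rw [← hsum, ← hd.sum_smul_bch hk hp hL' (f x) (f y)]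
  refine (map_sum F _ _).trans (sum_congr rfl fun m _ => (map_smul F _ _).trans ?_)
  change d m • f _ = _
  rw [hf, hsmul, hsmul]

omit hL hf in
/-- Induction on the nilpotency class: the products `bch (m • x) (m • y)` lie in the subalgebra
spanned by `x + y` and the derived algebra, whose class is smaller. -/
lemma map_add_of_map_bch_of_lowerCentralSeries_eq_bot {c : ℕ} (hcp : c + 1 ≤ p - 1)
    (hL : lowerCentralSeries k L L (c + 1) = ⊥)
    (hf : ∀ x y, f (bch k p x y) = bch k p (f x) (f y)) (x y : L) : f (x + y) = f x + f y := by
  induction c generalizing L with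
  | zero =>
    refine map_add_of_map_bch_of_lie_eq_zero hk hp
      (eq_bot_iff.2 (hL ▸ antitone_lowerCentralSeries k L L hcp)) hL' hf ?_
    exact (LieSubmodule.mem_bot (R := k) (L := L) _).1 <|
      hL ▸ lie_mem_lowerCentralSeries_succ (i := 0) x (LieSubmodule.mem_top y)
  | succ c ih =>
    have hLp : lowerCentralSeries k L L (p - 1) = ⊥ :=
      eq_bot_iff.2 (hL ▸ antitone_lowerCentralSeries k L L hcp)
    let H := spanSupDerived k (x + y)
    have hH := lowerCentralSeries_spanSupDerived_eq_bot hL (x + y)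
    have hHp : lowerCentralSeries k H H (p - 1) = ⊥ :=
      eq_bot_iff.2 (hH ▸ antitone_lowerCentralSeries k H H (by lia))
    refine map_add_of_map_bch_of_additiveOn hk hp hs hLp hL' hf (H := H.toSubmodule)
      (fun m => mem_spanSupDerived.2 ⟨m, _, bch_sub_add_mem hk hp hLp (m • x) (m • y), ?_⟩)
      fun u hu v hv => ih (L := H) (f := fun u => f u) (by lia) hH (fun u v => ?_) ⟨u, hu⟩ ⟨v, hv⟩
    · rw [smul_add, add_sub_cancel]
    · rw [← hf]
      exact congrArg f (map_bch hk hp hHp hLp H.incl u v)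

theorem exists_lieHom_of_map_bch : ∃ F : L →ₗ⁅k⁆ L', ∀ x, F x = f x := by
  obtain ⟨c, hc⟩ : ∃ c, p - 1 = c + 1 := ⟨p - 2, by lia⟩
  have hadd := map_add_of_map_bch_of_lowerCentralSeries_eq_bot hk hp hs hL' hc.ge (hc ▸ hL) hf
  exact ⟨{ toFun := f
           map_add' := hadd
           map_smul' := map_smul_of_map_bch hk hp hs hL hL' hf
           map_lie' := map_lie_of_map_bch hk hp hs hL hL' hf hadd _ _ }, fun _ => rfl⟩

end BCHHom

/-! ### Groups of prime power order -/

section FinitePGroups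

variable {k : Type*} [CommRing k] {p : ℕ}

lemma eq_bot_of_card_dvd_pow (hp : p.Prime) {M : Type*} [AddCommGroup M] [Module k M] [Finite M]
    {A : ℕ → Submodule k M} (hA : Antitone A) (hstab : ∀ i, A (i + 1) = A i → A (i + 2) = A (i + 1))
    (hbot : ∃ c, A c = ⊥) {e : ℕ} (hcard : Nat.card (A 0) ∣ p ^ e) : A e = ⊥ := by
  induction e generalizing A with
  | zero =>
    have := (Nat.card_eq_one_iff_unique.1 (Nat.dvd_one.1 hcard)).1
    exact Submodule.eq_bot_of_subsingleton
  | succ e ih =>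
    obtain ⟨c, hc⟩ := hbot
    by_cases h : A 1 = A 0
    · have hsucc : ∀ i, A (i + 1) = A i := fun i => Nat.rec h (fun i hi => hstab i hi) i
      have hconst : ∀ i, A i = A 0 := fun i => Nat.rec rfl (fun i hi => (hsucc i).trans hi) i
      rw [hconst, ← hconst c, hc]
    · refine ih (A := fun i => A (i + 1)) (fun i j hij => hA (by lia)) (fun i => hstab (i + 1))
        ⟨c, eq_bot_iff.2 (hc ▸ hA c.le_succ)⟩ ?_
      obtain ⟨a, ha, hcard₀⟩ := (Nat.dvd_prime_pow hp).1 hcard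
      have hle : (A 1).toAddSubgroup ≤ (A 0).toAddSubgroup := hA zero_le_one
      obtain ⟨b, hb, hcard₁⟩ := (Nat.dvd_prime_pow hp).1
        (hcard₀ ▸ AddSubgroup.card_dvd_of_le hle : Nat.card (A 1) ∣ p ^ a)
      have hba : b ≠ a := fun hba => h <| Submodule.toAddSubgroup_injective <|
        AddSubgroup.eq_of_le_of_card_ge hle (by subst hba; exact (hcard₀.trans hcard₁.symm).le)
      exact hcard₁ ▸ pow_dvd_pow p (by lia)

variable {L : Type*} [LieRing L] [LieAlgebra k L] [LieRing.IsNilpotent L]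

lemma lowerCentralSeries_add_eq_bot_of_card_dvd [Finite L] (hp : p.Prime) {i e : ℕ}
    (h : Nat.card (lowerCentralSeries k L L i) ∣ p ^ e) : lowerCentralSeries k L L (i + e) = ⊥ := by
  obtain ⟨c, hc⟩ := (LieModule.isNilpotent_iff k L L).1 ‹_›
  refine LieSubmodule.toSubmodule_eq_bot _ |>.1 <| eq_bot_of_card_dvd_pow hp
    (A := fun j => (lowerCentralSeries k L L (i + j)).toSubmodule)
    (fun j l hjl => antitone_lowerCentralSeries k L L (by lia)) (fun j hj => ?_)
    ⟨c, (LieSubmodule.toSubmodule_eq_bot _).2 <|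
      eq_bot_iff.2 (hc ▸ antitone_lowerCentralSeries k L L (by lia))⟩ h
  have hj : lowerCentralSeries k L L (i + j + 1) = lowerCentralSeries k L L (i + j) :=
    LieSubmodule.toSubmodule_injective hj
  change (lowerCentralSeries k L L (i + j + 1 + 1)).toSubmodule =
    (lowerCentralSeries k L L (i + j + 1)).toSubmodule
  rw [lowerCentralSeries_succ, hj, ← lowerCentralSeries_succ, hj]

lemma lowerCentralSeries_one_eq_bot_of_isAddCyclic
    (h : IsAddCyclic (L ⧸ (lowerCentralSeries k L L 1).toSubmodule)) :
    lowerCentralSeries k L L 1 = ⊥ := by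
  obtain ⟨c, hc⟩ := (LieModule.isNilpotent_iff k L L).1 ‹_›
  obtain ⟨g, hg⟩ := h
  obtain ⟨s, rfl⟩ := Submodule.Quotient.mk_surjective _ g
  have hmem : ∀ x : L, x ∈ spanSupDerived k s := fun x => by
    obtain ⟨z, hz⟩ := hg (Submodule.Quotient.mk x)
    refine mem_spanSupDerived.2 ⟨z, x - (z : k) • s, ?_, add_sub_cancel _ _⟩
    rw [Int.cast_smul_eq_zsmul]
    exact (Submodule.Quotient.eq _).1 hz.symm
  have hone : lowerCentralSeries k L L 1 ≤ lowerCentralSeries k L L 2 := by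
    rw [lowerCentralSeries_succ k L L 0, LieSubmodule.lie_le_iff]
    exact fun x _ y _ => lie_mem_of_mem_spanSupDerived (hmem x) (hmem y)
  have hle : ∀ i, lowerCentralSeries k L L 1 ≤ lowerCentralSeries k L L (i + 1) := fun i => by
    induction i with
    | zero => exact le_rfl
    | succ i ih =>
      refine hone.trans ?_
      rw [lowerCentralSeries_succ k L L 1, lowerCentralSeries_succ k L L (i + 1)]
      exact LieSubmodule.mono_lie_right _ ih
  exact eq_bot_iff.2 (hc ▸ (hle c).trans (antitone_lowerCentralSeries k L L c.le_succ))

lemma lowerCentralSeries_eq_bot_of_card (hp : p.Prime) {m : ℕ} (hm : m ≤ p)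
    (hcard : Nat.card L = p ^ m) : lowerCentralSeries k L L (p - 1) = ⊥ := by
  have : Finite L := Nat.finite_of_card_ne_zero (hcard ▸ pow_ne_zero _ hp.ne_zero)
  have : Fact p.Prime := ⟨hp⟩
  have hp2 := hp.two_le
  have hmul := (lowerCentralSeries k L L 1).toSubmodule.card_eq_card_quotient_mul_card
  obtain ⟨b, hbm, hb⟩ := (Nat.dvd_prime_pow hp).1 (Dvd.intro_left _ (hmul.symm.trans hcard))
  have hvanish {i : ℕ} (hi : i ≤ p - 1) (h : lowerCentralSeries k L L i = ⊥) :
      lowerCentralSeries k L L (p - 1) = ⊥ :=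
    eq_bot_iff.2 (h ▸ antitone_lowerCentralSeries k L L hi)
  obtain rfl | rfl | hb2 : b = 0 ∨ b = 1 ∨ 2 ≤ b := by lia
  · have := (Nat.card_eq_one_iff_unique.1 (hb.trans (pow_zero p))).1
    exact hvanish (by lia) (lowerCentralSeries_one_eq_bot_of_isAddCyclic inferInstance)
  · exact hvanish (by lia) <| lowerCentralSeries_one_eq_bot_of_isAddCyclic <|
      isAddCyclic_of_prime_card (hb.trans (pow_one p))
  · refine hvanish (i := 1 + (m - 2)) (by lia) <|
      lowerCentralSeries_add_eq_bot_of_card_dvd hp (i := 1) ?_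
    rw [hcard, hb, ← Nat.sub_add_cancel hbm, pow_add] at hmul
    exact Nat.eq_of_mul_eq_mul_right (pow_pos hp.pos b) hmul ▸ pow_dvd_pow p (by lia)

end FinitePGroups

section BCHGroup

variable {k : Type*} [CommRing k] {p : ℕ} {L : Type*} [LieRing L] [LieAlgebra k L]
  {L' : Type*} [LieRing L'] [LieAlgebra k L']

/-- The type `L` with the group structure given by the Baker–Campbell–Hausdorff product. The
proofs that make it a group are arguments, so that it can be an instance. -/
def BCHGroup (_hk : UnitsBelow k p) (_hp : 2 ≤ p)
    (_hL : lowerCentralSeries k L L (p - 1) = ⊥) : Type _ := L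

namespace BCHGroup

variable {hk : UnitsBelow k p} {hp : 2 ≤ p} {hL : lowerCentralSeries k L L (p - 1) = ⊥}
  {hL' : lowerCentralSeries k L' L' (p - 1) = ⊥}

/-- The identity map from a Lie algebra to its group. -/
def of : L ≃ BCHGroup hk hp hL := Equiv.refl L

noncomputable instance : Group (BCHGroup hk hp hL) where
  mul x y := of (bch k p (of.symm x) (of.symm y))
  one := of 0
  inv x := of (-of.symm x)
  mul_assoc x y z := bch_assoc hk hp hL (of.symm x) (of.symm y) (of.symm z)
  one_mul x := zero_bch hk hp hL (of.symm x)
  mul_one x := bch_zero hk hp hL (of.symm x)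
  inv_mul_cancel x := neg_bch_self hk hp hL (of.symm x)

lemma of_bch (x y : L) : (of (bch k p x y) : BCHGroup hk hp hL) = of x * of y := rfl

lemma of_zero : (of 0 : BCHGroup hk hp hL) = 1 := rfl

lemma of_neg (x : L) : (of (-x) : BCHGroup hk hp hL) = (of x)⁻¹ := rfl

lemma of_natCast_smul (m : ℕ) (x : L) : (of ((m : k) • x) : BCHGroup hk hp hL) = of x ^ m := by
  induction m with
  | zero => rw [Nat.cast_zero, zero_smul, of_zero, pow_zero]
  | succ m ih => rw [natCast_succ_smul_eq_bch hk hp hL, of_bch, ih, pow_succ]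

/-- The group homomorphism underlying a Lie algebra homomorphism. -/
noncomputable def map (f : L →ₗ⁅k⁆ L') : BCHGroup hk hp hL →* BCHGroup hk hp hL' :=
  MonoidHom.mk' (fun x => of (f (of.symm x))) fun x y =>
    congrArg of (map_bch hk hp hL hL' f (of.symm x) (of.symm y))

lemma map_of (f : L →ₗ⁅k⁆ L') (x : L) :
    map f (of x : BCHGroup hk hp hL) = (of (f x) : BCHGroup hk hp hL') := rfl

lemma exists_lieHom (hs : Function.Surjective (Nat.cast : ℕ → k))
    (f : BCHGroup hk hp hL →* BCHGroup hk hp hL') :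
    ∃ F : L →ₗ⁅k⁆ L', ∀ x, of (F x) = f (of x) :=
  exists_lieHom_of_map_bch hk hp hs hL hL' (f := fun x => of.symm (f (of x)))
    fun x y => map_mul f (of x) (of y)

lemma nonempty_mulEquiv_iff (hs : Function.Surjective (Nat.cast : ℕ → k)) :
    Nonempty (BCHGroup hk hp hL ≃* BCHGroup hk hp hL') ↔ Nonempty (L ≃ₗ⁅k⁆ L') := by
  refine ⟨fun ⟨e⟩ => ?_, fun ⟨e⟩ => ⟨.ofBijective (map e.toLieHom) e.bijective⟩⟩
  obtain ⟨F, hF⟩ := exists_lieHom hs e.toMonoidHom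
  have hbij : Function.Bijective F := by
    have : ⇑F = of.symm ∘ e ∘ of := funext hF
    rw [this]
    exact of.symm.bijective.comp (e.bijective.comp of.bijective)
  exact ⟨.ofBijective F hbij⟩

lemma exists_representation (hs : Function.Surjective (Nat.cast : ℕ → k)) {P : Type*} [Group P]
    (θ : P →* MulAut (BCHGroup hk hp hL)) :
    ∃ ρ : Representation k P L, (∀ g x, of (ρ g x) = θ g (of x)) ∧
      ∀ g x y, ρ g ⁅x, y⁆ = ⁅ρ g x, ρ g y⁆ := by
  have hlift (g : P) : ∃ F : L →ₗ⁅k⁆ L, ∀ x, (of (F x) : BCHGroup hk hp hL) = θ g (of x) :=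
    exists_lieHom hs (θ g).toMonoidHom
  choose F hF using hlift
  have hof := (of (hk := hk) (hp := hp) (hL := hL)).injective
  refine ⟨⟨⟨fun g => (F g).toLinearMap, ?_⟩, ?_⟩, hF, fun g => (F g).map_lie⟩
  · exact LinearMap.ext fun x => hof <| by simpa using hF 1 x
  · refine fun g h => LinearMap.ext fun x => hof ?_
    have hFh : θ h (of x) = of (F h x) := (hF h x).symm
    simpa [hFh, ← hF g] using hF (g * h) x

end BCHGroup

end BCHGroup

section AugmentationFiltration

variable {k : Type*} [CommRing k] {p : ℕ} {P : Type*} [Group P]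

/-- The filtration of a representation by the powers of the augmentation ideal of the group. -/
def augmentationFiltration {K : Type*} [AddCommGroup K] [Module k K] (ρ : Representation k P K) :
    ℕ → Submodule k K
  | 0 => ⊤
  | i + 1 => Submodule.span k {x | ∃ g, ∃ a ∈ augmentationFiltration ρ i, ρ g a - a = x}

section Module

variable {K : Type*} [AddCommGroup K] [Module k K] {ρ : Representation k P K}

lemma sub_mem_augmentationFiltration (g : P) {i : ℕ} {a : K}
    (ha : a ∈ augmentationFiltration ρ i) : ρ g a - a ∈ augmentationFiltration ρ (i + 1) :=
  Submodule.subset_span ⟨g, a, ha, rfl⟩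

lemma augmentationFiltration_antitone : Antitone (augmentationFiltration ρ) := by
  refine antitone_nat_of_succ_le fun i => ?_
  induction i with
  | zero => exact le_top
  | succ i ih =>
    refine Submodule.span_mono ?_
    rintro _ ⟨g, a, ha, rfl⟩
    exact ⟨g, a, ih ha, rfl⟩

lemma apply_mem_augmentationFiltration (g : P) {i : ℕ} {a : K}
    (ha : a ∈ augmentationFiltration ρ i) : ρ g a ∈ augmentationFiltration ρ i :=
  sub_add_cancel (ρ g a) a ▸ add_mem (augmentationFiltration_antitone i.le_succ
    (sub_mem_augmentationFiltration g ha)) ha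

/-- The action of `P` on the additive group of a representation. -/
def mulAutOfRepresentation (ρ : Representation k P K) : P →* MulAut (Multiplicative K) where
  toFun g := AddEquiv.toMultiplicative
    { toFun := ρ g
      invFun := ρ g⁻¹
      left_inv := ρ.inv_self_apply g
      right_inv := ρ.self_inv_apply g
      map_add' := map_add (ρ g) }
  map_one' := MulEquiv.ext fun a => congrArg Multiplicative.ofAdd (by simp : ρ 1 a.toAdd = a.toAdd)
  map_mul' g h := MulEquiv.ext fun a =>
    congrArg Multiplicative.ofAdd (by simp : ρ (g * h) a.toAdd = ρ g (ρ h a.toAdd))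

lemma inl_mem_lowerCentralSeries_of_mem_augmentationFiltration
    (hs : Function.Surjective (Int.cast : ℤ → k)) {i : ℕ} {a : K}
    (ha : a ∈ augmentationFiltration ρ i) :
    (SemidirectProduct.inl (Multiplicative.ofAdd a) :
      Multiplicative K ⋊[mulAutOfRepresentation ρ] P) ∈ Subgroup.lowerCentralSeries ⊤ i := by
  induction i generalizing a with
  | zero => trivial
  | succ i ih =>
    induction ha using Submodule.span_induction with
    | zero =>
      rw [ofAdd_zero, map_one]
      exact one_mem _
    | add x y _ _ hx hy =>
      rw [ofAdd_add, map_mul]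
      exact mul_mem hx hy
    | smul c x _ hx =>
      obtain ⟨z, rfl⟩ := hs c
      rw [Int.cast_smul_eq_zsmul, ofAdd_zsmul, map_zpow]
      exact zpow_mem hx z
    | mem x hx =>
      obtain ⟨g, a, ha, rfl⟩ := hx
      have hcomm : (SemidirectProduct.inl (Multiplicative.ofAdd (ρ g a - a)) :
          Multiplicative K ⋊[mulAutOfRepresentation ρ] P) =
            ⁅(SemidirectProduct.inr g : Multiplicative K ⋊[mulAutOfRepresentation ρ] P),
              (SemidirectProduct.inl (Multiplicative.ofAdd a) : _ ⋊[_] P)⁆ := by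
        rw [commutatorElement_def, ← map_inv, ← SemidirectProduct.inl_aut, ← map_inv, ← map_mul,
          sub_eq_add_neg]
        rfl
      rw [hcomm, ← commutatorElement_inv]
      exact inv_mem (Subgroup.commutator_mem_commutator (ih ha) (Subgroup.mem_top _))

/-- The semidirect product of `K` by `P` is a finite `p`-group, hence nilpotent. -/
lemma augmentationFiltration_eq_bot (hp : p.Prime) (hs : Function.Surjective (Int.cast : ℤ → k))
    {m e : ℕ} (hK : Nat.card K = p ^ m) (hP : Nat.card P = p ^ e) :
    augmentationFiltration ρ m = ⊥ := by
  have : Fact p.Prime := ⟨hp⟩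
  have : Finite K := Nat.finite_of_card_ne_zero (hK ▸ pow_ne_zero _ hp.ne_zero)
  have hcard : Nat.card (Multiplicative K ⋊[mulAutOfRepresentation ρ] P) = p ^ (m + e) := by
    rw [SemidirectProduct.card, Nat.card_congr Multiplicative.toAdd, hK, hP, pow_add]
  have : Finite (Multiplicative K ⋊[mulAutOfRepresentation ρ] P) :=
    Nat.finite_of_card_ne_zero (hcard ▸ pow_ne_zero _ hp.ne_zero)
  obtain ⟨c, hc⟩ :=
    Subgroup.nilpotent_iff_lowerCentralSeries.1 (IsPGroup.of_card hcard).isNilpotent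
  refine eq_bot_of_card_dvd_pow hp augmentationFiltration_antitone
    (fun i => congrArg fun N : Submodule k K => Submodule.span k {x | ∃ g, ∃ a ∈ N, ρ g a - a = x})
    ⟨c, (Submodule.eq_bot_iff _).2 fun a ha => ?_⟩ ?_
  · have h := inl_mem_lowerCentralSeries_of_mem_augmentationFiltration hs ha
    rw [hc, Subgroup.mem_bot] at h
    exact Multiplicative.ofAdd.injective
      (SemidirectProduct.inl_injective (h.trans (map_one SemidirectProduct.inl).symm))
  · rw [← hK, augmentationFiltration, Nat.card_congr Submodule.topEquiv.toEquiv]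

end Module

/-- Induction on `i`: a bracket with `ρ g a - a` is again of the form `ρ g c - c` up to a bracket
with `a`. -/
lemma lie_mem_augmentationFiltration {K : Type*} [LieRing K] [LieAlgebra k K]
    {ρ : Representation k P K} (hk : UnitsBelow k p) (hp : 2 ≤ p)
    (hK : lowerCentralSeries k K K (p - 1) = ⊥) (hρ : ∀ g x y, ρ g ⁅x, y⁆ = ⁅ρ g x, ρ g y⁆)
    (hinner : ∀ a, ∃ g, ∀ b, ρ g b = bch k p (bch k p a b) (-a)) {i j : ℕ} {a b : K}
    (ha : a ∈ augmentationFiltration ρ i) (hb : b ∈ augmentationFiltration ρ j) :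
    ⁅a, b⁆ ∈ augmentationFiltration ρ (i + j + 1) := by
  induction i generalizing j a b with
  | zero =>
    obtain ⟨d, hd⟩ := hk.exists_isLinearCoeffWeights
    have hsum : ∑ m ∈ range p, d m • (bch k p (bch k p ((m : k) • a) b) (-((m : k) • a)) - b) =
        ⁅a, b⁆ := by
      simp only [smul_sub, sum_sub_distrib, ← sum_smul, hd.sum_eq_zero (by lia : 0 < p),
        zero_smul, sub_zero, hd.sum_smul_bch_conj hk hp hK]
    rw [← hsum]
    refine Submodule.sum_mem _ fun m _ => Submodule.smul_mem _ _ ?_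
    obtain ⟨g, hg⟩ := hinner ((m : k) • a)
    rw [← hg, zero_add]
    exact sub_mem_augmentationFiltration g hb
  | succ i ih =>
    induction ha using Submodule.span_induction with
    | zero => rw [zero_lie]; exact zero_mem _
    | add x y _ _ hx hy => rw [add_lie]; exact add_mem hx hy
    | smul c x _ hx => rw [smul_lie]; exact Submodule.smul_mem _ _ hx
    | mem x hx =>
      obtain ⟨g, a, ha, rfl⟩ := hx
      have hsplit : ⁅ρ g a - a, b⁆ =
          (ρ g ⁅a, ρ g⁻¹ b⁆ - ⁅a, ρ g⁻¹ b⁆) + ⁅a, ρ g⁻¹ b - b⁆ := by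
        rw [hρ, ρ.self_inv_apply, sub_lie, lie_sub]
        abel
      have hleft :=
        sub_mem_augmentationFiltration g (ih ha (apply_mem_augmentationFiltration g⁻¹ hb))
      have hright := ih ha (sub_mem_augmentationFiltration g⁻¹ hb)
      rw [hsplit, show i + 1 + j + 1 = i + j + 1 + 1 by ring]
      exact add_mem hleft hright

end AugmentationFiltration

section Logarithm

variable {k : Type*} [CommRing k] {p : ℕ} {K : Type*} [LieRing K] [LieAlgebra k K]

lemma lie_truncExp_natCast_smul {D : Module.End k K} {a b : K}
    (hD : ∀ i j, p ≤ i + j → ⁅(D ^ i) a, (D ^ j) b⁆ = 0) (m : ℕ) :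
    ⁅truncExp k p ((m : k) • D) a, truncExp k p ((m : k) • D) b⁆ =
      ∑ n ∈ range p, (m : k) ^ n • ∑ ij ∈ antidiagonal n,
        invFactorial k ij.1 • invFactorial k ij.2 • ⁅(D ^ ij.1) a, (D ^ ij.2) b⁆ := by
  simp only [truncExp_apply, sum_lie_sum, smul_lie, lie_smul]
  rw [sum_range_product_eq_sum_antidiagonal]
  · refine sum_congr rfl fun n _ => ?_
    rw [smul_sum]
    refine sum_congr rfl fun ij hij => ?_
    rw [← mem_antidiagonal.1 hij, pow_add]
    simp only [_root_.smul_pow, LinearMap.smul_apply, smul_lie, lie_smul, smul_smul]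
    ring_nf
  · intro i j hij
    simp [_root_.smul_pow, hD i j hij]

lemma lie_leibniz_of_truncExp_lie (hk : UnitsBelow k p) (hp : 2 ≤ p) {D : Module.End k K}
    {a b : K} (hD : ∀ i j, p ≤ i + j → ⁅(D ^ i) a, (D ^ j) b⁆ = 0)
    (hexp : ∀ m : ℕ, truncExp k p ((m : k) • D) ⁅a, b⁆ =
      ⁅truncExp k p ((m : k) • D) a, truncExp k p ((m : k) • D) b⁆) :
    D ⁅a, b⁆ = ⁅D a, b⁆ + ⁅a, D b⁆ := by
  obtain ⟨d, hd⟩ := hk.exists_isLinearCoeffWeights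
  calc D ⁅a, b⁆ = ∑ m ∈ range p, d m • truncExp k p ((m : k) • D) ⁅a, b⁆ := by
        simpa using (LinearMap.congr_fun (hd.sum_smul_truncExp hp D) ⁅a, b⁆).symm
    _ = ⁅D a, b⁆ + ⁅a, D b⁆ := by
        simp only [hexp, lie_truncExp_natCast_smul hD]
        rw [hd.sum_smul_sum_pow_smul hp]
        simp [Nat.antidiagonal_succ, add_comm]

variable {A : ℕ → Submodule k K}

/-- The derivation is the logarithm of the automorphism `σ`. -/
lemma exists_lieDerivation_of_lieHom (hk : UnitsBelow k p) (hp : 2 ≤ p) (hA : Antitone A)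
    (h0 : A 0 = ⊤) (hbot : A p = ⊥)
    (hlie : ∀ {i j a b}, a ∈ A i → b ∈ A j → ⁅a, b⁆ ∈ A (i + j + 1)) {σ : K →ₗ⁅k⁆ K}
    (hσ : σ.toLinearMap - 1 ∈ endFiltration A 1) :
    ∃ D : LieDerivation k K K, D.toLinearMap ∈ endFiltration A 1 ∧
      ∀ m : ℕ, truncExp k p ((m : k) • D.toLinearMap) = σ.toLinearMap ^ m := by
  have hF := isMulFiltration_endFiltration hA
  have hFbot := endFiltration_eq_bot h0 hbot
  obtain ⟨D, ⟨hD, hDσ⟩, -⟩ := hF.existsUnique_truncExp_eq_one_add (k := k) hFbot hp hσ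
  have hexp (m : ℕ) : truncExp k p ((m : k) • D) = σ.toLinearMap ^ m := by
    rw [hF.truncExp_natCast_smul hFbot hk (by lia) hD, hDσ, add_sub_cancel]
  have hmem (i : ℕ) (a : K) : (D ^ i) a ∈ A i := by
    simpa using hF.pow_mem hD i 0 a (h0 ▸ Submodule.mem_top)
  have hleibniz (a b : K) : D ⁅a, b⁆ = ⁅D a, b⁆ + ⁅a, D b⁆ := by
    refine lie_leibniz_of_truncExp_lie hk hp (fun i j hij => ?_) fun m => ?_
    · simpa [hbot] using hA (by lia : p ≤ i + j + 1) (hlie (hmem i a) (hmem j b))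
    · rw [hexp]
      induction m with
      | zero => simp
      | succ m ih => simp only [pow_succ', Module.End.mul_apply, ih, LieHom.coe_toLinearMap,
          LieHom.map_lie]
  refine ⟨⟨D, fun a b => ?_⟩, hD, hexp⟩
  rw [hleibniz, ← lie_skew b, sub_neg_eq_add, add_comm]

lemma truncExp_natCast_smul_fixed (hk : UnitsBelow k p) (hp : 2 ≤ p) {D σ : Module.End k K}
    (hexp : ∀ m : ℕ, truncExp k p ((m : k) • D) = σ ^ m) {u : K} (hu : σ u = u) : D u = 0 := by
  obtain ⟨d, hd⟩ := hk.exists_isLinearCoeffWeights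
  have hfix (m : ℕ) : (σ ^ m) u = u := by
    rw [Module.End.pow_apply]
    exact Function.iterate_fixed hu m
  have hDu := LinearMap.congr_fun (hd.sum_smul_truncExp hp D) u
  simpa [hexp, hfix, ← sum_smul, hd.sum_eq_zero (by lia)] using hDu.symm

end Logarithm

section CyclicExtension

variable {k : Type*} [CommRing k] {p : ℕ}

lemma truncExp_comp_of_comp {V W : Type*} [AddCommGroup V] [Module k V] [AddCommGroup W]
    [Module k W] {f : V →ₗ[k] W} {a : Module.End k V} {b : Module.End k W}
    (h : b ∘ₗ f = f ∘ₗ a) (v : V) : truncExp k p b (f v) = f (truncExp k p a v) := by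
  simp only [truncExp_apply, map_sum, map_smul]
  exact sum_congr rfl fun i _ =>
    congrArg _ (LinearMap.congr_fun (Module.End.commute_pow_left_of_commute h i) v)

lemma exists_monoidHom_of_bijective_mul {G N H P : Type*} [Group G] [Group N] [Group H] [Group P]
    {ι : N →* G} {τ : H →* G} (hbij : Function.Bijective fun nh : N × H => ι nh.1 * τ nh.2)
    {φ : N →* P} {χ : H →* P}
    (hconj : ∀ h n, ∃ n', τ h * ι n * (τ h)⁻¹ = ι n' ∧ χ h * φ n * (χ h)⁻¹ = φ n') :
    ∃ ψ : G →* P, ∀ n h, ψ (ι n * τ h) = φ n * χ h := by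
  let e := Equiv.ofBijective _ hbij
  have he (n : N) (h : H) : e.symm (ι n * τ h) = (n, h) := e.symm_apply_apply (n, h)
  refine ⟨MonoidHom.mk' (fun g => φ (e.symm g).1 * χ (e.symm g).2) fun g g' => ?_, fun n h => ?_⟩
  · obtain ⟨⟨n, h⟩, rfl⟩ := e.surjective g
    obtain ⟨⟨m, l⟩, rfl⟩ := e.surjective g'
    obtain ⟨n', hτ, hχ⟩ := hconj h m
    have hmul : e (n, h) * e (m, l) = ι (n * n') * τ (h * l) := by
      rw [map_mul, map_mul, ← hτ]
      simp [e, mul_assoc]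
    rw [hmul, he, e.symm_apply_apply, e.symm_apply_apply, map_mul, map_mul, ← hχ]
    group
  · simp [he]

section DerivationExtension

variable {K : Type*} [LieRing K] [LieAlgebra k K]

lemma lowerCentralSeries_derivationExtension_le {A : ℕ → Submodule k K} (h0 : A 0 = ⊤)
    (hlie : ∀ {i j a b}, a ∈ A i → b ∈ A j → ⁅a, b⁆ ∈ A (i + j + 1)) {D : LieDerivation k K K}
    (hD : D.toLinearMap ∈ endFiltration A 1) (i : ℕ) :
    (lowerCentralSeries k (DerivationExtension D) (DerivationExtension D) i).toSubmodule ≤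
      derivationFiltration D A i := by
  refine lowerCentralSeries_le_of_lie_mem (N := derivationFiltration D A) rfl (fun i x y hy => ?_) i
  have hmem (a : K) : a ∈ A 0 := h0 ▸ Submodule.mem_top
  cases i with
  | zero =>
    rw [DerivationExtension.lie_eq_mk]
    exact ⟨_, sub_mem (add_mem (hlie (hmem _) (hmem _)) (Submodule.smul_mem _ _ (hD 0 _ (hmem _))))
      (Submodule.smul_mem _ _ (hD 0 _ (hmem _))), rfl⟩
  | succ i =>
    obtain ⟨y, hy, rfl⟩ := hy
    refine ⟨⁅x.left, y⁆ + x.right • D y, add_mem ?_ (Submodule.smul_mem _ _ (hD _ _ hy)), ?_⟩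
    · simpa using hlie (hmem x.left) hy
    · simp [derivationHom_apply]

variable {D : LieDerivation k K K} {hk : UnitsBelow k p} {hp : 2 ≤ p}
  {hK : lowerCentralSeries k K K (p - 1) = ⊥}
  {hDK : lowerCentralSeries k (DerivationExtension D) (DerivationExtension D) (p - 1) = ⊥}

namespace DerivationExtension

variable (D) in
/-- The line in the extension by a derivation that acts by multiples of the derivation. -/
abbrev inr : k →ₗ⁅k⁆ DerivationExtension D :=
  SemiDirectSum.inr (derivationHom D)

lemma right_bch (hk : UnitsBelow k p) (hp : 2 ≤ p)
    (hDK : lowerCentralSeries k (DerivationExtension D) (DerivationExtension D) (p - 1) = ⊥)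
    (s t : DerivationExtension D) : (bch k p s t).right = s.right + t.right := by
  have hk0 : lowerCentralSeries k k k (p - 1) = ⊥ := by
    have h1 := (trivial_iff_lower_central_eq_bot k k k).1
      (isMulCommutative_iff_isLieAbelian.1 inferInstance)
    exact eq_bot_iff.2 (h1 ▸ antitone_lowerCentralSeries k k k (by lia))
  exact (map_bch hk hp hDK hk0 (SemiDirectSum.projr (derivationHom D)) s t).trans
    (bch_eq_add_of_lie_eq_zero hk hp hk0 (commute_iff_lie_eq.1 (Commute.all _ _)))

lemma truncExp_ad_inr (c : k) (b : K) :
    truncExp k p (ad k (DerivationExtension D) (inr D c)) (inl D b) =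
      inl D (truncExp k p (c • D.toLinearMap) b) :=
  truncExp_comp_of_comp (f := (inl D).toLinearMap)
    (LinearMap.ext fun b => by simp [derivationHom_apply]) b

end DerivationExtension

open DerivationExtension

namespace BCHGroup

/-- The one-parameter subgroup of the added element of an extension by a derivation. -/
noncomputable def ofInr (D : LieDerivation k K K) (hk : UnitsBelow k p) (hp : 2 ≤ p)
    (hDK : lowerCentralSeries k (DerivationExtension D) (DerivationExtension D) (p - 1) = ⊥) :
    Multiplicative k →* BCHGroup hk hp hDK :=
  MonoidHom.mk' (fun c => of (inr D c.toAdd)) fun c c' => by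
    rw [toAdd_mul, map_add, ← of_bch, bch_eq_add_of_lie_eq_zero hk hp hDK]
    rw [← LieHom.map_lie, (commute_iff_lie_eq.1 (Commute.all _ _) : ⁅c.toAdd, c'.toAdd⁆ = 0),
      map_zero]

lemma ofInr_ofAdd (c : k) :
    ofInr D hk hp hDK (Multiplicative.ofAdd c) = of (inr D c) := rfl

lemma bijective_map_inl_mul_ofInr :
    Function.Bijective fun bc : BCHGroup hk hp hK × Multiplicative k =>
      (map (inl D) bc.1 : BCHGroup hk hp hDK) * ofInr D hk hp hDK bc.2 := by
  have hright (b : K) (c : k) : (bch k p (inl D b) (inr D c)).right = c := by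
    simp [right_bch hk hp hDK]
  constructor
  · rintro ⟨b, c⟩ ⟨b', c'⟩ h
    have hc : c = c' := (hright (of.symm b) c).symm.trans
      ((congrArg (fun s => (of.symm s).right) h).trans (hright (of.symm b') c'))
    subst hc
    have hinl : (map (inl D) b : BCHGroup hk hp hDK) = map (inl D) b' := mul_right_cancel h
    rw [of.symm.injective (SemiDirectSum.inl_injective _ (congrArg of.symm hinl))]
  · intro s
    obtain ⟨s, rfl⟩ := of.surjective s
    have hs : inl D (bch k p s (-inr D s.right)).left = bch k p s (-inr D s.right) :=
      SemiDirectSum.ext rfl (by simp [right_bch hk hp hDK])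
    refine ⟨(of (bch k p s (-inr D s.right)).left, .ofAdd s.right), ?_⟩
    simp only [map_of, hs, ofInr_ofAdd, of_bch, of_neg, inv_mul_cancel_right]

lemma exists_monoidHom_derivationExtension {P : Type*} [Group P] {φ : BCHGroup hk hp hK →* P}
    {χ : Multiplicative k →* P}
    (hχ : ∀ c b, φ (of (truncExp k p (c • D.toLinearMap) b)) =
      χ (.ofAdd c) * φ (of b) * (χ (.ofAdd c))⁻¹) :
    ∃ ψ : BCHGroup hk hp hDK →* P, ∀ b c, ψ (map (inl D) (of b : BCHGroup hk hp hK) *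
      ofInr D hk hp hDK (.ofAdd c)) = φ (of b) * χ (.ofAdd c) := by
  have hconj (c : Multiplicative k) (b : BCHGroup hk hp hK) :
      ofInr D hk hp hDK c * map (inl D) b * (ofInr D hk hp hDK c)⁻¹ =
        map (inl D) (of (truncExp k p (c.toAdd • D.toLinearMap) (of.symm b)) :
          BCHGroup hk hp hK) := by
    rw [map_of, ← truncExp_ad_inr, ← bch_bch_neg hk hp hDK]
    rfl
  obtain ⟨ψ, hψ⟩ := exists_monoidHom_of_bijective_mul
    (bijective_map_inl_mul_ofInr (hK := hK) (hDK := hDK)) (φ := φ) (χ := χ)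
    fun c b => ⟨_, hconj c b, (hχ c.toAdd (of.symm b)).symm⟩
  exact ⟨ψ, fun b c => hψ (of b) (.ofAdd c)⟩

end BCHGroup

end DerivationExtension

end CyclicExtension

section CyclicExtensionQuotient

universe u

variable {k : Type u} [CommRing k] {p : ℕ}

/-- The groups that arise from a nilpotent Lie algebra over `k` of class less than `p` by the
Baker–Campbell–Hausdorff product. -/
def IsBCHGroup (hk : UnitsBelow k p) (hp : 2 ≤ p) (P : Type*) [Group P] : Prop :=
  ∃ (L : Type u) (_ : LieRing L) (_ : LieAlgebra k L)
    (hL : lowerCentralSeries k L L (p - 1) = ⊥), Nonempty (BCHGroup hk hp hL ≃* P)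

variable {hk : UnitsBelow k p} {hp : 2 ≤ p} {P : Type*} [Group P]

/-- The projection to a quotient as a homomorphism of Lie algebras; the library has it as a
homomorphism of Lie modules. -/
def lieQuotientMk {M : Type*} [LieRing M] [LieAlgebra k M] (I : LieIdeal k M) : M →ₗ⁅k⁆ M ⧸ I where
  toLinearMap := I.toSubmodule.mkQ
  map_lie' := rfl

lemma lieQuotientMk_eq_zero {M : Type*} [LieRing M] [LieAlgebra k M] {I : LieIdeal k M} {x : M} :
    lieQuotientMk I x = 0 ↔ x ∈ I :=
  LieSubmodule.Quotient.mk_eq_zero'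

lemma lieQuotientMk_surjective {M : Type*} [LieRing M] [LieAlgebra k M] (I : LieIdeal k M) :
    Function.Surjective (lieQuotientMk I) :=
  I.toSubmodule.mkQ_surjective

lemma lowerCentralSeries_quotient_eq_bot {M : Type*} [LieRing M] [LieAlgebra k M] {i : ℕ}
    (hM : lowerCentralSeries k M M i = ⊥) (I : LieIdeal k M) :
    lowerCentralSeries k (M ⧸ I) (M ⧸ I) i = ⊥ := by
  rw [← LieIdeal.lowerCentralSeries_map_eq _ (lieQuotientMk_surjective I), hM]
  exact LieIdeal.map_eq_bot_iff.2 bot_le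

lemma isBCHGroup_of_ker_eq_lieIdeal {M : Type u} [LieRing M] [LieAlgebra k M]
    {hM : lowerCentralSeries k M M (p - 1) = ⊥} {ψ : BCHGroup hk hp hM →* P}
    (hψ : Function.Surjective ψ) (I : LieIdeal k M) (hI : ∀ s, ψ (.of s) = 1 ↔ s ∈ I) :
    IsBCHGroup hk hp P := by
  let π : BCHGroup hk hp hM →* BCHGroup hk hp (lowerCentralSeries_quotient_eq_bot hM I) :=
    BCHGroup.map (lieQuotientMk I)
  have hπ : Function.Surjective π := lieQuotientMk_surjective I
  have hker : π.ker = ψ.ker := by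
    ext s
    exact lieQuotientMk_eq_zero.trans (hI (BCHGroup.of.symm s)).symm
  exact ⟨M ⧸ I, inferInstance, inferInstance, lowerCentralSeries_quotient_eq_bot hM I,
    ⟨(QuotientGroup.quotientKerEquivOfSurjective π hπ).symm.trans
      ((QuotientGroup.quotientMulEquivOfEq hker).trans
        (QuotientGroup.quotientKerEquivOfSurjective ψ hψ))⟩⟩

lemma isBCHGroup_of_ker_eq_span {M : Type u} [LieRing M] [LieAlgebra k M]
    {hM : lowerCentralSeries k M M (p - 1) = ⊥} {ψ : BCHGroup hk hp hM →* P}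
    (hψ : Function.Surjective ψ) {z : M} (hz : ∀ s : M, ⁅s, z⁆ = 0)
    (hker : ∀ s, ψ (.of s) = 1 ↔ ∃ r : k, r • z = s) : IsBCHGroup hk hp P :=
  isBCHGroup_of_ker_eq_lieIdeal hψ
    { toSubmodule := Submodule.span k {z}
      lie_mem := fun {s m} hm => by
        obtain ⟨r, rfl⟩ := Submodule.mem_span_singleton.1 hm
        simp [hz] }
    fun s => (hker s).trans Submodule.mem_span_singleton.symm

open DerivationExtension BCHGroup

variable {K : Type u} [LieRing K] [LieAlgebra k K] {hK : lowerCentralSeries k K K (p - 1) = ⊥}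

lemma lie_inr_sub_inl {D : LieDerivation k K K} {c : k} {u : K} (hDu : D u = 0)
    (hD : ∀ b, c • D b = ⁅u, b⁆) (s : DerivationExtension D) :
    ⁅s, inr D c - inl D u⁆ = 0 := by
  rw [DerivationExtension.lie_eq_mk]
  simp [hDu, hD]

lemma of_smul_inr_sub_inl {D : LieDerivation k K K}
    {hDK : lowerCentralSeries k (DerivationExtension D) (DerivationExtension D) (p - 1) = ⊥}
    {c : k} {u : K} (hDu : D u = 0) (r : k) :
    (of (r • (inr D c - inl D u)) : BCHGroup hk hp hDK) =
      map (inl D) (of (-(r • u)) : BCHGroup hk hp hK) * ofInr D hk hp hDK (.ofAdd (r * c)) := by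
  rw [map_of, ofInr_ofAdd, ← of_bch, bch_eq_add_of_lie_eq_zero hk hp hDK]
  · rw [smul_sub, sub_eq_neg_add, map_neg, map_smul, ← smul_eq_mul, map_smul]
  · simp [derivationHom_apply, hDu]

/-- The Lie algebra is the quotient of the extension of `K` by `D` that identifies `u` with `p`
times the added element. -/
lemma isBCHGroup_of_derivation (hs : Function.Surjective (Nat.cast : ℕ → k))
    {D : LieDerivation k K K}
    (hDK : lowerCentralSeries k (DerivationExtension D) (DerivationExtension D) (p - 1) = ⊥)
    {φ : BCHGroup hk hp hK →* P} (hφ : Function.Injective φ) {χ : Multiplicative k →* P}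
    (hgen : ∀ g, ∃ b c, φ (of b) * χ (.ofAdd c) = g)
    (hdvd : ∀ b c, φ b = χ (.ofAdd c) → (p : k) ∣ c)
    (hχ : ∀ c b, φ (of (truncExp k p (c • D.toLinearMap) b)) =
      χ (.ofAdd c) * φ (of b) * (χ (.ofAdd c))⁻¹)
    {u : K} (hu : φ (of u) = χ (.ofAdd (p : k))) (hDu : D u = 0)
    (hD : ∀ b, (p : k) • D b = ⁅u, b⁆) : IsBCHGroup hk hp P := by
  obtain ⟨ψ, hψ⟩ := exists_monoidHom_derivationExtension (hDK := hDK) hχ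
  have hψ_surj : Function.Surjective ψ := fun g => by
    obtain ⟨b, c, rfl⟩ := hgen g
    exact ⟨_, hψ b c⟩
  have hru (r : k) : φ (of (r • u)) = χ (.ofAdd (r * p)) := by
    obtain ⟨m, rfl⟩ := hs r
    rw [of_natCast_smul, map_pow, hu, ← map_pow, ← ofAdd_nsmul, nsmul_eq_mul]
  refine isBCHGroup_of_ker_eq_span hψ_surj (lie_inr_sub_inl hDu hD) fun s => ⟨fun hψs => ?_, ?_⟩
  · obtain ⟨⟨b, c⟩, hbc⟩ := (bijective_map_inl_mul_ofInr (hK := hK) (hDK := hDK)).2 (of s)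
    obtain ⟨b, rfl⟩ := of.surjective b
    obtain ⟨c, rfl⟩ := Multiplicative.ofAdd.surjective c
    have hbc' : φ (of (-b)) = χ (.ofAdd c) := by
      rw [← hbc, hψ] at hψs
      rw [of_neg, map_inv, inv_eq_of_mul_eq_one_right hψs]
    obtain ⟨r, rfl⟩ := hdvd _ _ hbc'
    have hof_inj := (of (hk := hk) (hp := hp) (hL := hDK)).injective
    refine ⟨r, hof_inj ((of_smul_inr_sub_inl (hK := hK) hDu r).trans ?_)⟩
    rw [mul_comm, ← hru] at hbc'
    rw [← of.injective (hφ hbc'), neg_neg, mul_comm r]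
    exact hbc
  · rintro ⟨r, rfl⟩
    rw [of_smul_inr_sub_inl (hK := hK) hDu, hψ, of_neg, map_inv, hru, inv_mul_cancel]

/-- The derivation of `K` is the logarithm of the action of `χ 1`. -/
theorem isBCHGroup_of_representation (hs : Function.Surjective (Nat.cast : ℕ → k))
    {φ : BCHGroup hk hp hK →* P} (hφ : Function.Injective φ) {χ : Multiplicative k →* P}
    (hgen : ∀ g, ∃ b c, φ (of b) * χ (.ofAdd c) = g)
    (hdvd : ∀ b c, φ b = χ (.ofAdd c) → (p : k) ∣ c)
    {u : K} (hu : φ (of u) = χ (.ofAdd (p : k))) {ρ : Representation k P K}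
    (hφρ : ∀ g b, φ (of (ρ g b)) = g * φ (of b) * g⁻¹)
    (hρ : ∀ g x y, ρ g ⁅x, y⁆ = ⁅ρ g x, ρ g y⁆)
    (hbot : augmentationFiltration ρ (p - 1) = ⊥) : IsBCHGroup hk hp P := by
  have hA : Antitone (augmentationFiltration ρ) := augmentationFiltration_antitone
  have hApbot : augmentationFiltration ρ p = ⊥ := eq_bot_iff.2 (hbot ▸ hA (by lia))
  have hF := isMulFiltration_endFiltration hA
  have hof_inj := (of (hk := hk) (hp := hp) (hL := hK)).injective
  have hρφ (a b : K) : ρ (φ (of a)) b = bch k p (bch k p a b) (-a) :=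
    hof_inj (hφ (by rw [hφρ, of_bch, of_bch, of_neg, map_mul, map_mul, map_inv]))
  have hlie {i j a b} := lie_mem_augmentationFiltration (i := i) (j := j) (a := a) (b := b)
    hk hp hK hρ fun a => ⟨φ (of a), hρφ a⟩
  obtain ⟨D, hDA, hD⟩ := exists_lieDerivation_of_lieHom hk hp hA rfl hApbot hlie
    (σ := { toLinearMap := ρ (χ (.ofAdd 1)), map_lie' := hρ _ _ _ })
    fun i a ha => sub_mem_augmentationFiltration _ ha
  have hexp (m : ℕ) : truncExp k p ((m : k) • D.toLinearMap) = ρ (χ (.ofAdd (m : k))) := by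
    rw [hD, ← nsmul_one m, ofAdd_nsmul, map_pow, map_pow]
  have hDK : lowerCentralSeries k (DerivationExtension D) (DerivationExtension D) (p - 1) = ⊥ := by
    obtain ⟨q, rfl⟩ := Nat.exists_eq_add_of_le' hp
    rw [← LieSubmodule.toSubmodule_eq_bot, eq_bot_iff]
    refine (lowerCentralSeries_derivationExtension_le rfl hlie hDA _).trans ?_
    exact (congrArg (Submodule.map _) hbot).trans (Submodule.map_bot _) |>.le
  refine isBCHGroup_of_derivation hs hDK hφ hgen hdvd (fun c b => ?_) hu
    (truncExp_natCast_smul_fixed hk hp hD (hof_inj (hφ ?_))) fun b => ?_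
  · obtain ⟨m, rfl⟩ := hs c
    rw [hexp, hφρ]
  · refine (hφρ _ _).trans ?_
    rw [hu, ← map_mul, mul_comm, map_mul, mul_inv_cancel_right]
  · have hpD : (p : k) • D.toLinearMap = ad k K u := by
      refine hF.injOn_truncExp (endFiltration_eq_bot rfl hApbot) hp (Submodule.smul_mem _ _ hDA)
        (fun i b hb => ?_) (LinearMap.ext fun b => ?_)
      · simpa [zero_add] using hlie (i := 0) (a := u) trivial hb
      · rw [hexp, ← hu, hρφ, bch_bch_neg hk hp hK]
    exact LinearMap.congr_fun hpD b

end CyclicExtensionQuotient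

section PrimePowerOrder

lemma unitsBelow_zmod {p : ℕ} (hp : p.Prime) (N : ℕ) : UnitsBelow (ZMod (p ^ N)) p := fun i h0 hi =>
  (ZMod.isUnit_iff_coprime i _).2
    ((hp.coprime_iff_not_dvd.2 (Nat.not_dvd_of_pos_of_lt h0 hi)).symm.pow_right N)

lemma zmod_natCast_surjective {p : ℕ} (hp : p.Prime) (N : ℕ) :
    Function.Surjective (Nat.cast : ℕ → ZMod (p ^ N)) :=
  have : NeZero (p ^ N) := ⟨pow_ne_zero _ hp.ne_zero⟩
  ZMod.natCast_zmod_surjective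

lemma exists_monoidHom_zmod {P : Type*} [Group P] {n : ℕ} {x : P} (hx : x ^ n = 1) :
    ∃ χ : Multiplicative (ZMod n) →* P, ∀ i : ℕ, χ (.ofAdd (i : ZMod n)) = x ^ i := by
  have hf : zmultiplesHom _ (Additive.ofMul x) (n : ℤ) = 0 := by
    rw [zmultiplesHom_apply, natCast_zsmul, ← ofMul_pow, hx, ofMul_one]
  refine ⟨AddMonoidHom.toMultiplicativeLeft (ZMod.lift n ⟨_, hf⟩), fun i => ?_⟩
  exact congrArg Additive.toMul <| (congrArg _ (Int.cast_natCast i).symm).trans <|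
    (ZMod.lift_coe n ⟨_, hf⟩ i).trans (natCast_zsmul _ i)

lemma exists_normal_subgroup_card_pow {p : ℕ} (hp : p.Prime) {P : Type*} [Group P] {m : ℕ}
    (hP : Nat.card P = p ^ (m + 1)) :
    ∃ H : Subgroup P, H.Normal ∧ Nat.card H = p ^ m ∧ H.index = p := by
  have : Fact p.Prime := ⟨hp⟩
  have : Finite P := Nat.finite_of_card_ne_zero (hP ▸ pow_ne_zero _ hp.ne_zero)
  obtain ⟨H, hH⟩ := Sylow.exists_subgroup_card_pow_prime (G := P) p (n := m)
    (hP ▸ pow_dvd_pow _ m.le_succ)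
  have hindex : H.index = p := by
    refine Nat.eq_of_mul_eq_mul_left (pow_pos hp.pos m) ?_
    rw [← hH, H.card_mul_index, hH, hP, pow_succ]
  refine ⟨H, Subgroup.normal_of_index_eq_minFac_card ?_, hH, hindex⟩
  rw [hindex, hP, hp.pow_minFac m.succ_ne_zero]

lemma exists_generator_of_index_prime {p : ℕ} (hp : p.Prime) {P : Type*} [Group P] {H : Subgroup P}
    [H.Normal] (hH : H.index = p) :
    ∃ x, x ^ p ∈ H ∧ (∀ g, ∃ i : ℕ, g * (x ^ i)⁻¹ ∈ H) ∧ ∀ i : ℕ, x ^ i ∈ H → p ∣ i := by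
  have : Fact p.Prime := ⟨hp⟩
  have hcard : Nat.card (P ⧸ H) = p := by rw [← Subgroup.index_eq_card, hH]
  obtain ⟨x, -, hx⟩ := SetLike.exists_of_lt
    (lt_top_iff_ne_top.2 fun h => hp.ne_one (hH ▸ Subgroup.index_eq_one.2 h))
  have hx1 : (x : P ⧸ H) ≠ 1 := fun h => hx ((QuotientGroup.eq_one_iff x).1 h)
  have hxp : (x : P ⧸ H) ^ p = 1 := hcard ▸ pow_card_eq_one'
  refine ⟨x, (QuotientGroup.eq_one_iff _).1 hxp, fun g => ?_, fun i hi => ?_⟩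
  · obtain ⟨i, hi⟩ := mem_powers_of_prime_card hcard hx1 (g' := (g : P ⧸ H))
    refine ⟨i, (QuotientGroup.eq_one_iff _).1 ?_⟩
    rw [QuotientGroup.mk_mul, QuotientGroup.mk_inv, QuotientGroup.mk_pow, ← hi, mul_inv_cancel]
  · rw [← orderOf_eq_prime hxp hx1, orderOf_dvd_iff_pow_eq_one]
    exact (QuotientGroup.eq_one_iff _).2 hi

lemma isBCHGroup_of_normal_subgroup {p : ℕ} (hp : p.Prime) {N m : ℕ} (hmN : m < N) (hmp : m < p)
    {P : Type*} [Group P] (hP : Nat.card P = p ^ (m + 1)) {H : Subgroup P} [H.Normal]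
    (hcard : Nat.card H = p ^ m) (hindex : H.index = p)
    (hH : IsBCHGroup (unitsBelow_zmod hp N) hp.two_le H) :
    IsBCHGroup (unitsBelow_zmod hp N) hp.two_le P := by
  obtain ⟨K, _, _, hK, ⟨e⟩⟩ := hH
  have hs := zmod_natCast_surjective hp N
  obtain ⟨x, hxp, hgen, hdvd⟩ := exists_generator_of_index_prime hp hindex
  obtain ⟨χ, hχ⟩ := exists_monoidHom_zmod (n := p ^ N) (x := x) <| orderOf_dvd_iff_pow_eq_one.1 <|
    (orderOf_dvd_natCard x).trans (hP ▸ pow_dvd_pow p hmN)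
  obtain ⟨ρ, hρe, hρ⟩ := BCHGroup.exists_representation hs
    ((MulAut.congr e.symm).toMonoidHom.comp (MulAut.conjNormal (H := H)))
  obtain ⟨u, hu⟩ := (BCHGroup.of.trans e.toEquiv).surjective ⟨x ^ p, hxp⟩
  have hK_card : Nat.card K = p ^ m :=
    (Nat.card_congr (BCHGroup.of.trans e.toEquiv)).trans hcard
  refine isBCHGroup_of_representation hs (φ := H.subtype.comp e.toMonoidHom)
    (H.subtype_injective.comp e.injective) (χ := χ) (fun g => ?_) (fun b c hbc => ?_)
    (u := u) ?_ (ρ := ρ) (fun g b => ?_) hρ ?_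
  · obtain ⟨i, hi⟩ := hgen g
    refine ⟨BCHGroup.of.symm (e.symm ⟨_, hi⟩), i, ?_⟩
    simp [hχ]
  · obtain ⟨i, rfl⟩ := hs c
    rw [hχ] at hbc
    exact Nat.cast_dvd_cast (hdvd i (hbc ▸ (e b).2))
  · rw [hχ]
    exact congrArg Subtype.val hu
  · simp [hρe]
  · exact eq_bot_iff.2 ((augmentationFiltration_antitone (by lia)).trans
      (augmentationFiltration_eq_bot hp ZMod.intCast_surjective hK_card hP).le)

lemma isBCHGroup_of_subsingleton {k : Type*} [CommRing k] {p : ℕ} {hk : UnitsBelow k p}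
    {hp : 2 ≤ p} {P : Type*} [Group P] [Subsingleton P] : IsBCHGroup hk hp P := by
  let : LieRing PUnit :=
    { bracket := 0, add_lie := by simp, lie_add := by simp, lie_self := by simp,
      leibniz_lie := by simp }
  let : LieAlgebra k PUnit := { lie_smul := by simp }
  have h0 : lowerCentralSeries k PUnit PUnit (p - 1) = ⊥ := Subsingleton.elim _ _
  exact ⟨PUnit, _, _, h0, ⟨MulEquiv.ofBijective (1 : BCHGroup hk hp h0 →* P)
    ⟨fun _ _ _ => rfl, fun _ => ⟨1, Subsingleton.elim _ _⟩⟩⟩⟩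

theorem isBCHGroup_of_card {p : ℕ} (hp : p.Prime) {N m : ℕ} (hmN : m ≤ N) (hmp : m ≤ p)
    {P : Type*} [Group P] (hP : Nat.card P = p ^ m) :
    IsBCHGroup (unitsBelow_zmod hp N) hp.two_le P := by
  induction m generalizing P with
  | zero =>
    have : Subsingleton P := (Nat.card_eq_one_iff_unique.1 hP).1
    exact isBCHGroup_of_subsingleton
  | succ m ih =>
    obtain ⟨H, _, hcard, hindex⟩ := exists_normal_subgroup_card_pow hp hP
    exact isBCHGroup_of_normal_subgroup hp hmN hmp hP hcard hindex
      (ih (by lia) (by lia) hcard)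

end PrimePowerOrder

section DerivedExponent

open BCHGroup

variable {k : Type*} [CommRing k] {p : ℕ} {hk : UnitsBelow k p} {hp : 2 ≤ p}
  {L : Type*} [LieRing L] [LieAlgebra k L] {hL : lowerCentralSeries k L L (p - 1) = ⊥}

lemma of_symm_commutatorElement_mem (g h : BCHGroup hk hp hL) :
    of.symm ⁅g, h⁆ ∈ lowerCentralSeries k L L 1 := by
  have hmul (g h : BCHGroup hk hp hL) :
      of.symm (g * h) - (of.symm g + of.symm h) ∈ lowerCentralSeries k L L 1 :=
    bch_sub_add_mem hk hp hL (of.symm g) (of.symm h)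
  have hcomm : ⁅g, h⁆ * (h * g) = g * h := by rw [commutatorElement_def]; group
  have h1 := sub_mem (sub_mem (hmul g h) (hmul h g)) (hmul ⁅g, h⁆ (h * g))
  rw [hcomm] at h1
  convert h1 using 1
  abel

lemma lie_mem_of_commutatorElement_mem {I : LieIdeal k L} {g h : BCHGroup hk hp hL}
    (hgh : of.symm ⁅g, h⁆ ∈ I) : ⁅of.symm g, of.symm h⁆ ∈ I := by
  have hI := lowerCentralSeries_quotient_eq_bot hL I
  have hmap : map (lieQuotientMk I) ⁅g, h⁆ = (1 : BCHGroup hk hp hI) :=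
    lieQuotientMk_eq_zero.2 hgh
  rw [map_commutatorElement, commutatorElement_eq_one_iff_mul_comm] at hmap
  rw [← lieQuotientMk_eq_zero, LieHom.map_lie]
  exact lie_eq_zero_of_bch_comm hk hp hI hmap

/-- Modulo the ideal of elements killed by `p`, each of the conditions means commutativity. -/
theorem commutatorElement_pow_eq_one_iff :
    (∀ g h : BCHGroup hk hp hL, ⁅g, h⁆ ^ p = 1) ↔ ∀ a b : L, (p : k) • ⁅a, b⁆ = 0 := by
  let I : LieIdeal k L := ((p : k) • (LieModuleHom.id : L →ₗ⁅k, L⁆ L)).ker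
  have hI (x : L) : x ∈ I ↔ (p : k) • x = 0 := LieModuleHom.mem_ker
  have hpow (g : BCHGroup hk hp hL) : g ^ p = 1 ↔ of.symm g ∈ I := by
    rw [hI, ← of.injective.eq_iff (f := (of : L → BCHGroup hk hp hL)), of_natCast_smul,
      BCHGroup.of_zero, Equiv.apply_symm_apply]
  refine ⟨fun h a b => (hI _).1 (lie_mem_of_commutatorElement_mem ((hpow _).1 (h (of a) (of b)))),
    fun h g h' => (hpow _).2 ?_⟩
  have hle : lowerCentralSeries k L L 1 ≤ I := by
    rw [LieModule.lowerCentralSeries_succ, LieSubmodule.lie_le_iff]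
    exact fun a _ b _ => (hI _).2 (h a b)
  exact hle (of_symm_commutatorElement_mem g h')

end DerivedExponent

/-! ### Linear algebra modulo powers of a uniformizer -/

section CyclicSum

/-- The linear map through which `g` factors along a surjection `f` whose kernel `g` kills. -/
noncomputable def liftOfSurjective {S M N P : Type*} [CommRing S] [AddCommGroup M]
    [AddCommGroup N] [AddCommGroup P] [Module S M] [Module S N] [Module S P] (f : M →ₗ[S] N)
    (hf : Function.Surjective f) (g : M →ₗ[S] P) (hfg : f.ker ≤ g.ker) : N →ₗ[S] P :=
  (Submodule.liftQ _ g hfg).comp (f.quotKerEquivOfSurjective hf).symm.toLinearMap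

lemma liftOfSurjective_apply {S M N P : Type*} [CommRing S] [AddCommGroup M]
    [AddCommGroup N] [AddCommGroup P] [Module S M] [Module S N] [Module S P] {f : M →ₗ[S] N}
    (hf : Function.Surjective f) {g : M →ₗ[S] P} (hfg : f.ker ≤ g.ker) (x : M) :
    liftOfSurjective f hf g hfg (f x) = g x := by
  have hx : (f.quotKerEquivOfSurjective hf).symm (f x) = Submodule.Quotient.mk x :=
    (LinearEquiv.symm_apply_eq _).2 rfl
  simp [liftOfSurjective, hx]

variable {S : Type*} [CommRing S]

/-- `π` is nonzero and generates the kernel of the map `S → ZMod p` given by the algebra structure,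
which is onto. -/
class IsUniformizer (p : ℕ) [Algebra S (ZMod p)] (π : S) : Prop where
  ne_zero : π ≠ 0
  algebraMap_surjective : Function.Surjective (algebraMap S (ZMod p))
  algebraMap_eq_zero_iff {r : S} : algebraMap S (ZMod p) r = 0 ↔ π ∣ r

/-- The direct sum of the cyclic modules `S ⧸ π ^ (l j + 1)`. The shift makes all the summands
nontrivial. -/
abbrev CyclicSum {ι : Type*} (π : S) (l : ι → ℕ) : Type _ :=
  ∀ j, S ⧸ Ideal.span {π ^ (l j + 1)}

namespace CyclicSum

variable {ι : Type*}

/-- The class in `CyclicSum π l` of a vector over `S`. -/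
def ofVec (π : S) (l : ι → ℕ) : (ι → S) →ₗ[S] CyclicSum π l :=
  LinearMap.pi fun j => (Submodule.mkQ (Ideal.span {π ^ (l j + 1)})).comp (LinearMap.proj j)

variable {π : S} {l : ι → ℕ}

lemma ofVec_surjective : Function.Surjective (ofVec π l) := fun x =>
  ⟨fun j => (Ideal.Quotient.mk_surjective (x j)).choose,
    funext fun j => (Ideal.Quotient.mk_surjective (x j)).choose_spec⟩

lemma ofVec_eq_zero {r : ι → S} : ofVec π l r = 0 ↔ ∀ j, π ^ (l j + 1) ∣ r j :=
  funext_iff.trans (forall_congr' fun _ => by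
    rw [← Ideal.mem_span_singleton, ← Ideal.Quotient.eq_zero_iff_mem]; rfl)

lemma pow_smul_eq_zero {n : ℕ} (hl : ∀ j, l j < n) (x : CyclicSum π l) : π ^ n • x = 0 := by
  obtain ⟨r, rfl⟩ := ofVec_surjective x
  rw [← map_smul, ofVec_eq_zero]
  exact fun j => (pow_dvd_pow π (hl j)).mul_right _

end CyclicSum

open CyclicSum

variable {p : ℕ} [Algebra S (ZMod p)] {π : S} {ι : Type*} {l : ι → ℕ}

/-- The coordinatewise residue map. -/
def residue (S : Type*) [CommRing S] (p : ℕ) [Algebra S (ZMod p)] (ι : Type*) :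
    (ι → S) →ₗ[S] ι → ZMod p :=
  LinearMap.pi fun j => (Algebra.linearMap S (ZMod p)).comp (LinearMap.proj j)

lemma residue_apply (r : ι → S) (j : ι) : residue S p ι r j = algebraMap S (ZMod p) (r j) := rfl

namespace IsUniformizer

variable (hπ : IsUniformizer p π)
include hπ

lemma residue_surjective : Function.Surjective (residue S p ι) := fun w =>
  ⟨fun j => (hπ.algebraMap_surjective (w j)).choose,
    funext fun j => (hπ.algebraMap_surjective (w j)).choose_spec⟩

lemma residue_eq_zero {r : ι → S} : residue S p ι r = 0 ↔ ∃ t : ι → S, r = π • t := by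
  simp_rw [funext_iff, residue_apply, Pi.zero_apply, hπ.algebraMap_eq_zero_iff]
  exact Classical.skolem

lemma smul_eq_zero (w : ι → ZMod p) : π • w = 0 := by
  obtain ⟨r, rfl⟩ := hπ.residue_surjective w
  rw [← map_smul, hπ.residue_eq_zero]
  exact ⟨r, rfl⟩

variable (l) in
/-- The reduction of a direct sum `M` of cyclic modules modulo `π`: it identifies `M ⧸ π M` with a
vector space over the residue field. -/
noncomputable def reduction : CyclicSum π l →ₗ[S] ι → ZMod p :=
  liftOfSurjective (ofVec π l) ofVec_surjective (residue S p ι) fun _ hr =>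
    funext fun j =>
    hπ.algebraMap_eq_zero_iff.2 ((dvd_pow_self π (l j).succ_ne_zero).trans (ofVec_eq_zero.1 hr j))

lemma reduction_ofVec (r : ι → S) : hπ.reduction l (ofVec π l r) = residue S p ι r :=
  liftOfSurjective_apply _ _ r

variable (l) in
/-- The inclusion of the `π`-torsion of a direct sum of cyclic modules, which is identified with a
vector space over the residue field. -/
noncomputable def socle : (ι → ZMod p) →ₗ[S] CyclicSum π l :=
  liftOfSurjective (residue S p ι) hπ.residue_surjective
    ((ofVec π l).comp (LinearMap.pi fun j => π ^ l j • LinearMap.proj j)) fun r hr => by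
      obtain ⟨t, rfl⟩ := hπ.residue_eq_zero.1 hr
      refine ofVec_eq_zero.2 fun j => ⟨t j, ?_⟩
      simp [pow_succ, mul_left_comm, mul_assoc]

lemma socle_residue (r : ι → S) :
    hπ.socle l (residue S p ι r) = ofVec π l fun j => π ^ l j * r j :=
  liftOfSurjective_apply _ _ r

lemma reduction_surjective : Function.Surjective (hπ.reduction l) := fun w => by
  obtain ⟨r, rfl⟩ := hπ.residue_surjective w
  exact ⟨ofVec π l r, hπ.reduction_ofVec r⟩

lemma reduction_eq_zero {x : CyclicSum π l} : hπ.reduction l x = 0 ↔ ∃ y, x = π • y := by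
  constructor
  · obtain ⟨r, rfl⟩ := ofVec_surjective x
    rw [hπ.reduction_ofVec, hπ.residue_eq_zero]
    rintro ⟨t, rfl⟩
    exact ⟨ofVec π l t, map_smul _ _ _⟩
  · rintro ⟨y, rfl⟩
    rw [map_smul, hπ.smul_eq_zero]

lemma socle_injective [IsDomain S] : Function.Injective (hπ.socle l) := by
  rw [← LinearMap.ker_eq_bot, LinearMap.ker_eq_bot']
  intro w hw
  obtain ⟨r, rfl⟩ := hπ.residue_surjective w
  rw [hπ.socle_residue, ofVec_eq_zero] at hw
  exact funext fun j => hπ.algebraMap_eq_zero_iff.2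
    ((mul_dvd_mul_iff_left (pow_ne_zero (l j) hπ.ne_zero)).1 (pow_succ π (l j) ▸ hw j))

lemma exists_socle_eq [IsDomain S] {x : CyclicSum π l} (hx : π • x = 0) :
    ∃ w, hπ.socle l w = x := by
  obtain ⟨r, rfl⟩ := ofVec_surjective x
  rw [← map_smul, ofVec_eq_zero] at hx
  have hdvd (j : ι) : π ^ l j ∣ r j :=
    (mul_dvd_mul_iff_left hπ.ne_zero).1 (pow_succ' π (l j) ▸ hx j)
  choose t ht using hdvd
  exact ⟨residue S p ι t, by rw [hπ.socle_residue, ← funext ht]⟩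

end IsUniformizer

/-- The coordinate projection onto the summands with exponent `1`: on residue vectors, the
composition of the inclusion of the `π`-torsion with the reduction modulo `π`. -/
def simpleProj (p : ℕ) (l : ι → ℕ) : (ι → ZMod p) →ₗ[ZMod p] ι → ZMod p :=
  LinearMap.pi fun j => if l j = 0 then LinearMap.proj j else 0

lemma IsUniformizer.reduction_socle (hπ : IsUniformizer p π) (w : ι → ZMod p) :
    hπ.reduction l (hπ.socle l w) = simpleProj p l w := by
  obtain ⟨r, rfl⟩ := hπ.residue_surjective w
  rw [hπ.socle_residue, hπ.reduction_ofVec]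
  funext j
  by_cases hj : l j = 0
  · simp [simpleProj, residue_apply, hj]
  · simp [simpleProj, residue_apply, hj, hπ.algebraMap_eq_zero_iff.2 dvd_rfl]

end CyclicSum

section LinearMap

open CyclicSum Matrix

/-- The relation between the residues `a` and `b` of two scalars `r` and `s` with
`π ^ m * r = π ^ m' * s`. -/
def IsCompatible {p : ℕ} (m m' : ℕ) (a b : ZMod p) : Prop :=
  (m < m' → a = 0) ∧ (m' < m → b = 0) ∧ (m = m' → a = b)

variable {S : Type*} [CommRing S] {p : ℕ} [Algebra S (ZMod p)] {π : S}

namespace IsUniformizer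

variable [IsDomain S] (hπ : IsUniformizer p π)
include hπ

lemma algebraMap_eq_zero_of_pow_mul_eq {m m' : ℕ} (hm : m < m') {r s : S}
    (h : π ^ m * r = π ^ m' * s) : algebraMap S (ZMod p) r = 0 := by
  obtain ⟨d, rfl⟩ := Nat.exists_eq_add_of_lt hm
  rw [add_assoc, pow_add, mul_assoc] at h
  rw [mul_left_cancel₀ (pow_ne_zero m hπ.ne_zero) h, hπ.algebraMap_eq_zero_iff]
  exact (dvd_pow_self π d.succ_ne_zero).mul_right s

lemma exists_pow_mul_eq_of_lt {m m' : ℕ} (hm : m < m') (b : ZMod p) :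
    ∃ r s : S, π ^ m * r = π ^ m' * s ∧ algebraMap S (ZMod p) r = 0 ∧
      algebraMap S (ZMod p) s = b := by
  obtain ⟨s, rfl⟩ := hπ.algebraMap_surjective b
  have hr : π ^ m * (π ^ (m' - m) * s) = π ^ m' * s := by
    rw [← mul_assoc, ← pow_add, Nat.add_sub_cancel' hm.le]
  exact ⟨_, s, hr, hπ.algebraMap_eq_zero_of_pow_mul_eq hm hr, rfl⟩

lemma isCompatible_iff {m m' : ℕ} {a b : ZMod p} :
    IsCompatible m m' a b ↔
      ∃ r s : S, π ^ m * r = π ^ m' * s ∧ algebraMap S _ r = a ∧ algebraMap S _ s = b := by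
  constructor
  · rintro ⟨hlt, hgt, heq⟩
    rcases lt_trichotomy m m' with h | rfl | h
    · rw [hlt h]
      exact hπ.exists_pow_mul_eq_of_lt h b
    · obtain ⟨r, rfl⟩ := hπ.algebraMap_surjective a
      exact ⟨r, r, rfl, rfl, heq rfl⟩
    · obtain ⟨s, r, hrs, hs, hr⟩ := hπ.exists_pow_mul_eq_of_lt h a
      exact ⟨r, s, hrs.symm, hr, hs.trans (hgt h).symm⟩
  · rintro ⟨r, s, hrs, rfl, rfl⟩
    refine ⟨fun h => hπ.algebraMap_eq_zero_of_pow_mul_eq h hrs,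
      fun h => hπ.algebraMap_eq_zero_of_pow_mul_eq h hrs.symm, ?_⟩
    rintro rfl
    rw [mul_left_cancel₀ (pow_ne_zero m hπ.ne_zero) hrs]

end IsUniformizer

variable {ι κ : Type*} [Fintype ι] {l : ι → ℕ} {l' : κ → ℕ}

lemma residue_mulVec (r : Matrix κ ι S) (t : ι → S) :
    residue S p κ (r *ᵥ t) = r.map (algebraMap S (ZMod p)) *ᵥ residue S p ι t :=
  funext (RingHom.map_mulVec (algebraMap S (ZMod p)) r t)

lemma reduction_mulVec (hπ : IsUniformizer p π) {h : CyclicSum π l →ₗ[S] CyclicSum π l'}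
    {r : Matrix κ ι S} (hr : ∀ t, h (ofVec π l t) = ofVec π l' (r *ᵥ t)) (x : CyclicSum π l) :
    hπ.reduction l' (h x) = r.map (algebraMap S (ZMod p)) *ᵥ hπ.reduction l x := by
  obtain ⟨t, rfl⟩ := ofVec_surjective x
  rw [hr, hπ.reduction_ofVec, hπ.reduction_ofVec, residue_mulVec]

lemma socle_mulVec (hπ : IsUniformizer p π) {h : CyclicSum π l →ₗ[S] CyclicSum π l'}
    {r s : Matrix κ ι S} (hr : ∀ t, h (ofVec π l t) = ofVec π l' (r *ᵥ t))
    (hrs : ∀ i j, π ^ l j * r i j = π ^ l' i * s i j) (w : ι → ZMod p) :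
    h (hπ.socle l w) = hπ.socle l' (s.map (algebraMap S (ZMod p)) *ᵥ w) := by
  obtain ⟨t, rfl⟩ := hπ.residue_surjective w
  rw [← residue_mulVec, hπ.socle_residue, hπ.socle_residue, hr]
  congr 1
  funext i
  simp_rw [mulVec, dotProduct, mul_sum, mul_left_comm _ (π ^ _), ← mul_assoc, hrs]

lemma exists_matrix_of_linearMap [IsDomain S] (hπ : π ≠ 0)
    (h : CyclicSum π l →ₗ[S] CyclicSum π l') :
    ∃ r s : Matrix κ ι S, (∀ t, h (ofVec π l t) = ofVec π l' (r *ᵥ t)) ∧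
      ∀ i j, π ^ l j * r i j = π ^ l' i * s i j := by
  classical
  choose c hc using fun j => ofVec_surjective (h (ofVec π l (Pi.single j 1)))
  have hdvd (i : κ) (j : ι) : π ^ l' i ∣ π ^ l j * c j i := by
    have hzero : ofVec π l (π ^ (l j + 1) • Pi.single j 1) = 0 :=
      ofVec_eq_zero.2 fun i => by
        rcases eq_or_ne i j with rfl | hij <;> simp [*]
    have hdvd := congrArg h hzero
    rw [map_smul, map_smul, ← hc, map_zero, ← map_smul, ofVec_eq_zero] at hdvd
    refine (mul_dvd_mul_iff_left hπ).1 ?_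
    simpa [pow_succ', mul_assoc] using hdvd i
  choose s hs using hdvd
  have hcomp : h.comp (ofVec π l) = (ofVec π l').comp (Matrix.of c)ᵀ.mulVecLin :=
    LinearMap.pi_ext' fun j => LinearMap.ext_ring <| by
      simpa using (hc j).symm
  exact ⟨(Matrix.of c)ᵀ, .of s, LinearMap.congr_fun hcomp, hs⟩

lemma exists_linearMap_of_matrix {r s : Matrix κ ι S}
    (hrs : ∀ i j, π ^ l j * r i j = π ^ l' i * s i j) :
    ∃ h : CyclicSum π l →ₗ[S] CyclicSum π l', ∀ t, h (ofVec π l t) = ofVec π l' (r *ᵥ t) := by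
  have hker : (ofVec π l).ker ≤ ((ofVec π l').comp r.mulVecLin).ker := fun t ht => by
    choose u hu using ofVec_eq_zero.1 ht
    refine ofVec_eq_zero.2 fun i => dvd_sum fun j _ => ⟨s i j * u j, ?_⟩
    linear_combination r i j * hu j + π * u j * hrs i j
  exact ⟨liftOfSurjective _ ofVec_surjective _ hker, liftOfSurjective_apply _ hker⟩

theorem exists_isCompatible [IsDomain S] (hπ : IsUniformizer p π)
    (h : CyclicSum π l →ₗ[S] CyclicSum π l') :
    ∃ A B : Matrix κ ι (ZMod p), (∀ i j, IsCompatible (l j) (l' i) (A i j) (B i j)) ∧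
      (∀ x, hπ.reduction l' (h x) = A *ᵥ hπ.reduction l x) ∧
      ∀ w, h (hπ.socle l w) = hπ.socle l' (B *ᵥ w) := by
  obtain ⟨r, s, hr, hrs⟩ := exists_matrix_of_linearMap hπ.ne_zero h
  exact ⟨r.map (algebraMap S (ZMod p)), s.map (algebraMap S (ZMod p)),
    fun i j => hπ.isCompatible_iff.2 ⟨_, _, hrs i j, rfl, rfl⟩,
    reduction_mulVec hπ hr, socle_mulVec hπ hr hrs⟩

theorem exists_linearMap_of_isCompatible [IsDomain S] (hπ : IsUniformizer p π)
    {A B : Matrix κ ι (ZMod p)} (hAB : ∀ i j, IsCompatible (l j) (l' i) (A i j) (B i j)) :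
    ∃ h : CyclicSum π l →ₗ[S] CyclicSum π l',
      (∀ x, hπ.reduction l' (h x) = A *ᵥ hπ.reduction l x) ∧
      ∀ w, h (hπ.socle l w) = hπ.socle l' (B *ᵥ w) := by
  choose r s hrs hr hs using fun i j => hπ.isCompatible_iff.1 (hAB i j)
  obtain rfl : (Matrix.of r).map (algebraMap S (ZMod p)) = A := Matrix.ext hr
  obtain rfl : (Matrix.of s).map (algebraMap S (ZMod p)) = B := Matrix.ext hs
  obtain ⟨h, hh⟩ := exists_linearMap_of_matrix (r := .of r) (s := .of s) hrs
  exact ⟨h, reduction_mulVec hπ hh, socle_mulVec hπ hh hrs⟩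

lemma surjective_of_reduction [Finite κ] (hπ : IsUniformizer p π)
    {h : CyclicSum π l →ₗ[S] CyclicSum π l'} {A : Matrix κ ι (ZMod p)}
    (hA : Function.Surjective A.mulVec)
    (hhA : ∀ x, hπ.reduction l' (h x) = A *ᵥ hπ.reduction l x) : Function.Surjective h := by
  have happrox (N : ℕ) (y : CyclicSum π l') : ∃ x z, y = h x + π ^ N • z := by
    induction N with
    | zero => exact ⟨0, y, by simp⟩
    | succ N ih =>
      obtain ⟨x, z, rfl⟩ := ih
      obtain ⟨a, ha⟩ := hA (hπ.reduction l' z)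
      obtain ⟨x', rfl⟩ := hπ.reduction_surjective (l := l) a
      obtain ⟨z', hz'⟩ := hπ.reduction_eq_zero.1
        (show hπ.reduction l' (z - h x') = 0 by rw [map_sub, hhA, ha, sub_self])
      refine ⟨x + π ^ N • x', z', ?_⟩
      rw [pow_succ, mul_smul, ← hz', map_add, map_smul, smul_sub]
      abel
  obtain ⟨n, hn⟩ := (Set.finite_range l').bddAbove
  intro y
  obtain ⟨x, z, hxz⟩ := happrox (n + 1) y
  rw [pow_smul_eq_zero (fun j => Nat.lt_succ_of_le (hn ⟨j, rfl⟩)), add_zero] at hxz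
  exact ⟨x, hxz.symm⟩

end LinearMap

/-! ### Lie algebras whose derived algebra is killed by a uniformizer -/

section LieDatum

open CyclicSum Matrix

lemma isNilpotent_iff_of_surjective {L L' : Type*} [LieRing L] [LieRing L'] {f : L →+ L'}
    (hf : Function.Surjective f) (hlie : ∀ x y : L, f ⁅x, y⁆ = ⁅f x, f y⁆)
    (hker : ∀ x y : L, f y = 0 → ⁅x, y⁆ = 0) : LieRing.IsNilpotent L ↔ LieRing.IsNilpotent L' := by
  let F : L →ₗ⁅ℤ⁆ L' := { f.toIntLinearMap with map_lie' := hlie _ _ }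
  have hF : Function.Surjective F := hf
  have hcenter : F.ker ≤ LieAlgebra.center ℤ L := fun y hy x => hker x y (F.mem_ker.1 hy)
  refine ⟨fun _ => hF.lieAlgebra_isNilpotent, fun _ => nilpotent_of_nilpotent_quotient hcenter ?_⟩
  have : LieRing.IsNilpotent F.range :=
    Function.Injective.lieAlgebra_isNilpotent (f := F.range.incl) Subtype.val_injective
  exact F.quotKerEquivRange.nilpotent_iff_equiv_nilpotent.2 this

/-- The Lie ring structure given by an alternating bilinear map satisfying the Leibniz identity. -/
abbrev lieRingOfBilinear {R V : Type*} [CommRing R] [AddCommGroup V] [Module R V]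
    (B : V →ₗ[R] V →ₗ[R] V) (hself : ∀ x, B x x = 0)
    (hleib : ∀ x y z, B x (B y z) = B (B x y) z + B y (B x z)) : LieRing V where
  bracket x y := B x y
  add_lie := B.map_add₂
  lie_add x := map_add (B x)
  lie_self := hself
  leibniz_lie := hleib

/-- The combinatorial data describing a Lie algebra `L` with `p ^ n` elements whose derived algebra
is killed by a uniformizer `π`: the exponents of `L` as a direct sum of cyclic modules, and its
bracket, which factors through a bilinear map from the reduction of `L` modulo `π` to the
`π`-torsion of `L`. Both are vector spaces with a basis indexed by the cyclic summands. -/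
structure LieDatum (p n : ℕ) : Type 1 where
  /-- The type of cyclic summands. -/
  ι : Type
  [fintype : Fintype ι]
  /-- The exponents of the cyclic summands, diminished by one. -/
  l : ι → ℕ
  sum_exponents : ∑ j, (l j + 1) = n
  /-- The bilinear map induced by the bracket. -/
  bracket : (ι → ZMod p) →ₗ[ZMod p] (ι → ZMod p) →ₗ[ZMod p] ι → ZMod p
  bracket_self (a : ι → ZMod p) : bracket a a = 0
  leibniz (a b c : ι → ZMod p) : bracket a (simpleProj p l (bracket b c)) =
    bracket (simpleProj p l (bracket a b)) c + bracket b (simpleProj p l (bracket a c))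

attribute [instance] LieDatum.fintype

namespace LieDatum

variable {p n : ℕ} (X Y : LieDatum p n)

/-- The reduction modulo `π` of the Lie algebra described by `X`. -/
def Reduction : Type := X.ι → ZMod p

instance : LieRing X.Reduction :=
  lieRingOfBilinear (V := X.ι → ZMod p) (X.bracket.compr₂ (simpleProj p X.l))
    (fun a => by simp [X.bracket_self]) (fun a b c => by simp [X.leibniz a b c])

variable {S : Type*} [CommRing S] [Algebra S (ZMod p)] (π : S)

/-- The bracket described by `X` on a direct sum of cyclic modules. -/
noncomputable def realizedBracket [hπ : IsUniformizer p π] :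
    CyclicSum π X.l →ₗ[S] CyclicSum π X.l →ₗ[S] CyclicSum π X.l :=
  LinearMap.mk₂ S
    (fun x y => hπ.socle X.l (X.bracket (hπ.reduction X.l x) (hπ.reduction X.l y)))
    (by simp) (by simp) (by simp) (by simp)

/-- The Lie algebra described by `X` over a ring with uniformizer `π`. -/
def Realization : Type _ := CyclicSum π X.l

variable [hπ : IsUniformizer p π]

noncomputable instance : LieRing (X.Realization π) :=
  lieRingOfBilinear (V := CyclicSum π X.l) (X.realizedBracket π)
    (fun a => by simp [realizedBracket, X.bracket_self])
    (fun a b c => by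
      simp [realizedBracket, hπ.reduction_socle,
        X.leibniz (hπ.reduction X.l a) (hπ.reduction X.l b) (hπ.reduction X.l c)])

noncomputable instance : LieAlgebra S (X.Realization π) where
  toModule := inferInstanceAs (Module S (CyclicSum π X.l))
  lie_smul r x := (X.realizedBracket π x).map_smul r

variable {X Y π}

lemma reduction_realization_lie (x y : X.Realization π) :
    hπ.reduction X.l (⁅x, y⁆ : X.Realization π) =
      simpleProj p X.l (X.bracket (hπ.reduction X.l x) (hπ.reduction X.l y)) :=
  hπ.reduction_socle _

lemma smul_realization_lie (x y : X.Realization π) : π • ⁅x, y⁆ = 0 := by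
  change π • hπ.socle X.l _ = 0
  rw [← map_smul, hπ.smul_eq_zero, map_zero]

lemma pow_smul_realization (x : X.Realization π) : π ^ n • x = 0 := by
  refine pow_smul_eq_zero (fun j => ?_) x
  exact (single_le_sum (f := fun j => X.l j + 1) (fun _ _ => Nat.zero_le _)
    (mem_univ j)).trans_eq X.sum_exponents

lemma isNilpotent_realization_iff :
    LieRing.IsNilpotent (X.Realization π) ↔ LieRing.IsNilpotent X.Reduction := by
  refine isNilpotent_iff_of_surjective (f := (hπ.reduction X.l).toAddMonoidHom)
    hπ.reduction_surjective reduction_realization_lie fun x y hy => ?_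
  obtain ⟨z, rfl⟩ : ∃ z : X.Realization π, y = π • z := hπ.reduction_eq_zero.1 hy
  rw [lie_smul, smul_realization_lie]

/-- The relation of describing isomorphic Lie algebras, expressed by the matrices which an
isomorphism induces on the reductions modulo `π` and on the `π`-torsion. -/
def Equivalent (X Y : LieDatum p n) : Prop :=
  ∃ A B : Matrix Y.ι X.ι (ZMod p), (∀ i j, IsCompatible (X.l j) (Y.l i) (A i j) (B i j)) ∧
    Function.Surjective A.mulVec ∧ ∀ a b, B *ᵥ X.bracket a b = Y.bracket (A *ᵥ a) (A *ᵥ b)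

lemma equivalent_of_lieEquiv [IsDomain S] (e : X.Realization π ≃ₗ⁅S⁆ Y.Realization π) :
    X.Equivalent Y := by
  classical
  obtain ⟨A, B, hAB, hA, hB⟩ := exists_isCompatible hπ (l := X.l) (l' := Y.l) e.toLinearMap
  refine ⟨A, B, hAB, fun w => ?_, fun a b => hπ.socle_injective (l := Y.l) ?_⟩
  · obtain ⟨y, rfl⟩ := hπ.reduction_surjective (l := Y.l) w
    exact ⟨_, (hA (e.symm y)).symm.trans (congrArg _ (e.apply_symm_apply y))⟩
  · obtain ⟨x, rfl⟩ := hπ.reduction_surjective (l := X.l) a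
    obtain ⟨y, rfl⟩ := hπ.reduction_surjective (l := X.l) b
    rw [← hB, ← hA, ← hA]
    exact e.map_lie x y

end LieDatum
end LieDatum

section Classification

open CyclicSum Matrix

variable {p n : ℕ} {S : Type*} [CommRing S] {π : S}

lemma exists_linearEquiv_pi_of_pow_smul_eq_zero [IsDomain S] [IsPrincipalIdealRing S]
    {M : Type*} [AddCommGroup M] [Module S M] [Module.Finite S M] (hπ : Irreducible π)
    (hM : ∀ x : M, π ^ n • x = 0) :
    ∃ (d : ℕ) (k : Fin d → ℕ), Nonempty (M ≃ₗ[S] ∀ i, S ⧸ Ideal.span {π ^ k i}) := by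
  obtain ⟨d, k, ⟨e⟩⟩ := Module.torsion_by_prime_power_decomposition hπ
    (M := M) fun x => ⟨⟨π ^ n, n, rfl⟩, hM x⟩
  exact ⟨d, k, ⟨e.trans (DirectSum.linearEquivFunOnFintype S (Fin d) _)⟩⟩

variable (π) in
lemma nonempty_linearEquiv_cyclicSum {ι : Type*} (k : ι → ℕ) :
    Nonempty ((∀ i, S ⧸ Ideal.span {π ^ k i}) ≃ₗ[S]
      CyclicSum π fun i : {i // k i ≠ 0} => k i - 1) := by
  classical
  let f : (∀ i, S ⧸ Ideal.span {π ^ k i}) →ₗ[S] ∀ i : {i // k i ≠ 0}, S ⧸ Ideal.span {π ^ k i} :=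
    LinearMap.pi fun i => LinearMap.proj i.1
  have hf : Function.Bijective f := by
    refine ⟨fun x y hxy => funext fun i => ?_, fun y => ?_⟩
    · by_cases hi : k i = 0
      · have : Subsingleton (S ⧸ Ideal.span {π ^ k i}) := by
          rw [Ideal.Quotient.subsingleton_iff, hi, pow_zero, Ideal.span_singleton_one]
        exact Subsingleton.elim _ _
      · exact congrFun hxy ⟨i, hi⟩
    · exact ⟨fun i => if hi : k i ≠ 0 then y ⟨i, hi⟩ else 0, funext fun i => dif_pos i.2⟩
  exact ⟨(LinearEquiv.ofBijective f hf).trans (.piCongrRight fun i =>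
    Submodule.quotEquivOfEq _ _ (by rw [Nat.sub_one_add_one i.2]))⟩

variable [Algebra S (ZMod p)] (hπ : IsUniformizer p π)
include hπ

namespace IsUniformizer

lemma ker_algebraMap : RingHom.ker (algebraMap S (ZMod p)) = Ideal.span {π} :=
  Ideal.ext fun _ => hπ.algebraMap_eq_zero_iff.trans Ideal.mem_span_singleton.symm

variable [hp : Fact p.Prime]

lemma isPrime_span : (Ideal.span {π}).IsPrime :=
  hπ.ker_algebraMap ▸ RingHom.ker_isPrime (algebraMap S (ZMod p))

variable [IsDomain S] [IsPrincipalIdealRing S]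

omit [IsPrincipalIdealRing S] in
lemma irreducible : Irreducible π :=
  ((Ideal.span_singleton_prime hπ.ne_zero).1 hπ.isPrime_span).irreducible

lemma card_quotient_span_pow (i : ℕ) : Nat.card (S ⧸ Ideal.span {π ^ i}) = p ^ i := by
  have := hπ.isPrime_span
  rw [← Ideal.span_singleton_pow, ← Submodule.cardQuot_apply,
    cardQuot_pow_of_prime (Ideal.span_singleton_eq_bot.not.2 hπ.ne_zero), Submodule.cardQuot_apply,
    ← hπ.ker_algebraMap,
    Nat.card_congr (RingHom.quotientKerEquivOfSurjective hπ.algebraMap_surjective).toEquiv,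
    Nat.card_zmod]

lemma card_cyclicSum {ι : Type*} [Fintype ι] (l : ι → ℕ) :
    Nat.card (CyclicSum π l) = p ^ ∑ j, (l j + 1) := by
  rw [Nat.card_pi, ← prod_pow_eq_pow_sum]
  exact prod_congr rfl fun j _ => hπ.card_quotient_span_pow _

lemma exists_linearEquiv_cyclicSum {M : Type*} [AddCommGroup M] [Module S M]
    (hcard : Nat.card M = p ^ n) (hM : ∀ x : M, π ^ n • x = 0) :
    ∃ (ι : Type) (_ : Fintype ι) (l : ι → ℕ), ∑ j, (l j + 1) = n ∧
      Nonempty (M ≃ₗ[S] CyclicSum π l) := by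
  have : Finite M := Nat.finite_of_card_ne_zero (hcard ▸ pow_ne_zero n hp.out.ne_zero)
  obtain ⟨d, k, ⟨e⟩⟩ := exists_linearEquiv_pi_of_pow_smul_eq_zero hπ.irreducible hM
  obtain ⟨e'⟩ := nonempty_linearEquiv_cyclicSum π k
  refine ⟨{i // k i ≠ 0}, inferInstance, fun i => k i - 1, ?_, ⟨e.trans e'⟩⟩
  exact Nat.pow_right_injective hp.out.two_le ((hπ.card_cyclicSum _).symm.trans
    ((Nat.card_congr (e.trans e').toEquiv).symm.trans hcard))

end IsUniformizer

lemma exists_bilinear_of_smul_eq_zero [IsDomain S] {ι : Type*} {l : ι → ℕ}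
    (B : CyclicSum π l →ₗ[S] CyclicSum π l →ₗ[S] CyclicSum π l) (hB : ∀ x y, π • B x y = 0) :
    ∃ c : (ι → ZMod p) →ₗ[ZMod p] (ι → ZMod p) →ₗ[ZMod p] ι → ZMod p,
      ∀ x y, B x y = hπ.socle l (c (hπ.reduction l x) (hπ.reduction l y)) := by
  choose t ht using hπ.reduction_surjective (l := l)
  choose c hc using fun a b => hπ.exists_socle_eq (hB (t a) (t b))
  have hadd_smul (x : CyclicSum π l) : ∃ z, x = t (hπ.reduction l x) + π • z := by
    obtain ⟨z, hz⟩ := hπ.reduction_eq_zero.1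
      (show hπ.reduction l (x - t (hπ.reduction l x)) = 0 by rw [map_sub, ht, sub_self])
    exact ⟨z, by rw [← hz, add_sub_cancel]⟩
  have hBc (x y : CyclicSum π l) :
      hπ.socle l (c (hπ.reduction l x) (hπ.reduction l y)) = B x y := by
    obtain ⟨z, hz⟩ := hadd_smul x
    obtain ⟨w, hw⟩ := hadd_smul y
    rw [hc]
    conv_rhs => rw [hz, hw]
    simp only [map_add, map_smul, LinearMap.add_apply, LinearMap.smul_apply, hB, add_zero]
  refine ⟨LinearMap.mk₂ (ZMod p) c (fun a b d => ?_) (fun r a b => ?_) (fun a b d => ?_)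
    (fun r a b => ?_), fun x y => (hBc x y).symm⟩ <;> apply hπ.socle_injective (l := l)
  · rw [← ht a, ← ht b, ← ht d, map_add, ← map_add, hBc, hBc, hBc, map_add, LinearMap.add_apply]
  · obtain ⟨s, rfl⟩ := hπ.algebraMap_surjective r
    rw [← ht a, ← ht b, algebraMap_smul, algebraMap_smul, map_smul, ← map_smul, hBc, hBc, map_smul,
      LinearMap.smul_apply]
  · rw [← ht a, ← ht b, ← ht d, map_add, ← map_add, hBc, hBc, hBc, map_add]
  · obtain ⟨s, rfl⟩ := hπ.algebraMap_surjective r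
    rw [← ht a, ← ht b, algebraMap_smul, algebraMap_smul, map_smul, ← map_smul, hBc, hBc, map_smul]

omit hπ

namespace LieDatum

variable [hπ : IsUniformizer p π] {X Y : LieDatum p n}

lemma nonempty_lieEquiv_of_equivalent [IsDomain S] [Finite (X.Realization π)]
    (hcard : Nat.card (X.Realization π) = Nat.card (Y.Realization π)) (h : X.Equivalent Y) :
    Nonempty (X.Realization π ≃ₗ⁅S⁆ Y.Realization π) := by
  obtain ⟨A, B, hAB, hsurj, hbracket⟩ := h
  obtain ⟨f, hfA, hfB⟩ := exists_linearMap_of_isCompatible hπ hAB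
  have hf (x y : CyclicSum π X.l) :
      f (hπ.socle X.l (X.bracket (hπ.reduction X.l x) (hπ.reduction X.l y))) =
        hπ.socle Y.l (Y.bracket (hπ.reduction Y.l (f x)) (hπ.reduction Y.l (f y))) := by
    rw [hfB, hfA, hfA, hbracket]
  let F : X.Realization π →ₗ⁅S⁆ Y.Realization π := { f with map_lie' := hf _ _ }
  have hF : Function.Surjective F := surjective_of_reduction hπ hsurj hfA
  exact ⟨.ofBijective F (hF.bijective_of_nat_card_le hcard.le)⟩

section PrincipalIdealRing

variable [Fact p.Prime] [IsDomain S] [IsPrincipalIdealRing S]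

variable (X π) in
lemma card_realization : Nat.card (X.Realization π) = p ^ n :=
  (hπ.card_cyclicSum X.l).trans (congrArg (p ^ ·) X.sum_exponents)

variable (X Y π) in
theorem nonempty_lieEquiv_iff_equivalent :
    Nonempty (X.Realization π ≃ₗ⁅S⁆ Y.Realization π) ↔ X.Equivalent Y := by
  have : Finite (X.Realization π) := Nat.finite_of_card_ne_zero
    (X.card_realization π ▸ pow_ne_zero n (Fact.out : p.Prime).ne_zero)
  exact ⟨fun ⟨e⟩ => equivalent_of_lieEquiv e,
    nonempty_lieEquiv_of_equivalent ((X.card_realization π).trans (Y.card_realization π).symm)⟩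

variable (π) in
theorem exists_lieEquiv {L : Type*} [LieRing L] [LieAlgebra S L] (hcard : Nat.card L = p ^ n)
    (hL : ∀ x : L, π ^ n • x = 0) (hlie : ∀ x y : L, π • ⁅x, y⁆ = 0) :
    ∃ X : LieDatum p n, Nonempty (X.Realization π ≃ₗ⁅S⁆ L) := by
  obtain ⟨ι, _, l, hl, ⟨e⟩⟩ := hπ.exists_linearEquiv_cyclicSum hcard hL
  let B : CyclicSum π l →ₗ[S] CyclicSum π l →ₗ[S] CyclicSum π l :=
    LinearMap.mk₂ S (fun x y => e ⁅e.symm x, e.symm y⁆)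
      (by simp) (by simp) (by simp) (by simp)
  obtain ⟨c, hc⟩ := exists_bilinear_of_smul_eq_zero hπ B fun x y => by simp [B, ← map_smul, hlie]
  have hred (x y : CyclicSum π l) :
      hπ.reduction l (B x y) = simpleProj p l (c (hπ.reduction l x) (hπ.reduction l y)) := by
    rw [hc, hπ.reduction_socle]
  let X : LieDatum p n :=
    { ι, l, sum_exponents := hl, bracket := c
      bracket_self a := by
        obtain ⟨x, rfl⟩ := hπ.reduction_surjective (l := l) a
        apply hπ.socle_injective (l := l)
        simp [← hc, B]
      leibniz a b d := by
        obtain ⟨x, rfl⟩ := hπ.reduction_surjective (l := l) a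
        obtain ⟨y, rfl⟩ := hπ.reduction_surjective (l := l) b
        obtain ⟨z, rfl⟩ := hπ.reduction_surjective (l := l) d
        apply hπ.socle_injective (l := l)
        rw [map_add, ← hred, ← hred, ← hred, ← hc, ← hc, ← hc]
        simp [B] }
  let E : L ≃ₗ⁅S⁆ X.Realization π :=
    { e with
      map_lie' {x y} := (by simp [B] : e ⁅x, y⁆ = B (e x) (e y)).trans (hc (e x) (e y)) }
  exact ⟨X, ⟨E.symm⟩⟩

end PrincipalIdealRing
end LieDatum
end Classification

/-! ### Isomorphism classes -/

section Correspondence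

lemma nonempty_lieEquiv_iff_of_surjective {S R L L' : Type*} [CommRing S] [CommRing R]
    [Algebra S R] [LieRing L] [LieRing L'] [LieAlgebra S L] [LieAlgebra S L'] [LieAlgebra R L]
    [LieAlgebra R L'] [IsScalarTower S R L] [IsScalarTower S R L']
    (h : Function.Surjective (algebraMap S R)) :
    Nonempty (L ≃ₗ⁅R⁆ L') ↔ Nonempty (L ≃ₗ⁅S⁆ L') := by
  constructor
  · rintro ⟨e⟩
    exact ⟨{ e.toLinearEquiv.restrictScalars S with map_lie' := e.map_lie _ _ }⟩
  · rintro ⟨e⟩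
    exact ⟨{ e.toLinearEquiv.extendScalarsOfSurjective h with map_lie' := e.map_lie _ _ }⟩

lemma natCast_smul_eq_zero_iff {R M : Type*} [Ring R] [AddCommGroup M] [Module R M] {m : ℕ}
    {x : M} : (m : R) • x = 0 ↔ m • x = 0 := by
  rw [Nat.cast_smul_eq_nsmul]

lemma nonempty_quot_equiv {α β : Type*} {r : α → α → Prop} {s : β → β → Prop}
    (hs : Equivalence s) (f : α → β) (hf : ∀ a b, s (f a) (f b) ↔ r a b)
    (hsurj : ∀ b, ∃ a, s (f a) b) : Nonempty (Quot r ≃ Quot s) := by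
  refine ⟨Equiv.ofBijective (Quot.map f fun a b => (hf a b).2) ⟨?_, ?_⟩⟩
  · rintro ⟨a⟩ ⟨b⟩ hab
    exact Quot.sound ((hf a b).1 (hs.eqvGen_iff.1 (Quot.eqvGen_exact hab)))
  · rintro ⟨b⟩
    obtain ⟨a, ha⟩ := hsurj b
    exact ⟨Quot.mk r a, Quot.sound ha⟩

lemma equivalence_groupIsoRel (p n : ℕ) : Equivalence (groupIsoRel p n) where
  refl q := let := q.1.2; ⟨MulEquiv.refl q.1.1⟩
  symm {q q'} := fun ⟨e⟩ => let := q.1.2; let := q'.1.2; ⟨e.symm⟩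
  trans {q q' q''} := fun ⟨e⟩ ⟨e'⟩ =>
    let := q.1.2; let := q'.1.2; let := q''.1.2; ⟨e.trans e'⟩

lemma equivalence_lieIsoRel (p n : ℕ) : Equivalence (lieIsoRel p n) where
  refl q := let := q.1.2.1; let := q.1.2.2; ⟨LieEquiv.refl⟩
  symm {q q'} := fun ⟨e⟩ =>
    let := q.1.2.1; let := q.1.2.2; let := q'.1.2.1; let := q'.1.2.2; ⟨e.symm⟩
  trans {q q' q''} := fun ⟨e⟩ ⟨e'⟩ =>
    let := q.1.2.1; let := q.1.2.2; let := q'.1.2.1; let := q'.1.2.2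
    let := q''.1.2.1; let := q''.1.2.2; ⟨e.trans e'⟩

variable {p n : ℕ} [hp : Fact p.Prime]

variable (p n) in
/-- The data describing nilpotent Lie algebras. -/
abbrev NilpotentLieDatum : Type 1 := {D : LieDatum p n // LieRing.IsNilpotent D.Reduction}

lemma NilpotentLieDatum.exists_lieEquiv {S : Type*} [CommRing S] [IsDomain S]
    [IsPrincipalIdealRing S] [Algebra S (ZMod p)] (π : S) [IsUniformizer p π] {L : Type*}
    [LieRing L] [LieRing.IsNilpotent L] [LieAlgebra S L] (hcard : Nat.card L = p ^ n)
    (hL : ∀ x : L, π ^ n • x = 0) (hlie : ∀ x y : L, π • ⁅x, y⁆ = 0) :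
    ∃ D : NilpotentLieDatum p n, Nonempty (D.1.Realization π ≃ₗ⁅S⁆ L) := by
  obtain ⟨D, ⟨e⟩⟩ := LieDatum.exists_lieEquiv π hcard hL hlie
  exact ⟨⟨D, LieDatum.isNilpotent_realization_iff.1
    (e.nilpotent_iff_equiv_nilpotent.2 inferInstance)⟩, ⟨e⟩⟩

instance isUniformizer_natCast : IsUniformizer p (p : ℤ) where
  ne_zero := mod_cast hp.out.ne_zero
  algebraMap_surjective := ZMod.intCast_surjective
  algebraMap_eq_zero_iff := ZMod.intCast_zmod_eq_zero_iff_dvd _ p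

/-- The residue field `ZMod p` as an algebra over the polynomials, on which `X` acts by zero. -/
noncomputable abbrev constantCoeffAlgebra (p : ℕ) : Algebra (ZMod p)[X] (ZMod p) :=
  constantCoeff.toAlgebra

attribute [local instance] constantCoeffAlgebra

instance isUniformizer_X : IsUniformizer p (X : (ZMod p)[X]) where
  ne_zero := X_ne_zero
  algebraMap_surjective := constantCoeff_surjective
  algebraMap_eq_zero_iff := X_dvd_iff.symm

/-- A Lie ring killed by `m` as a Lie algebra over `ZMod m`. -/
abbrev zmodLieAlgebra {L : Type*} [LieRing L] {m : ℕ} (h : ∀ x : L, m • x = 0) :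
    LieAlgebra (ZMod m) L where
  toModule := AddCommGroup.zmodModule h
  lie_smul c x :=
    let := AddCommGroup.zmodModule h
    ZMod.map_smul (ad ℤ L x) c

section Group

noncomputable instance (D : LieDatum p n) : LieAlgebra (ZMod (p ^ n)) (D.Realization (p : ℤ)) :=
  zmodLieAlgebra fun x => by
    have hx := LieDatum.pow_smul_realization x
    rw [← Nat.cast_pow] at hx
    exact natCast_smul_eq_zero_iff.1 hx

lemma NilpotentLieDatum.lowerCentralSeries_eq_bot (hnp : n ≤ p) (D : NilpotentLieDatum p n) :
    lowerCentralSeries (ZMod (p ^ n)) (D.1.Realization (p : ℤ)) (D.1.Realization (p : ℤ)) (p - 1) =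
      ⊥ := by
  have : LieRing.IsNilpotent (D.1.Realization (p : ℤ)) :=
    LieDatum.isNilpotent_realization_iff.2 D.2
  exact lowerCentralSeries_eq_bot_of_card hp.out hnp (D.1.card_realization (p : ℤ))

variable (hnp : n ≤ p)

/-- The group with underlying set the Lie algebra described by a datum and with the
Baker–Campbell–Hausdorff product. -/
abbrev NilpotentLieDatum.Group (D : NilpotentLieDatum p n) : Type :=
  BCHGroup (unitsBelow_zmod hp.out n) hp.out.two_le (D.lowerCentralSeries_eq_bot hnp)

lemma NilpotentLieDatum.commutatorElement_pow_eq_one (D : NilpotentLieDatum p n)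
    (g h : D.Group hnp) : ⁅g, h⁆ ^ p = 1 := by
  refine commutatorElement_pow_eq_one_iff.2 (fun a b => ?_) g h
  exact natCast_smul_eq_zero_iff.2 (natCast_smul_eq_zero_iff.1 (LieDatum.smul_realization_lie a b))

lemma NilpotentLieDatum.card_group (D : NilpotentLieDatum p n) : Nat.card (D.Group hnp) = p ^ n :=
  (Nat.card_congr BCHGroup.of).symm.trans (D.1.card_realization (p : ℤ))

lemma NilpotentLieDatum.nonempty_group_mulEquiv_iff (D D' : NilpotentLieDatum p n) :
    Nonempty (D.Group hnp ≃* D'.Group hnp) ↔ D.1.Equivalent D'.1 :=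
  (BCHGroup.nonempty_mulEquiv_iff (zmod_natCast_surjective hp.out n)).trans <|
    (nonempty_lieEquiv_iff_of_surjective (S := ℤ) ZMod.intCast_surjective).trans <|
      LieDatum.nonempty_lieEquiv_iff_equivalent _ _ _

/-- The bundled form of `NilpotentLieDatum.Group`. -/
noncomputable def groupOf (D : NilpotentLieDatum p n) : GoodGroup p n :=
  ⟨⟨D.Group hnp, inferInstance⟩,
    D.card_group hnp, D.commutatorElement_pow_eq_one hnp⟩

lemma exists_groupIsoRel_groupOf (q : GoodGroup p n) :
    ∃ D, groupIsoRel p n (groupOf hnp D) q := by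
  obtain ⟨⟨P, _⟩, hcard, hexp⟩ := q
  obtain ⟨L, _, _, hL, ⟨e⟩⟩ := isBCHGroup_of_card hp.out le_rfl hnp hcard
  have hcardL : Nat.card L = p ^ n :=
    (Nat.card_congr (BCHGroup.of.trans e.toEquiv)).trans hcard
  have hlie : ∀ a b : L, (p : ZMod (p ^ n)) • ⁅a, b⁆ = 0 :=
    commutatorElement_pow_eq_one_iff.1 fun g h => e.injective <| by
      rw [map_pow, map_commutatorElement, hexp, map_one]
  have : LieRing.IsNilpotent L := (LieModule.isNilpotent_iff (ZMod (p ^ n)) L L).2 ⟨_, hL⟩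
  obtain ⟨D, hD⟩ := NilpotentLieDatum.exists_lieEquiv (p : ℤ) hcardL
    (fun x => by rw [← Nat.cast_pow, Nat.cast_smul_eq_nsmul, ← hcardL, card_nsmul_eq_zero'])
    (fun a b => by rw [Nat.cast_smul_eq_nsmul, ← Nat.cast_smul_eq_nsmul (ZMod (p ^ n)), hlie])
  obtain ⟨e'⟩ := (BCHGroup.nonempty_mulEquiv_iff (zmod_natCast_surjective hp.out n)
    (hL := D.lowerCentralSeries_eq_bot hnp) (hL' := hL)).2
    ((nonempty_lieEquiv_iff_of_surjective ZMod.intCast_surjective).2 hD)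
  have e'' : D.Group hnp ≃* P := e'.trans e
  exact ⟨D, ⟨e''⟩⟩

end Group

section Lie

noncomputable instance (D : LieDatum p n) :
    LieAlgebra (Rn p n) (D.Realization (X : (ZMod p)[X])) where
  toModule := ((Module.isTorsionBySet_span_singleton_iff _).2
    fun x => LieDatum.pow_smul_realization x).module
  lie_smul r x y := by
    obtain ⟨r, rfl⟩ := Ideal.Quotient.mk_surjective r
    exact lie_smul r x y

instance (D : LieDatum p n) :
    IsScalarTower (ZMod p)[X] (Rn p n) (D.Realization (X : (ZMod p)[X])) :=
  Module.IsTorsionBySet.isScalarTower _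

/-- The Lie algebra over `Rn p n` described by a datum. -/
noncomputable def lieOf (D : NilpotentLieDatum p n) : GoodLie p n :=
  ⟨⟨D.1.Realization (X : (ZMod p)[X]), inferInstance, inferInstance⟩, D.1.card_realization _,
    LieDatum.isNilpotent_realization_iff.2 D.2, LieDatum.smul_realization_lie⟩

lemma LieDatum.nonempty_rn_lieEquiv_iff (D D' : LieDatum p n) :
    Nonempty (D.Realization (X : (ZMod p)[X]) ≃ₗ⁅Rn p n⁆ D'.Realization (X : (ZMod p)[X])) ↔
      D.Equivalent D' :=
  (nonempty_lieEquiv_iff_of_surjective (S := (ZMod p)[X]) Ideal.Quotient.mk_surjective).trans <|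
    LieDatum.nonempty_lieEquiv_iff_equivalent _ _ _

lemma NilpotentLieDatum.exists_rn_lieEquiv {L : Type*} [LieRing L] [LieRing.IsNilpotent L]
    [LieAlgebra (Rn p n) L] (hcard : Nat.card L = p ^ n)
    (hlie : ∀ a b : L, Tn p n • ⁅a, b⁆ = 0) :
    ∃ D : NilpotentLieDatum p n,
      Nonempty (D.1.Realization (X : (ZMod p)[X]) ≃ₗ⁅Rn p n⁆ L) := by
  let := Module.compHom L (algebraMap (ZMod p)[X] (Rn p n))
  let : LieAlgebra (ZMod p)[X] L :=
    { lie_smul r x y := lie_smul (algebraMap (ZMod p)[X] (Rn p n) r) x y }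
  have : IsScalarTower (ZMod p)[X] (Rn p n) L :=
    ⟨fun r s x => (congrArg (· • x) (Algebra.smul_def r s)).trans (mul_smul _ s x)⟩
  have hX : algebraMap (ZMod p)[X] (Rn p n) (X ^ n) = 0 :=
    Ideal.Quotient.eq_zero_iff_mem.2 (Ideal.mem_span_singleton_self _)
  obtain ⟨D, hD⟩ := NilpotentLieDatum.exists_lieEquiv (X : (ZMod p)[X]) hcard
    (fun x => (congrArg (· • x) hX).trans (zero_smul (Rn p n) x)) hlie
  exact ⟨D, (nonempty_lieEquiv_iff_of_surjective Ideal.Quotient.mk_surjective).2 hD⟩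

lemma exists_lieIsoRel_lieOf (q : GoodLie p n) : ∃ D, lieIsoRel p n (lieOf D) q := by
  obtain ⟨⟨L, _, _⟩, hcard, _, hlie⟩ := q
  exact NilpotentLieDatum.exists_rn_lieEquiv hcard hlie

end Lie

variable (p n) in
theorem nonempty_quot_groupIsoRel_equiv (hnp : n ≤ p) :
    Nonempty (Quot (fun D D' : NilpotentLieDatum p n => D.1.Equivalent D'.1) ≃
      Quot (groupIsoRel p n)) :=
  nonempty_quot_equiv (equivalence_groupIsoRel p n) (groupOf hnp)
    (NilpotentLieDatum.nonempty_group_mulEquiv_iff hnp)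
    (exists_groupIsoRel_groupOf hnp)

variable (p n) in
theorem nonempty_quot_lieIsoRel_equiv :
    Nonempty (Quot (fun D D' : NilpotentLieDatum p n => D.1.Equivalent D'.1) ≃
      Quot (lieIsoRel p n)) :=
  nonempty_quot_equiv (equivalence_lieIsoRel p n) lieOf
    (fun D D' => D.1.nonempty_rn_lieEquiv_iff D'.1) exists_lieIsoRel_lieOf

end Correspondence

end Lazard

/-- For `p ≥ n`, there is a one-to-one correspondence between isomorphism classes of groups of
order `p ^ n` whose derived subgroup has exponent dividing `p`, and isomorphism classes of
nilpotent `(ℤ/pℤ)[X]/(Xⁿ)`-Lie algebras with `p ^ n` elements satisfying `T • ⁅L, L⁆ = 0`. -/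
theorem main_correspondence (p n : ℕ) (hp : p.Prime) (hn : 1 ≤ n) (hpn : n ≤ p) :
    Nonempty (Quot (groupIsoRel p n) ≃ Quot (lieIsoRel p n)) := by
  have : Fact p.Prime := ⟨hp⟩
  obtain ⟨e⟩ := Lazard.nonempty_quot_groupIsoRel_equiv p n hpn
  obtain ⟨e'⟩ := Lazard.nonempty_quot_lieIsoRel_equiv p n
  exact ⟨e.symm.trans e'⟩
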